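/- Let d ≥ 1 and n ≥ 2 be integers, 0 < ν < 1, and let q(λ) = (1−λ)^{(n−1)d/2−1} (1 − (n−1)λ/n)^{−(n−2)d/2−ν} for λ ∈ (0,1). Let π_GM be the Gaussian-mixture prior built from q with shape parameter ν. Then for every μ ∈ ℝ^d and σ² > 0, provided the expectations exist, R_KL((μ,σ²), p̂_R) − R_KL((μ,σ²), p̂_{π_GM}) ≥ ν · E(1 − u_n) · [ g(n,d,ν) − h(n,d) ], where u_n = w_n/(1+w_n), w_n = n‖x̄_n‖²/s_n, and the expectation E(1 − u_n) is taken with respect to the density φ(x̄; μ, σ²/n)·[γ(s/σ²;(n−1)d)/σ²] of (x̄_n, s_n). -/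

import Mathlib

/-!
Write `T = s + n‖x̄‖²` and `T' = T + ‖y‖²`, so that `1 - u_n = s / T` and `1 - u_{n+1} = s_{n+1} / T'`.

**Pointwise bound.** After the substitution `λ = z / (1 + z)` in the prior, the parameters `μ` and `η`
integrate out explicitly. For sample size `n` the remaining integral over `z` is a Beta integral,
because of the special choice of `q`; hence `p̂_π / p̂_R` is an explicit multiple of one mixture
integral (`bayesPred_eq`). Bounding its weight by a power (`le_PhiW`) and using concavity and AM-GM
when `d ≤ n`, Jensen's inequality when `d > n` (`gFun_exp_le`), gives
`log (p̂_π / p̂_R) ≥ ν {log ((n+1)/n) - log (T'/T) + g (1 - u_{n+1})}` (`log_ratio_ge`).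

**Expectations.** Since `1/r = ∫ exp(-t r) dt` and `log (T'/T) = ∫ (exp(-t T) - exp(-t T')) / t dt`
(Frullani), the expectations on the right reduce to Laplace transforms of noncentral chi-square
variables. The substitution `w = 2σ²t / (1 + 2σ²t)` turns them into integrals over `(0, 1)` of the
kernel `F_l(w) = (1 - w)^(ld/2 - 1) exp(-l κ w)`, `κ = ‖μ‖²/(2σ²)`. In particular
`E (1 - u_l) = Qint l (d/2) κ` for `l = n, n + 1`.

**Two kernel inequalities.** First, `E (1 - u_n) ≤ E (1 - u_{n+1})` (`Qint_mono`): integrate by parts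
and apply `power_comparison`. Secondly, `E log (T'/T) ≤ log ((n+1)/n) + h E (1 - u_n)`
(`kernel_lintegral`): rescaling `w` by `n/(n+1)` in the kernel for `n + 1` produces the term
`log ((n+1)/n)`, and the rest is compared pointwise using `h ≥ 1/n` (`kernel_comparison`). Only for
`n = 2`, `d = 1` does the pointwise comparison fail; there the exact value of `h` and the tail created
by the rescaling are used (`kernel_integral_two_one`).

As `g ≥ 0`, taking expectations in the pointwise bound gives the theorem.
-/

open MeasureTheory Set

noncomputable section

abbrev Euc (d : ℕ) := EuclideanSpace ℝ (Fin d)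

/-- Isotropic `d`-variate Gaussian density with mean `θ` and covariance `τ I_d`. -/
def gaussPdf (d : ℕ) (z θ : Euc d) (τ : ℝ) : ℝ :=
  (2 * Real.pi * τ) ^ (-(d : ℝ) / 2) * Real.exp (-‖z - θ‖ ^ 2 / (2 * τ))

/-- Chi-square density with `k` degrees of freedom. -/
def chiSqPdf (k t : ℝ) : ℝ :=
  t ^ (k / 2 - 1) * Real.exp (-t / 2) / ((2 : ℝ) ^ (k / 2) * Real.Gamma (k / 2))

/-- Numerator of the Bayesian predictive density. -/
def bayesPredNum (d n : ℕ) (pr : Euc d → ℝ → ℝ) (y xbar : Euc d) (s : ℝ) : ℝ :=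
  ∫ η in Ioi (0 : ℝ), ∫ μ, gaussPdf d y μ η⁻¹ * gaussPdf d xbar μ (((n : ℝ) * η)⁻¹) * η *
    chiSqPdf (((n : ℝ) - 1) * d) (η * s) * pr μ η

/-- Denominator of the Bayesian predictive density. -/
def bayesPredDen (d n : ℕ) (pr : Euc d → ℝ → ℝ) (xbar : Euc d) (s : ℝ) : ℝ :=
  ∫ η in Ioi (0 : ℝ), ∫ μ, gaussPdf d xbar μ (((n : ℝ) * η)⁻¹) * η *
    chiSqPdf (((n : ℝ) - 1) * d) (η * s) * pr μ η

/-- Bayesian predictive density with respect to the prior `pr`. -/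
def bayesPred (d n : ℕ) (pr : Euc d → ℝ → ℝ) (y xbar : Euc d) (s : ℝ) : ℝ :=
  bayesPredNum d n pr y xbar s / bayesPredDen d n pr xbar s

/-- Best equivariant predictive density. -/
def bestEquiv (d n : ℕ) (y xbar : Euc d) (s : ℝ) : ℝ :=
  (Real.Gamma ((n : ℝ) * d / 2) / Real.Gamma (((n : ℝ) - 1) * d / 2)) *
    ((n : ℝ) / (((n : ℝ) + 1) * Real.pi * s)) ^ ((d : ℝ) / 2) *
    (1 + ((n : ℝ) / (((n : ℝ) + 1) * s)) * ‖y - xbar‖ ^ 2) ^ (-((n : ℝ) * d) / 2)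

/-- Marginal density `m_π(z, v; l)`. -/
def marginalDens (d : ℕ) (pr : Euc d → ℝ → ℝ) (l : ℕ) (z : Euc d) (v : ℝ) : ℝ :=
  ∫ η in Ioi (0 : ℝ), ∫ μ, gaussPdf d z μ (((l : ℝ) * η)⁻¹) * η *
    chiSqPdf (((l : ℝ) - 1) * d) (η * v) * pr μ η

/-- `ρ_π(z, v; l) = v · m_π(z, v; l)`. -/
def rhoDens (d : ℕ) (pr : Euc d → ℝ → ℝ) (l : ℕ) (z : Euc d) (v : ℝ) : ℝ :=
  v * marginalDens d pr l z v

/-- Kullback–Leibler risk of a predictive density `p`. -/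
def klRisk (d n : ℕ) (μ0 : Euc d) (σ2 : ℝ) (p : Euc d → Euc d → ℝ → ℝ) : ℝ :=
  ∫ s in Ioi (0 : ℝ), ∫ xbar, gaussPdf d xbar μ0 (σ2 / n) *
    (chiSqPdf (((n : ℝ) - 1) * d) (s / σ2) / σ2) *
    ∫ y, gaussPdf d y μ0 σ2 * Real.log (gaussPdf d y μ0 σ2 / p y xbar s)

/-- Gaussian-mixture prior `π_GM` built from `q` with shape parameter `ν` (`a = ν - d/2 - 1`). -/
def gmPrior (d : ℕ) (ν : ℝ) (q : ℝ → ℝ) (μ : Euc d) (η : ℝ) : ℝ :=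
  ∫ l in Ioo (0 : ℝ) 1, gaussPdf d μ 0 (η⁻¹ * l⁻¹ * (1 - l)) *
    η ^ (ν - (d : ℝ) / 2 - 1) * l ^ (ν - (d : ℝ) / 2 - 1) * q l

/-- The Beta function. -/
def betaFun (a b : ℝ) : ℝ := Real.Gamma a * Real.Gamma b / Real.Gamma (a + b)

/-- Digamma function. -/
def digamma (x : ℝ) : ℝ := deriv (fun y => Real.log (Real.Gamma y)) x

/-- The function `g(n, d, ν)`. -/
def gFun (n d : ℕ) (ν : ℝ) : ℝ :=
  if d ≤ n then
    (1 / ν) * Real.log (betaFun ν ((n : ℝ) * d / 2 - ((d : ℝ) - ν) / n) / betaFun ν ((n : ℝ) * d / 2))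
  else
    (1 / ((n : ℝ) * ν)) * (((d : ℝ) - ν) / ((n : ℝ) * d / 2 - 1)) * Real.log (1 + ν)

/-- The function `h(n, d)`. -/
def hFun (n d : ℕ) : ℝ :=
  ((1 + ((n : ℝ) + 1) * d / 2) / ((n : ℝ) * d / 2)) *
    (digamma (1 + ((n : ℝ) + 1) * d / 2) - digamma (1 + (n : ℝ) * d / 2))

/-- The particular function `q` of equation (5) of the paper. -/
def qLow (d n : ℕ) (ν : ℝ) (l : ℝ) : ℝ :=
  (1 - l) ^ (((n : ℝ) - 1) * d / 2 - 1) *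
    (1 - ((n : ℝ) - 1) * l / n) ^ (-(((n : ℝ) - 2) * d / 2) - ν)

/-- The quantity `J_l`. -/
def Jquant (d : ℕ) (ν : ℝ) (q : ℝ → ℝ) (l w : ℝ) : ℝ :=
  ∫ t in Ioo (0 : ℝ) 1, t ^ (ν - 1) * (1 + (l - 1) * t) ^ ((d : ℝ) / 2 - ν - 1) *
    (1 + w * t) ^ (-((l - 1) * (d : ℝ) / 2) - ν) * q (l * t / (1 + (l - 1) * t))

/-- The statistic `x̄_{n+1} = (n x̄_n + y)/(n+1)`. -/
def newMean {d : ℕ} (n : ℕ) (xbar y : Euc d) : Euc d :=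
  (((n : ℝ) + 1)⁻¹) • ((n : ℝ) • xbar + y)

/-- The statistic `s_{n+1} = s_n + n ‖y - x̄_n‖² / (n+1)`. -/
def newS {d : ℕ} (n : ℕ) (xbar y : Euc d) (s : ℝ) : ℝ :=
  s + (n : ℝ) * ‖y - xbar‖ ^ 2 / ((n : ℝ) + 1)

/-- `w_l = l ‖x̄_l‖² / s_l`. -/
def wStat {d : ℕ} (l : ℝ) (z : Euc d) (v : ℝ) : ℝ := l * ‖z‖ ^ 2 / v

/-- `u_l = w_l / (1 + w_l)`. -/
def uStat {d : ℕ} (l : ℝ) (z : Euc d) (v : ℝ) : ℝ :=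
  wStat l z v / (1 + wStat l z v)

/-- Expectation with respect to the joint density of `(x̄_n, s_n, y)`. -/
def expVal (d n : ℕ) (μ0 : Euc d) (σ2 : ℝ) (f : Euc d → ℝ → Euc d → ℝ) : ℝ :=
  ∫ s in Ioi (0 : ℝ), ∫ xbar, ∫ y,
    gaussPdf d xbar μ0 (σ2 / n) * (chiSqPdf (((n : ℝ) - 1) * d) (s / σ2) / σ2) *
      gaussPdf d y μ0 σ2 * f xbar s y

/-- Expectation with respect to the joint density of `(x̄_n, s_n)`. -/
def expVal2 (d n : ℕ) (μ0 : Euc d) (σ2 : ℝ) (f : Euc d → ℝ → ℝ) : ℝ :=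
  ∫ s in Ioi (0 : ℝ), ∫ xbar, gaussPdf d xbar μ0 (σ2 / n) *
    (chiSqPdf (((n : ℝ) - 1) * d) (s / σ2) / σ2) * f xbar s

/-! ### The digamma function and bounds for `h` -/

lemma differentiableAt_logGamma {x : ℝ} (hx : 0 < x) :
    DifferentiableAt ℝ (fun y => Real.log (Real.Gamma y)) x :=
  (Real.differentiableAt_Gamma fun m =>
    ((neg_nonpos.mpr m.cast_nonneg).trans_lt hx).ne').log (Real.Gamma_pos_of_pos hx).ne'

lemma digamma_add_one {x : ℝ} (hx : 0 < x) : digamma (x + 1) = digamma x + 1 / x := by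
  unfold digamma
  have h1 : deriv (fun y => Real.log (Real.Gamma (y + 1))) x
      = deriv (fun y => Real.log (Real.Gamma y)) (x + 1) :=
    deriv_comp_add_const (f := fun y => Real.log (Real.Gamma y)) 1 x
  rw [← h1]
  have h2 : (fun y => Real.log (Real.Gamma (y + 1))) =ᶠ[nhds x]
      fun y => Real.log (Real.Gamma y) + Real.log y := by
    filter_upwards [lt_mem_nhds hx] with y hy
    rw [Real.Gamma_add_one hy.ne', Real.log_mul hy.ne' (Real.Gamma_pos_of_pos hy).ne', add_comm]
  rw [h2.deriv_eq, deriv_fun_add (differentiableAt_logGamma hx)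
    (Real.differentiableAt_log hx.ne'), Real.deriv_log, one_div]

lemma digamma_mono {x y : ℝ} (hx : 0 < x) (hxy : x ≤ y) : digamma x ≤ digamma y := by
  have h := Real.convexOn_log_Gamma.monotoneOn_deriv
    (fun z hz => differentiableAt_logGamma hz)
  exact h (mem_Ioi.2 hx) (mem_Ioi.2 (hx.trans_le hxy)) hxy

/-- The bound `ψ(y + c) - ψ(y) ≥ c / (y + c)`: iterate `ψ(x + 1) = ψ(x) + 1 / x` and compare
with a telescoping sum; monotonicity of `ψ` disposes of the remainder. -/
lemma digamma_sub_ge {y c : ℝ} (hy : 0 < y) (hc : 0 < c) :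
    c / (y + c) ≤ digamma (y + c) - digamma y := by
  have key : ∀ k : ℕ, c / (y + c) - c / (y + c + k) ≤ digamma (y + c) - digamma y := by
    have key' : ∀ k : ℕ, c / (y + c) - c / (y + c + k)
        ≤ (digamma (y + c) - digamma y) - (digamma (y + c + k) - digamma (y + k)) := by
      intro k
      induction k with
      | zero => simp
      | succ k ih =>
        have e1 := digamma_add_one (x := y + c + k) (by positivity)
        have e2 := digamma_add_one (x := y + k) (by positivity)
        have e3 : c / (y + c + k) - c / (y + c + k + 1) ≤ 1 / (y + k) - 1 / (y + c + k) := by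
          have a1 : 0 < y + k := by positivity
          have a2 : 0 < y + c + k := by positivity
          rw [div_sub_div _ _ (by positivity) (by positivity),
            div_sub_div _ _ (by positivity) (by positivity),
            div_le_div_iff₀ (by positivity) (by positivity)]
          have : (0:ℝ) ≤ k := by positivity
          nlinarith [mul_pos hc a2, mul_pos (mul_pos hc a2) hc]
        push_cast
        rw [← add_assoc, ← add_assoc, e1, e2]
        linarith
    intro k
    have := digamma_mono (x := y + k) (y := y + c + k) (by positivity) (by linarith)
    linarith [key' k]
  have lim : Filter.Tendsto (fun k : ℕ => c / (y + c) - c / (y + c + k)) Filter.atTop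
      (nhds (c / (y + c) - 0)) := by
    refine tendsto_const_nhds.sub (Filter.Tendsto.const_div_atTop ?_ _)
    exact Filter.tendsto_atTop_add_const_left _ _ tendsto_natCast_atTop_atTop
  rw [sub_zero] at lim
  exact le_of_tendsto' lim key

/-- The only property of `h` needed outside the case `n = 2`, `d = 1`. -/
lemma hFun_ge {n d : ℕ} (hd : 1 ≤ d) (hn : 2 ≤ n) : 1 / (n : ℝ) ≤ hFun n d := by
  have hd' : (1 : ℝ) ≤ d := by exact_mod_cast hd
  have hn' : (2 : ℝ) ≤ n := by exact_mod_cast hn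
  have h := digamma_sub_ge (y := 1 + (n : ℝ) * d / 2) (c := (d : ℝ) / 2) (by positivity)
    (by positivity)
  have e : 1 + (n : ℝ) * d / 2 + (d : ℝ) / 2 = 1 + ((n : ℝ) + 1) * d / 2 := by ring
  rw [e] at h
  unfold hFun
  calc 1 / (n : ℝ) = ((1 + ((n : ℝ) + 1) * d / 2) / ((n : ℝ) * d / 2)) *
        ((d : ℝ) / 2 / (1 + ((n : ℝ) + 1) * d / 2)) := by field_simp
    _ ≤ _ := by gcongr

/-- For `n = 2`, `d = 1` the bound `hFun_ge` is too weak, so the exact value is needed. -/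
lemma hFun_two_one : hFun 2 1 = 5 / 2 * (5 / 3 - 2 * Real.log 2) := by
  have a1 : digamma 1 = -Real.eulerMascheroniConstant := by
    have := Real.hasDerivAt_Gamma_one
    unfold digamma
    rw [(this.log (by simp)).deriv]; simp
  have a2 : digamma (1 / 2) = -Real.eulerMascheroniConstant - 2 * Real.log 2 := by
    have := Real.hasDerivAt_Gamma_one_half
    have hp : √Real.pi ≠ 0 := (Real.sqrt_pos.2 Real.pi_pos).ne'
    unfold digamma
    rw [(this.log (by rw [Real.Gamma_one_half_eq]; exact hp)).deriv, Real.Gamma_one_half_eq]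
    field_simp; ring
  have b1 := digamma_add_one (x := 1) (by norm_num)
  have b2 := digamma_add_one (x := 1 / 2) (by norm_num)
  have b3 := digamma_add_one (x := 1 / 2 + 1) (by norm_num)
  unfold hFun
  have e1 : (1 + (((2 : ℕ) : ℝ) + 1) * ((1 : ℕ) : ℝ) / 2) = 1 / 2 + 1 + 1 := by norm_num
  have e2 : (1 + ((2 : ℕ) : ℝ) * ((1 : ℕ) : ℝ) / 2) = 1 + 1 := by norm_num
  rw [e1, e2, b3, b2, b1, a1, a2]
  norm_num
  ring

/-! ### A power comparison -/

/-- Truncated negative-binomial series: `1 + m z + ⋯` up to order three is at most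
`(1 - z)⁻ᵐ`. -/
lemma negBinomial_le (m : ℕ) {z : ℝ} (h0 : 0 ≤ z) (h1 : z ≤ 1) :
    (1 - z) ^ m * (1 + m * z + m * (m + 1) / 2 * z ^ 2 + m * (m + 1) * (m + 2) / 6 * z ^ 3) ≤ 1 := by
  induction m with
  | zero => simp
  | succ m ih =>
    refine le_trans ?_ ih
    rw [pow_succ, mul_assoc]
    refine mul_le_mul_of_nonneg_left ?_ (pow_nonneg (by linarith) _)
    push_cast
    have : (0:ℝ) ≤ (m + 1) * (m + 2) * (m + 3) / 6 * z ^ 4 := by positivity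
    nlinarith [this]

lemma sq_mul_pow_le_one {n : ℕ} (hn : 2 ≤ n) {z : ℝ} (h0 : 0 ≤ z) (h1 : z ≤ 1) :
    (n : ℝ) ^ 2 * z ^ 2 * (1 - z) ^ (n - 1) ≤ 1 := by
  obtain ⟨m, rfl⟩ : ∃ m, n = m + 1 := ⟨n - 1, by omega⟩
  have hm : 1 ≤ m := by omega
  refine le_trans ?_ (negBinomial_le m h0 h1)
  rw [mul_comm, Nat.add_sub_cancel]
  refine mul_le_mul_of_nonneg_left ?_ (pow_nonneg (by linarith) _)
  push_cast
  rcases Nat.lt_or_ge m 3 with h | h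
  · interval_cases m
    · norm_num; nlinarith [mul_nonneg (sub_nonneg.2 h1) h0, mul_nonneg (mul_nonneg (sub_nonneg.2 h1) h0) h0]
    · norm_num; nlinarith [mul_nonneg (sub_nonneg.2 h1) h0, mul_nonneg h0 (sq_nonneg (z - 1))]
  · have h3 : (3 : ℝ) ≤ m := by exact_mod_cast h
    have e1 : 0 ≤ z * m * (((m : ℝ) + 2) * z / 3 - 1) ^ 2 := by positivity
    have e2 : 0 ≤ (m : ℝ) * (m + 2) * (m - 1) / 18 * z ^ 3 :=
      mul_nonneg (div_nonneg (mul_nonneg (by positivity) (by linarith)) (by norm_num))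
        (by positivity)
    have e3 : 0 ≤ ((m : ℝ) + 2) * (m - 3) / 6 * z ^ 2 :=
      mul_nonneg (div_nonneg (mul_nonneg (by positivity) (by linarith)) (by norm_num))
        (by positivity)
    nlinarith [e1, e2, e3]

lemma mul_rpow_le_one {n : ℕ} (hn : 2 ≤ n) {z : ℝ} (h0 : 0 ≤ z) (h1 : z ≤ 1) :
    (n : ℝ) * z * (1 - z) ^ (((n : ℝ) - 1) / 2) ≤ 1 := by
  have hz : 0 ≤ 1 - z := by linarith
  have e : (1 - z) ^ (((n : ℝ) - 1) / 2) = √((1 - z) ^ (n - 1)) := by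
    rw [Real.sqrt_eq_rpow, ← Real.rpow_natCast, ← Real.rpow_mul hz, Nat.cast_sub (by omega)]
    congr 1; push_cast; ring
  have hp : 0 ≤ (1 - z) ^ (n - 1) := pow_nonneg hz _
  rw [e, ← abs_of_nonneg (show 0 ≤ (n : ℝ) * z * √((1 - z) ^ (n - 1)) by positivity),
    ← sq_le_one_iff_abs_le_one, mul_pow, Real.sq_sqrt hp, mul_pow]
  exact sq_mul_pow_le_one hn h0 h1

/-- One-dimensional case of `power_comparison`; an interior minimum of the difference of the two
sides is nonnegative because of `mul_rpow_le_one`. -/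
lemma power_comparison_one {n : ℕ} (hn : 2 ≤ n) {w : ℝ} (h0 : 0 ≤ w) (h1 : w ≤ 1) :
    (n : ℝ) ^ 2 * (1 - (n : ℝ) / (n + 1) * w) ^ (((n : ℝ) + 1) / 2)
      ≤ 1 + ((n : ℝ) ^ 2 - 1) * (1 - w) ^ ((n : ℝ) / 2) := by
  have hn' : (2 : ℝ) ≤ n := by exact_mod_cast hn
  set θ : ℝ := (n : ℝ) / (n + 1) with hθ
  have hθ0 : 0 < θ := by positivity
  have hθ1 : θ < 1 := by rw [hθ, div_lt_one (by positivity)]; linarith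
  set G : ℝ → ℝ := fun w => 1 + ((n : ℝ) ^ 2 - 1) * (1 - w) ^ ((n : ℝ) / 2)
    - (n : ℝ) ^ 2 * (1 - θ * w) ^ (((n : ℝ) + 1) / 2) with hG
  suffices h : 0 ≤ G w by simp only [hG] at h; linarith
  have hcont : ContinuousOn G (Icc 0 1) := by
    refine ContinuousOn.sub (continuousOn_const.add (continuousOn_const.mul ?_))
      (continuousOn_const.mul ?_)
    · exact ContinuousOn.rpow_const (by fun_prop) (fun x _ => Or.inr (by positivity))
    · exact ContinuousOn.rpow_const (by fun_prop) (fun x _ => Or.inr (by positivity))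
  obtain ⟨x, hx, hmin⟩ := isCompact_Icc.exists_isMinOn (nonempty_Icc.2 zero_le_one) hcont
  refine le_trans ?_ (hmin ⟨h0, h1⟩)
  rcases eq_or_lt_of_le hx.1 with h | hx0
  · simp only [hG, ← h]; simp
  rcases eq_or_lt_of_le hx.2 with h | hx1
  · simp only [hG, h, sub_self, mul_one]
    rw [Real.zero_rpow (by positivity)]
    have e1 : 1 - θ = 1 / (n + 1) := by rw [hθ]; field_simp; ring
    rw [e1]
    -- at `w = 1` the claim is `n² ≤ (n + 1) ^ ((n + 1) / 2)`
    have e2 : (1 / ((n : ℝ) + 1)) ^ (((n : ℝ) + 1) / 2) ≤ 1 / (n : ℝ) ^ 2 := by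
      rcases Nat.lt_or_ge n 3 with h3 | h3
      · obtain rfl : n = 2 := by omega
        have : (1 / (((2 : ℕ) : ℝ) + 1)) ^ ((((2 : ℕ) : ℝ) + 1) / 2) = √((1 / 3) ^ 3) := by
          rw [Real.sqrt_eq_rpow, ← Real.rpow_natCast, ← Real.rpow_mul (by norm_num)]
          norm_num
        rw [this, Real.sqrt_le_left (by norm_num)]
        norm_num
      · have h3' : (3 : ℝ) ≤ n := by exact_mod_cast h3
        calc (1 / ((n : ℝ) + 1)) ^ (((n : ℝ) + 1) / 2) ≤ (1 / ((n : ℝ) + 1)) ^ (2 : ℝ) := by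
              apply Real.rpow_le_rpow_of_exponent_ge (by positivity)
              · rw [div_le_one (by positivity)]; linarith
              · linarith
          _ = (1 / ((n : ℝ) + 1)) ^ 2 := by norm_cast
          _ ≤ 1 / (n : ℝ) ^ 2 := by
              rw [one_div_pow]; gcongr; linarith
    have : (n : ℝ) ^ 2 * (1 / ((n : ℝ) + 1)) ^ (((n : ℝ) + 1) / 2) ≤ 1 := by
      calc _ ≤ (n : ℝ) ^ 2 * (1 / (n : ℝ) ^ 2) := by gcongr
        _ = 1 := by field_simp
    linarith
  have hxθ : 0 < 1 - θ * x := by nlinarith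
  have hder : HasDerivAt G (((n : ℝ) ^ 2 - 1) * (-1 * ((n : ℝ) / 2) * (1 - x) ^ ((n : ℝ) / 2 - 1))
      - (n : ℝ) ^ 2 * ((-θ) * (((n : ℝ) + 1) / 2) * (1 - θ * x) ^ (((n : ℝ) + 1) / 2 - 1))) x := by
    have d1 : HasDerivAt (fun w : ℝ => 1 - w) (-1) x := by
      simpa using (hasDerivAt_id x).const_sub 1
    have d2 : HasDerivAt (fun w : ℝ => 1 - θ * w) (-θ) x := by
      simpa using ((hasDerivAt_id x).const_mul θ).const_sub 1
    have d1' := (d1.rpow_const (p := (n : ℝ) / 2) (Or.inl (by linarith))).const_mul ((n : ℝ) ^ 2 - 1)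
    have d2' := (d2.rpow_const (p := ((n : ℝ) + 1) / 2) (Or.inl hxθ.ne')).const_mul ((n : ℝ) ^ 2)
    exact ((d1'.const_add 1).sub d2')
  have hloc : IsLocalMin G x := hmin.isLocalMin (Icc_mem_nhds hx0 hx1)
  have hz := hloc.hasDerivAt_eq_zero hder
  have p1 : (1 - x) ^ ((n : ℝ) / 2) = (1 - x) ^ ((n : ℝ) / 2 - 1) * (1 - x) := by
    rw [Real.rpow_sub_one (by linarith)]; field_simp [show (1 - x) ≠ 0 by linarith]
  have p2 : (1 - θ * x) ^ (((n : ℝ) + 1) / 2) = (1 - θ * x) ^ (((n : ℝ) + 1) / 2 - 1) * (1 - θ * x) := by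
    rw [Real.rpow_sub_one hxθ.ne']; field_simp
  have p3 : ((n : ℝ) + 1) / 2 - 1 = ((n : ℝ) - 1) / 2 := by ring
  have key := mul_rpow_le_one hn (z := θ * x) (by positivity) (by linarith)
  simp only [hG]
  rw [p1, p2, p3]
  rw [p3] at hz
  have eθ : θ * ((n : ℝ) + 1) = n := by rw [hθ]; field_simp
  set A := (1 - x) ^ ((n : ℝ) / 2 - 1)
  set B := (1 - θ * x) ^ (((n : ℝ) - 1) / 2)
  have hz' : ((n : ℝ) ^ 2 - 1) * A = (n : ℝ) ^ 2 * B := by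
    have : (n : ℝ) / 2 * (((n : ℝ) ^ 2 - 1) * A) = (n : ℝ) / 2 * ((n : ℝ) ^ 2 * B) := by
      linear_combination (-1) * hz + ((n:ℝ)^2 * B / 2) * eθ
    exact mul_left_cancel₀ (by positivity) this
  have e5 : (n : ℝ) * (1 - θ) = θ := by rw [hθ]; field_simp; ring
  have : 1 + ((n : ℝ) ^ 2 - 1) * (A * (1 - x)) - (n : ℝ) ^ 2 * (B * (1 - θ * x))
      = 1 - (n : ℝ) * (θ * x) * B := by
    linear_combination (1 - x) * hz' - (n : ℝ) * B * x * e5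
  rw [this]; linarith

/-- The inequality that makes `E(1 - u_l)` increasing in `l`. Convexity of `x ↦ x ^ d` reduces it to
`d = 1`. -/
lemma power_comparison {n d : ℕ} (hn : 2 ≤ n) (hd : 1 ≤ d) {w : ℝ} (h0 : 0 ≤ w) (h1 : w ≤ 1) :
    (n : ℝ) ^ 2 * (1 - (n : ℝ) / (n + 1) * w) ^ (((n : ℝ) + 1) * (d / 2))
      ≤ 1 + ((n : ℝ) ^ 2 - 1) * (1 - w) ^ ((n : ℝ) * (d / 2)) := by
  have hn' : (2 : ℝ) ≤ n := by exact_mod_cast hn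
  have hθ1 : (n : ℝ) / (n + 1) < 1 := by rw [div_lt_one (by positivity)]; linarith
  have hb : 0 ≤ 1 - (n : ℝ) / (n + 1) * w := by
    have : (n : ℝ) / (n + 1) * w ≤ 1 * 1 := by gcongr
    linarith
  have key := power_comparison_one hn h0 h1
  have e1 : (1 - (n : ℝ) / (n + 1) * w) ^ (((n : ℝ) + 1) * (d / 2))
      = ((1 - (n : ℝ) / (n + 1) * w) ^ (((n : ℝ) + 1) / 2)) ^ d := by
    rw [← Real.rpow_natCast, ← Real.rpow_mul hb]; congr 1; ring
  have e2 : (1 - w) ^ ((n : ℝ) * (d / 2)) = ((1 - w) ^ ((n : ℝ) / 2)) ^ d := by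
    rw [← Real.rpow_natCast, ← Real.rpow_mul (by linarith)]; congr 1; ring
  rw [e1, e2]
  set X := (1 - (n : ℝ) / (n + 1) * w) ^ (((n : ℝ) + 1) / 2)
  set Y := (1 - w) ^ ((n : ℝ) / 2)
  have hX : 0 ≤ X := Real.rpow_nonneg hb _
  have hY : 0 ≤ Y := Real.rpow_nonneg (by linarith) _
  have hn2 : (1 : ℝ) ≤ (n : ℝ) ^ 2 := by nlinarith
  have conv : (1 / (n : ℝ) ^ 2 + (1 - 1 / (n : ℝ) ^ 2) * Y) ^ d
      ≤ 1 / (n : ℝ) ^ 2 + (1 - 1 / (n : ℝ) ^ 2) * Y ^ d := by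
    have h1 : 1 / (n : ℝ) ^ 2 ≤ 1 := by rw [div_le_one (by positivity)]; exact hn2
    simpa only [smul_eq_mul, one_pow, mul_one] using
      (convexOn_pow (𝕜 := ℝ) d).2 (mem_Ici.2 zero_le_one) (mem_Ici.2 hY)
        (show 0 ≤ 1 / (n : ℝ) ^ 2 by positivity) (sub_nonneg.2 h1) (by ring)
  have hXle : X ≤ 1 / (n : ℝ) ^ 2 + (1 - 1 / (n : ℝ) ^ 2) * Y := by
    have : (n : ℝ) ^ 2 * X ≤ (n : ℝ) ^ 2 * (1 / (n : ℝ) ^ 2 + (1 - 1 / (n : ℝ) ^ 2) * Y) := by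
      refine key.trans (le_of_eq ?_); field_simp
    exact le_of_mul_le_mul_left this (by positivity)
  calc (n : ℝ) ^ 2 * X ^ d ≤ (n : ℝ) ^ 2 * (1 / (n : ℝ) ^ 2 + (1 - 1 / (n : ℝ) ^ 2) * Y ^ d) := by
        gcongr; exact (pow_le_pow_left₀ hX hXle d).trans conv
    _ = _ := by field_simp

lemma power_comparison_tail {n d : ℕ} (hn : 2 ≤ n) (hd : 1 ≤ d) {w : ℝ} (h0 : 1 ≤ w)
    (h1 : w ≤ ((n : ℝ) + 1) / n) :
    (n : ℝ) ^ 2 * (1 - (n : ℝ) / (n + 1) * w) ^ (((n : ℝ) + 1) * (d / 2)) ≤ 1 := by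
  have hn' : (2 : ℝ) ≤ n := by exact_mod_cast hn
  have hd' : (1 : ℝ) ≤ d := by exact_mod_cast hd
  have h := power_comparison hn hd (w := 1) zero_le_one le_rfl
  rw [sub_self, Real.zero_rpow (by positivity), mul_zero, add_zero] at h
  refine le_trans ?_ h
  have : (n : ℝ) / (n + 1) * w ≤ 1 := by
    calc (n : ℝ) / (n + 1) * w ≤ (n : ℝ) / (n + 1) * (((n : ℝ) + 1) / n) := by gcongr
      _ = 1 := by field_simp
  gcongr

/-! ### The kernel and monotonicity in the sample size -/

/-- The kernel `(1 - w)^(l c - 1) exp(-l κ w)` on `(0, 1)`, where `c = d/2` and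
`κ = ‖μ‖²/(2σ²)`: the Laplace transform of `s + l ‖x̄‖²` at `t = w / (2σ²(1 - w))`, divided by
`1 - w`. -/
def kerF (l c κ w : ℝ) : ℝ := (1 - w) ^ (l * c - 1) * Real.exp (-(l * κ * w))

lemma kerF_nonneg (l c κ : ℝ) {w : ℝ} (hw : w ≤ 1) : 0 ≤ kerF l c κ w :=
  mul_nonneg (Real.rpow_nonneg (by linarith) _) (Real.exp_nonneg _)

lemma continuous_kerF {l c : ℝ} (κ : ℝ) (h : 1 ≤ l * c) : Continuous (kerF l c κ) := by
  unfold kerF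
  exact (Continuous.rpow_const (by fun_prop) (fun _ => Or.inr (by linarith))).mul (by fun_prop)

lemma kerF_le_one {l c κ w : ℝ} (hl : 0 ≤ l) (hκ : 0 ≤ κ) (h : 1 ≤ l * c) (hw0 : 0 ≤ w)
    (hw : w ≤ 1) : kerF l c κ w ≤ 1 := by
  unfold kerF
  refine mul_le_one₀ (Real.rpow_le_one (by linarith) (by linarith) (by linarith))
    (Real.exp_nonneg _) ?_
  rw [Real.exp_le_one_iff]
  have : 0 ≤ l * κ * w := by positivity
  linarith

/-- The expectation of `1 - u_l`, in integrated form. -/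
def Qint (l c κ : ℝ) : ℝ := (l - 1) * c * ∫ w in (0 : ℝ)..1, kerF l c κ w

lemma hasDerivAt_exp_neg_mul (k x : ℝ) :
    HasDerivAt (fun w : ℝ => Real.exp (-(k * w))) (-(k * Real.exp (-(k * x)))) x := by
  have : HasDerivAt (fun w : ℝ => -(k * w)) (-(k * 1)) x :=
    ((hasDerivAt_id x).const_mul k).fun_neg
  exact this.exp.congr_deriv (by ring)

/-- Integration by parts turns `Qint` into an integral of `(1 - w) ^ (l c)`, to which
`power_comparison` applies. -/
lemma integral_kerF_by_parts {l c : ℝ} (κ : ℝ) (h : 1 ≤ l * c) :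
    l * c * ∫ w in (0 : ℝ)..1, kerF l c κ w
      = 1 - l * κ * ∫ w in (0 : ℝ)..1, (1 - w) ^ (l * c) * Real.exp (-(l * κ * w)) := by
  have hd : ∀ x : ℝ, HasDerivAt (fun w : ℝ => -((1 - w) ^ (l * c) * Real.exp (-(l * κ * w))))
      (l * c * kerF l c κ x + l * κ * ((1 - x) ^ (l * c) * Real.exp (-(l * κ * x)))) x := by
    intro x
    have d1 : HasDerivAt (fun w : ℝ => 1 - w) (-1) x := by
      simpa using (hasDerivAt_id x).const_sub 1
    have d2 := hasDerivAt_exp_neg_mul (l * κ) x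
    refine ((d1.rpow_const (p := l * c) (Or.inr h)).fun_mul d2).fun_neg.congr_deriv ?_
    unfold kerF; ring
  have c1 := continuous_kerF κ h
  have c2 : Continuous (fun x : ℝ => (1 - x) ^ (l * c) * Real.exp (-(l * κ * x))) :=
    (Continuous.rpow_const (by fun_prop) (fun _ => Or.inr (by linarith))).mul (by fun_prop)
  have := intervalIntegral.integral_eq_sub_of_hasDerivAt (a := 0) (b := 1) (fun x _ => hd x)
    ((c1.const_mul _).add (c2.const_mul _) |>.intervalIntegrable _ _)
  rw [intervalIntegral.integral_add ((c1.const_mul _).intervalIntegrable _ _)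
    ((c2.const_mul _).intervalIntegrable _ _), intervalIntegral.integral_const_mul,
    intervalIntegral.integral_const_mul] at this
  have h0 : (0 : ℝ) ^ (l * c) = 0 := Real.zero_rpow (by linarith)
  simp only [sub_self, h0, zero_mul, neg_zero, sub_zero, Real.one_rpow, mul_zero, Real.exp_zero] at this
  linarith

/-- Monotonicity in the sample size of the expectation of `1 - u_l`. -/
lemma Qint_mono {n d : ℕ} (hn : 2 ≤ n) (hd : 1 ≤ d) {κ : ℝ} (hκ : 0 ≤ κ) :
    Qint n (d / 2) κ ≤ Qint ((n : ℝ) + 1) (d / 2) κ := by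
  have hn' : (2 : ℝ) ≤ n := by exact_mod_cast hn
  have hd' : (1 : ℝ) ≤ d := by exact_mod_cast hd
  have hnc : 1 ≤ (n : ℝ) * (d / 2) := by nlinarith
  have hnc' : 1 ≤ ((n : ℝ) + 1) * (d / 2) := by nlinarith
  set θ : ℝ := (n : ℝ) / (n + 1) with hθ
  have hθ0 : 0 < θ := by positivity
  have e1 := integral_kerF_by_parts κ hnc
  have e2 := integral_kerF_by_parts κ hnc'
  set I₁ := ∫ w in (0 : ℝ)..1, (1 - w) ^ ((n : ℝ) * (d / 2)) * Real.exp (-(n * κ * w))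
  set I₂ := ∫ w in (0 : ℝ)..1, (1 - w) ^ (((n : ℝ) + 1) * (d / 2)) *
    Real.exp (-(((n : ℝ) + 1) * κ * w)) with hI₂
  set f : ℝ → ℝ := fun w => (1 - θ * w) ^ (((n : ℝ) + 1) * (d / 2)) * Real.exp (-(n * κ * w)) with hf
  have cf : Continuous f :=
    (Continuous.rpow_const (by fun_prop) (fun _ => Or.inr (by linarith))).mul (by fun_prop)
  have cg : Continuous (fun w : ℝ => (1 - w) ^ ((n : ℝ) * (d / 2)) * Real.exp (-(n * κ * w))) :=
    (Continuous.rpow_const (by fun_prop) (fun _ => Or.inr (by linarith))).mul (by fun_prop)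
  have ce : Continuous (fun w : ℝ => Real.exp (-(n * κ * w))) := by fun_prop
  have hsc : I₂ = θ * ∫ w in (0 : ℝ)..(θ⁻¹), f w := by
    have := intervalIntegral.mul_integral_comp_mul_left (a := 0) (b := θ⁻¹) (c := θ)
      (f := fun w => (1 - w) ^ (((n : ℝ) + 1) * (d / 2)) * Real.exp (-(((n : ℝ) + 1) * κ * w)))
    rw [mul_zero, mul_inv_cancel₀ hθ0.ne'] at this
    rw [hI₂, ← this]
    congr 1
    apply intervalIntegral.integral_congr
    intro w _
    simp only [hf]
    congr 3
    rw [hθ]; field_simp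
  have hone : (1 : ℝ) ≤ θ⁻¹ := by
    rw [hθ, inv_div, le_div_iff₀ (by positivity)]; linarith
  have hsplit : ∫ w in (0 : ℝ)..(θ⁻¹), f w = (∫ w in (0 : ℝ)..1, f w) + ∫ w in (1 : ℝ)..(θ⁻¹), f w :=
    (intervalIntegral.integral_add_adjacent_intervals (cf.intervalIntegrable _ _)
      (cf.intervalIntegrable _ _)).symm
  have b1 : (n : ℝ) ^ 2 * ∫ w in (0 : ℝ)..1, f w
      ≤ (∫ w in (0 : ℝ)..1, Real.exp (-(n * κ * w))) + ((n : ℝ) ^ 2 - 1) * I₁ := by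
    rw [← intervalIntegral.integral_const_mul, ← intervalIntegral.integral_const_mul,
      ← intervalIntegral.integral_add (ce.intervalIntegrable _ _)
        ((cg.const_mul _).intervalIntegrable _ _)]
    apply intervalIntegral.integral_mono_on zero_le_one ((cf.const_mul _).intervalIntegrable _ _)
      ((ce.add (cg.const_mul _)).intervalIntegrable _ _)
    intro w hw
    have := mul_le_mul_of_nonneg_right (power_comparison hn hd hw.1 hw.2)
      (Real.exp_nonneg (-(n * κ * w)))
    simp only [hf, Pi.add_apply]
    linarith
  have b2 : (n : ℝ) ^ 2 * ∫ w in (1 : ℝ)..(θ⁻¹), f w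
      ≤ ∫ w in (1 : ℝ)..(θ⁻¹), Real.exp (-(n * κ * w)) := by
    rw [← intervalIntegral.integral_const_mul]
    apply intervalIntegral.integral_mono_on hone ((cf.const_mul _).intervalIntegrable _ _)
      (ce.intervalIntegrable _ _)
    intro w hw
    have hw2 := hw.2
    rw [hθ, inv_div] at hw2
    have := mul_le_mul_of_nonneg_right (power_comparison_tail hn hd hw.1 hw2)
      (Real.exp_nonneg (-(n * κ * w)))
    simp only [hf, Pi.add_apply]
    linarith
  have b3 : (n : ℝ) * κ * ((∫ w in (0 : ℝ)..1, Real.exp (-(n * κ * w)))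
      + ∫ w in (1 : ℝ)..(θ⁻¹), Real.exp (-(n * κ * w))) ≤ 1 := by
    rw [intervalIntegral.integral_add_adjacent_intervals (ce.intervalIntegrable _ _)
      (ce.intervalIntegrable _ _), ← intervalIntegral.integral_const_mul]
    have hd : ∀ x : ℝ, HasDerivAt (fun w : ℝ => -Real.exp (-(n * κ * w)))
      (n * κ * Real.exp (-(n * κ * x))) x := by
      intro x
      exact (hasDerivAt_exp_neg_mul (n * κ) x).fun_neg.congr_deriv (by ring)
    rw [intervalIntegral.integral_eq_sub_of_hasDerivAt (fun x _ => hd x)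
      ((ce.const_mul _).intervalIntegrable _ _)]
    simp [Real.exp_nonneg]
  have hnκ : 0 ≤ (n : ℝ) * κ := by positivity
  have key : (n : ℝ) ^ 2 * (((n : ℝ) + 1) * κ * I₂) ≤ 1 + ((n : ℝ) ^ 2 - 1) * (n * κ * I₁) := by
    have : ((n : ℝ) + 1) * κ * I₂ = n * κ * ∫ w in (0 : ℝ)..(θ⁻¹), f w := by
      rw [hsc, hθ]; field_simp
    rw [this, hsplit]
    have := mul_le_mul_of_nonneg_left (add_le_add b1 b2) hnκ
    linarith
  unfold Qint
  set J₁ := ∫ w in (0 : ℝ)..1, kerF n (d / 2) κ w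
  set J₂ := ∫ w in (0 : ℝ)..1, kerF ((n : ℝ) + 1) (d / 2) κ w
  have r1 : (n : ℝ) * (n + 1) * (((n : ℝ) - 1) * (d / 2) * J₁) = ((n : ℝ) ^ 2 - 1) * (1 - n * κ * I₁) := by
    rw [← e1]; ring
  have r2 : (n : ℝ) * (n + 1) * (((n : ℝ) + 1 - 1) * (d / 2) * J₂)
      = (n : ℝ) ^ 2 * (1 - ((n : ℝ) + 1) * κ * I₂) := by
    rw [← e2]; ring
  have hpos : 0 < (n : ℝ) * (n + 1) := by positivity
  refine le_of_mul_le_mul_left ?_ hpos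
  rw [r1, r2]
  linarith

/-! ### Pointwise comparison of kernels -/

/-- Numerical upper bounds for `exp` at the rational point `x = m / k`, from `e < 2.7182818286`. -/
lemma exp_le_of_pow {x B : ℝ} {k m : ℕ} (hk : k ≠ 0) (hB : 0 ≤ B) (hx : k * x = m)
    (h : (2.7182818286 : ℝ) ^ m ≤ B ^ k) : Real.exp x ≤ B := by
  have h1 : Real.exp x ^ k ≤ B ^ k := by
    rw [← Real.exp_nat_mul, hx]
    calc Real.exp (m : ℝ) = Real.exp 1 ^ m := by rw [← Real.exp_nat_mul, mul_one]
      _ ≤ (2.7182818286 : ℝ) ^ m :=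
        pow_le_pow_left₀ (Real.exp_nonneg _) Real.exp_one_lt_d9.le _
      _ ≤ _ := h
  exact (pow_le_pow_iff_left₀ (Real.exp_nonneg _) hB hk).1 h1

/-- The right side of `exp_comparison` is increasing, so on `[β₀, ∞)` it is at least its value at
`β₀`, where `r` is an upper bound for `exp (β₀ / 2)`. -/
lemma exp_comparison_left {β β₀ r : ℝ} (hβ : β₀ ≤ β) (hβ0 : 0 ≤ β₀)
    (hr : Real.exp (β₀ / 2) ≤ r) :
    0.0894 + 0.07227 * β₀ + 0.577 * (β₀ - 2 + 2 / r)
      ≤ 0.0894 + 0.07227 * β + 0.577 * (β - 2 + 2 * Real.exp (-(β / 2))) := by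
  have h1 : Real.exp (-(β / 2)) = Real.exp (-(β₀ / 2)) * Real.exp (-((β - β₀) / 2)) := by
    rw [← Real.exp_add]; congr 1; ring
  have h2 := Real.add_one_le_exp (-((β - β₀) / 2))
  have h3 : 1 / r ≤ Real.exp (-(β₀ / 2)) := by
    rw [Real.exp_neg, ← one_div]
    exact one_div_le_one_div_of_le (Real.exp_pos _) hr
  have h4 : Real.exp (-(β₀ / 2)) ≤ 1 := Real.exp_le_one_iff.2 (by linarith)
  have h5 : Real.exp (-(β₀ / 2)) * (-((β - β₀) / 2) + 1) ≤ Real.exp (-(β / 2)) := by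
    rw [h1]; exact mul_le_mul_of_nonneg_left h2 (Real.exp_nonneg _)
  have h6 : 2 / r = 2 * (1 / r) := by ring
  rw [h6]
  nlinarith [mul_nonneg (sub_nonneg.2 h4) (sub_nonneg.2 hβ)]

/-- The one-variable inequality behind the case `n = 2`, `d = 1`, with slightly relaxed decimals
`0.0894`, `0.01713` and `0.577` in place of `2/3 - 1/√3`, `h(2,1)/2 - 1/3` and `1/√3`. For `β ≤ 2` it
follows from Taylor bounds; beyond that both sides are bounded on short intervals by monotonicity. -/
lemma exp_comparison {β : ℝ} (hβ : 0 ≤ β) :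
    Real.exp β * (0.0894 - 0.01713 * β)
      ≤ 0.0894 + 0.07227 * β + 0.577 * (β - 2 + 2 * Real.exp (-(β / 2))) := by
  have step : ∀ (β₀ β₁ r R : ℝ), 0 ≤ β₀ → β₀ ≤ β → β ≤ β₁ → Real.exp (β₀ / 2) ≤ r →
      Real.exp β₁ ≤ R → 0 ≤ 0.0894 - 0.01713 * β₀ →
      R * (0.0894 - 0.01713 * β₀) ≤ 0.0894 + 0.07227 * β₀ + 0.577 * (β₀ - 2 + 2 / r) →
      Real.exp β * (0.0894 - 0.01713 * β)
      ≤ 0.0894 + 0.07227 * β + 0.577 * (β - 2 + 2 * Real.exp (-(β / 2))) := by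
    intro β₀ β₁ r R h0 h1 h2 hr hR hp hfin
    refine le_trans ?_ (hfin.trans (exp_comparison_left h1 h0 hr))
    have : Real.exp β ≤ R := (Real.exp_le_exp.2 h2).trans hR
    calc _ ≤ Real.exp β * (0.0894 - 0.01713 * β₀) := by
          gcongr
      _ ≤ _ := by gcongr
  rcases le_total β 2 with h | h
  · have hx0 : 0 ≤ β / 2 := by linarith
    have hx1 : β / 2 ≤ 1 := by linarith
    have u := Real.exp_bound' hx0 hx1 (n := 4) (by norm_num)
    have l := Real.exp_bound (x := -(β / 2)) (by rw [abs_neg, abs_of_nonneg hx0]; exact hx1)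
      (n := 4) (by norm_num)
    rw [abs_le] at l
    have l := l.1
    rw [abs_neg, abs_of_nonneg hx0] at l
    simp only [Finset.sum_range_succ, Finset.sum_range_zero, Nat.factorial, Nat.succ_eq_add_one] at u l
    norm_num at u l
    set x := β / 2 with hx
    have hβx : β = 2 * x := by rw [hx]; ring
    have e2 : Real.exp β = Real.exp x ^ 2 := by
      rw [← Real.exp_nat_mul, hβx]; norm_num
    have e3 : Real.exp β ≤ 1 + 2 * x + 4.4 * x ^ 2 := by
      rw [e2]
      calc Real.exp x ^ 2 ≤ (1 + x + x ^ 2 / 2 + x ^ 3 / 6 + x ^ 4 * 5 / 96) ^ 2 := by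
            apply pow_le_pow_left₀ (Real.exp_nonneg _)
            linarith
        _ ≤ _ := by
            have p3 : x ^ 3 ≤ x ^ 2 := pow_le_pow_of_le_one hx0 hx1 (by norm_num)
            have p4 : x ^ 4 ≤ x ^ 2 := pow_le_pow_of_le_one hx0 hx1 (by norm_num)
            have p5 : x ^ 5 ≤ x ^ 2 := pow_le_pow_of_le_one hx0 hx1 (by norm_num)
            have p6 : x ^ 6 ≤ x ^ 2 := pow_le_pow_of_le_one hx0 hx1 (by norm_num)
            have p7 : x ^ 7 ≤ x ^ 2 := pow_le_pow_of_le_one hx0 hx1 (by norm_num)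
            have p8 : x ^ 8 ≤ x ^ 2 := pow_le_pow_of_le_one hx0 hx1 (by norm_num)
            nlinarith [sq_nonneg x]
    have e4 : Real.exp β * (0.0894 - 0.01713 * β)
        ≤ (1 + 2 * x + 4.4 * x ^ 2) * (0.0894 - 0.01713 * β) := by
      have : 0 ≤ 0.0894 - 0.01713 * β := by linarith
      gcongr
    refine e4.trans ?_
    have p3 : x ^ 3 ≤ x ^ 2 := pow_le_pow_of_le_one hx0 hx1 (by norm_num)
    have p4 : x ^ 4 ≤ x ^ 2 := pow_le_pow_of_le_one hx0 hx1 (by norm_num)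
    rw [hβx]
    nlinarith [sq_nonneg x]
  rcases le_total β 2.4 with h' | h'
  · exact step 2 2.4 2.7182818286 11.03 (by norm_num) h h'
      (exp_le_of_pow (k := 1) (m := 1) (by norm_num) (by norm_num) (by norm_num) (by norm_num))
      (exp_le_of_pow (k := 5) (m := 12) (by norm_num) (by norm_num) (by norm_num) (by norm_num))
      (by norm_num) (by norm_num)
  rcases le_total β 2.8 with h'' | h''
  · exact step 2.4 2.8 3.33 16.45 (by norm_num) h' h''
      (exp_le_of_pow (k := 5) (m := 6) (by norm_num) (by norm_num) (by norm_num) (by norm_num))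
      (exp_le_of_pow (k := 5) (m := 14) (by norm_num) (by norm_num) (by norm_num) (by norm_num))
      (by norm_num) (by norm_num)
  rcases le_total β 3.2 with h3 | h3
  · exact step 2.8 3.2 4.06 24.54 (by norm_num) h'' h3
      (exp_le_of_pow (k := 5) (m := 7) (by norm_num) (by norm_num) (by norm_num) (by norm_num))
      (exp_le_of_pow (k := 5) (m := 16) (by norm_num) (by norm_num) (by norm_num) (by norm_num))
      (by norm_num) (by norm_num)
  · have l := exp_comparison_left (r := 5) h3 (by norm_num)
      (exp_le_of_pow (k := 5) (m := 8) (by norm_num) (by norm_num) (by norm_num) (by norm_num))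
    refine le_trans ?_ l
    have h1 := Real.add_one_le_exp (17 / 4 - β)
    have h2 : Real.exp β * Real.exp (17 / 4 - β) ≤ 71 := by
      rw [← Real.exp_add]
      exact exp_le_of_pow (k := 4) (m := 17) (by norm_num) (by norm_num) (by norm_num) (by norm_num)
    have h3 : Real.exp β * (0.0894 - 0.01713 * β) ≤ 0.01713 * (Real.exp β * Real.exp (17 / 4 - β)) := by
      have : 0.0894 - 0.01713 * β ≤ 0.01713 * Real.exp (17 / 4 - β) := by linarith
      have := mul_le_mul_of_nonneg_left this (Real.exp_nonneg β)
      linarith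
    norm_num at h2 h3 ⊢
    linarith

/-- Pointwise comparison of kernels away from `(n, d) = (2, 1), (3, 1)`: the logarithmic
derivative of the quotient of the two sides, with `exp (-w/(n+1))` for `1 - w/(n+1)`, is
nonnegative. -/
lemma kernel_comparison_generic {n d : ℕ} (hn : 2 ≤ n) (hd : 1 ≤ d) (h : 2 ≤ d ∨ 4 ≤ n) {w : ℝ}
    (h0 : 0 ≤ w) (h1 : w < 1) :
    (1 - w) ^ ((n : ℝ) * (d / 2) - 1) * (1 - w / (n + 1))
      ≤ (1 - (n : ℝ) / (n + 1) * w) ^ (((n : ℝ) + 1) * (d / 2) - 1) := by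
  have hn' : (2 : ℝ) ≤ n := by exact_mod_cast hn
  have hd' : (1 : ℝ) ≤ d := by exact_mod_cast hd
  have hc : 2 * (n : ℝ) + 1 ≤ n * (n + 1) * (d / 2) := by
    rcases h with h | h
    · have : (2 : ℝ) ≤ d := by exact_mod_cast h
      nlinarith [mul_nonneg (show (0 : ℝ) ≤ n * (n + 1) by positivity) (sub_nonneg.2 this)]
    · have : (4 : ℝ) ≤ n := by exact_mod_cast h
      nlinarith [mul_nonneg (show (0 : ℝ) ≤ n * (n + 1) by positivity) (sub_nonneg.2 hd')]
  set c : ℝ := (d : ℝ) / 2 with hcdef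
  set θ : ℝ := (n : ℝ) / (n + 1) with hθ
  have hθ1 : θ < 1 := by rw [hθ, div_lt_one (by positivity)]; linarith
  have hθ0 : 0 < θ := by positivity
  set ψ : ℝ → ℝ := fun w => ((n + 1) * c - 1) * Real.log (1 - θ * w)
    - (n * c - 1) * Real.log (1 - w) + w / (n + 1) with hψ
  have hpos : ∀ x ∈ Ico (0 : ℝ) 1, 0 < 1 - x ∧ 0 < 1 - θ * x := by
    intro x hx
    refine ⟨by linarith [hx.2], by nlinarith [hx.1, hx.2]⟩
  have hder : ∀ x ∈ Ico (0 : ℝ) 1, HasDerivAt ψ (((n + 1) * c - 1) * ((-θ) / (1 - θ * x))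
      - (n * c - 1) * ((-1) / (1 - x)) + 1 / (n + 1)) x := by
    intro x hx
    obtain ⟨q1, q2⟩ := hpos x hx
    have d1 : HasDerivAt (fun w : ℝ => 1 - w) (-1) x := by
      simpa using (hasDerivAt_id x).const_sub 1
    have d2 : HasDerivAt (fun w : ℝ => 1 - θ * w) (-θ) x := by
      simpa using ((hasDerivAt_id x).const_mul θ).const_sub 1
    exact (((d2.log q2.ne').const_mul _).sub ((d1.log q1.ne').const_mul _)).add
      ((hasDerivAt_id x).div_const _)
  have hmono : MonotoneOn ψ (Ico 0 1) := by
    apply monotoneOn_of_deriv_nonneg (convex_Ico 0 1)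
    · intro x hx; exact (hder x hx).continuousAt.continuousWithinAt
    · intro x hx
      rw [interior_Ico] at hx
      exact (hder x ⟨hx.1.le, hx.2⟩).differentiableAt.differentiableWithinAt
    · intro x hx
      rw [interior_Ico] at hx
      rw [(hder x ⟨hx.1.le, hx.2⟩).deriv]
      obtain ⟨q1, q2⟩ := hpos x ⟨hx.1.le, hx.2⟩
      have q3 : 0 < (n : ℝ) + 1 - n * x := by nlinarith [hx.2]
      have : ((n + 1) * c - 1) * ((-θ) / (1 - θ * x)) - (n * c - 1) * ((-1) / (1 - x)) + 1 / ((n : ℝ) + 1)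
          = x * (n * (n + 1) * c - (2 * n + 1) + n * x) / ((n + 1 - n * x) * (1 - x) * (n + 1)) := by
        have : 1 - θ * x = (n + 1 - n * x) / (n + 1) := by rw [hθ]; field_simp
        rw [this, hθ]
        field_simp
        ring
      rw [this]
      apply div_nonneg _ (by positivity)
      apply mul_nonneg hx.1.le
      nlinarith [hx.1]
  have hψ0 : ψ 0 = 0 := by simp [hψ]
  have hψw : 0 ≤ ψ w := by
    rw [← hψ0]; exact hmono ⟨le_rfl, zero_lt_one⟩ ⟨h0, h1⟩ h0
  obtain ⟨q1, q2⟩ := hpos w ⟨h0, h1⟩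
  have hexp : 1 - w / ((n : ℝ) + 1) ≤ Real.exp (-(w / (n + 1))) := by
    linarith [Real.add_one_le_exp (-(w / ((n : ℝ) + 1)))]
  calc _ ≤ (1 - w) ^ ((n : ℝ) * c - 1) * Real.exp (-(w / (n + 1))) := by
        gcongr
    _ ≤ _ := by
        rw [Real.rpow_def_of_pos q1, Real.rpow_def_of_pos q2, ← Real.exp_add]
        apply Real.exp_le_exp.2
        simp only [hψ] at hψw
        linarith

/-- The case `n = 3`, `d = 1` of the pointwise comparison. -/
lemma kernel_comparison_three {w : ℝ} (h0 : 0 ≤ w) (h1 : w < 1) :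
    (1 - w) ^ (((3 : ℕ) : ℝ) * ((1 : ℕ) / 2) - 1) * (1 - w / 3)
      ≤ (1 - ((3 : ℕ) : ℝ) / ((3 : ℕ) + 1) * w) ^ ((((3 : ℕ) : ℝ) + 1) * ((1 : ℕ) / 2) - 1) := by
  have e1 : (((3 : ℕ) : ℝ) * ((1 : ℕ) / 2) - 1) = 1 / 2 := by norm_num
  have e2 : ((((3 : ℕ) : ℝ) + 1) * ((1 : ℕ) / 2) - 1) = 1 := by norm_num
  have e3 : ((3 : ℕ) : ℝ) / ((3 : ℕ) + 1) = 3 / 4 := by norm_num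
  rw [e1, e2, e3, Real.rpow_one, ← Real.sqrt_eq_rpow]
  apply abs_le_of_sq_le_sq' _ (by linarith) |>.2
  rw [mul_pow, Real.sq_sqrt (by linarith)]
  nlinarith [mul_nonneg h0 (sq_nonneg (w - 1)), mul_nonneg h0 (sq_nonneg w)]

/-- Pointwise comparison of the kernels `F_n(w)` and `F_{n+1}(n w/(n+1))` for `(n,d) ≠ (2,1)`. -/
lemma kernel_comparison {n d : ℕ} (hn : 2 ≤ n) (hd : 1 ≤ d) (h : ¬(n = 2 ∧ d = 1)) {w : ℝ}
    (h0 : 0 ≤ w) (h1 : w ≤ 1) :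
    (1 - w) ^ ((n : ℝ) * (d / 2) - 1) -
      (1 - (n : ℝ) / (n + 1) * w) ^ (((n : ℝ) + 1) * (d / 2) - 1)
      ≤ hFun n d * ((n - 1) * (d / 2)) * w * (1 - w) ^ ((n : ℝ) * (d / 2) - 1) := by
  have hn' : (2 : ℝ) ≤ n := by exact_mod_cast hn
  have hd' : (1 : ℝ) ≤ d := by exact_mod_cast hd
  have hh := hFun_ge hd hn
  rcases eq_or_lt_of_le h1 with rfl | h1
  · have : (n : ℝ) * (d / 2) - 1 ≠ 0 := by
      intro h'
      have : (n : ℝ) * d = 2 := by linarith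
      have : n * d = 2 := by exact_mod_cast this
      have hn2 : n ∣ 2 := ⟨d, this.symm⟩
      have := Nat.le_of_dvd (by norm_num) hn2
      obtain rfl : n = 2 := le_antisymm this hn
      exact h ⟨rfl, by omega⟩
    rw [sub_self, Real.zero_rpow this, mul_zero, zero_sub, neg_nonpos]
    apply Real.rpow_nonneg
    rw [mul_one, sub_nonneg, div_le_one (by positivity)]; linarith
  have hA : 0 ≤ (1 - w) ^ ((n : ℝ) * (d / 2) - 1) := Real.rpow_nonneg (by linarith) _
  have fin : ∀ k : ℝ, (1 - w) ^ ((n : ℝ) * (d / 2) - 1) * (1 - w / k)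
      ≤ (1 - (n : ℝ) / (n + 1) * w) ^ (((n : ℝ) + 1) * (d / 2) - 1) →
      1 / k ≤ hFun n d * ((n - 1) * (d / 2)) →
      (1 - w) ^ ((n : ℝ) * (d / 2) - 1) -
      (1 - (n : ℝ) / (n + 1) * w) ^ (((n : ℝ) + 1) * (d / 2) - 1)
      ≤ hFun n d * ((n - 1) * (d / 2)) * w * (1 - w) ^ ((n : ℝ) * (d / 2) - 1) := by
    intro k hk1 hk2
    have := mul_le_mul_of_nonneg_right (mul_le_mul_of_nonneg_right hk2 h0) hA
    have e : 1 / k * w = w / k := by ring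
    rw [e] at this
    linarith
  have hb : 1 / (n : ℝ) * ((n - 1) * (d / 2)) ≤ hFun n d * ((n - 1) * (d / 2)) := by
    have : 0 ≤ ((n : ℝ) - 1) * (d / 2) := by
      apply mul_nonneg <;> linarith
    gcongr
  by_cases hg : 2 ≤ d ∨ 4 ≤ n
  · refine fin _ (kernel_comparison_generic hn hd hg h0 h1) (le_trans ?_ hb)
    rw [div_le_iff₀ (by positivity)]
    have : 1 / (n : ℝ) * ((n - 1) * (d / 2)) * (n + 1) = (((n : ℝ) ^ 2 - 1) * (d / 2)) / n := by
      field_simp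
      ring
    rw [this, le_div_iff₀ (by positivity)]
    have hn2 : (0 : ℝ) ≤ (n : ℝ) ^ 2 - 1 := by nlinarith
    rcases hg with h | h
    · have : (2 : ℝ) ≤ d := by exact_mod_cast h
      nlinarith [mul_nonneg hn2 (sub_nonneg.2 this)]
    · have : (4 : ℝ) ≤ n := by exact_mod_cast h
      nlinarith [mul_nonneg hn2 (sub_nonneg.2 hd')]
  · obtain ⟨rfl, rfl⟩ : n = 3 ∧ d = 1 := by omega
    refine fin 3 (kernel_comparison_three h0 h1) (le_trans ?_ hb)
    norm_num

/-! ### The logarithmic kernel integral -/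

/-- `F_{n+1}(n w/(n+1))`, the kernel for sample size `n + 1` in the variable of sample size `n`. -/
def kerG (n c κ w : ℝ) : ℝ := (1 - n / (n + 1) * w) ^ ((n + 1) * c - 1) * Real.exp (-(n * κ * w))

lemma continuous_kerG {n c : ℝ} (κ : ℝ) (h : 1 ≤ (n + 1) * c) : Continuous (kerG n c κ) := by
  unfold kerG
  exact (Continuous.rpow_const (by fun_prop) (fun _ => Or.inr (by linarith))).mul (by fun_prop)

lemma kerG_nonneg {n : ℝ} (c κ : ℝ) {w : ℝ} (hn : 0 < n) (hw : w ≤ (n + 1) / n) :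
    0 ≤ kerG n c κ w := by
  unfold kerG
  refine mul_nonneg (Real.rpow_nonneg ?_ _) (Real.exp_nonneg _)
  have : n / (n + 1) * w ≤ n / (n + 1) * ((n + 1) / n) := by gcongr
  have e : n / (n + 1) * ((n + 1) / n) = 1 := by field_simp
  linarith

lemma integral_affine_mul_exp (p q β a b : ℝ) :
    β ^ 2 * ∫ w in a..b, (p * w + q) * Real.exp (-(β * w))
      = Real.exp (-(β * a)) * (β * (p * a + q) + p) - Real.exp (-(β * b)) * (β * (p * b + q) + p) := by
  have hd : ∀ x : ℝ, HasDerivAt (fun w : ℝ => -(Real.exp (-(β * w)) * (β * (p * w + q) + p)))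
      (β ^ 2 * ((p * x + q) * Real.exp (-(β * x)))) x := by
    intro x
    have d1 : HasDerivAt (fun w : ℝ => β * (p * w + q) + p) (β * (p * 1)) x :=
      ((((hasDerivAt_id x).const_mul p).add_const q).const_mul β).add_const p
    refine ((hasDerivAt_exp_neg_mul β x).fun_mul d1).fun_neg.congr_deriv ?_
    ring
  have cc : Continuous fun x : ℝ => β ^ 2 * ((p * x + q) * Real.exp (-(β * x))) := by fun_prop
  rw [← intervalIntegral.integral_const_mul, intervalIntegral.integral_eq_sub_of_hasDerivAt
    (fun x _ => hd x) (cc.intervalIntegrable _ _)]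
  ring

/-- The Laplace-transform inequality to which the case `n = 2`, `d = 1` reduces; both integrals are
elementary and `exp_comparison` compares them. -/
lemma affine_exp_comparison {β : ℝ} (hβ : 0 ≤ β) :
    ∫ w in (0 : ℝ)..1, (0.0894 * w + (-0.01713)) * Real.exp (-(β * w))
      ≤ 0.577 * ∫ w in (1 : ℝ)..(3 / 2), ((-2) * w + 3) * Real.exp (-(β * w)) := by
  rcases eq_or_lt_of_le hβ with rfl | hβ'
  · simp only [zero_mul, neg_zero, Real.exp_zero, mul_one]
    have := integral_id (a := 0) (b := 1)
    rw [intervalIntegral.integral_add (Continuous.intervalIntegrable (by fun_prop) _ _)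
      (Continuous.intervalIntegrable (by fun_prop) _ _),
      intervalIntegral.integral_add (Continuous.intervalIntegrable (by fun_prop) _ _)
      (Continuous.intervalIntegrable (by fun_prop) _ _),
      intervalIntegral.integral_const_mul, intervalIntegral.integral_const_mul, integral_id,
      integral_id]
    norm_num
  have h := exp_comparison hβ
  refine le_of_mul_le_mul_left ?_ (show 0 < β ^ 2 by positivity)
  rw [mul_left_comm, integral_affine_mul_exp, integral_affine_mul_exp]
  refine le_of_mul_le_mul_left ?_ (Real.exp_pos β)
  have e1 : Real.exp β * Real.exp (-(β * 1)) = 1 := by rw [← Real.exp_add]; simp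
  have e2 : Real.exp β * Real.exp (-(β * (3 / 2))) = Real.exp (-(β / 2)) := by
    rw [← Real.exp_add]; congr 1; ring
  have e0 : Real.exp (-(β * 0)) = 1 := by simp
  rw [e0]
  have l : Real.exp β * (1 * (β * (0.0894 * 0 + -0.01713) + 0.0894) -
      Real.exp (-(β * 1)) * (β * (0.0894 * 1 + -0.01713) + 0.0894))
      = Real.exp β * (0.0894 - 0.01713 * β) - (0.07227 * β + 0.0894) := by
    rw [mul_sub, ← mul_assoc (Real.exp β) (Real.exp (-(β * 1))), e1]; ring
  have r : Real.exp β * (0.577 * (Real.exp (-(β * 1)) * (β * (-2 * 1 + 3) + -2) -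
      Real.exp (-(β * (3 / 2))) * (β * (-2 * (3 / 2) + 3) + -2)))
      = 0.577 * (β - 2 + 2 * Real.exp (-(β / 2))) := by
    rw [mul_left_comm, mul_sub, ← mul_assoc (Real.exp β) (Real.exp (-(β * 1))), e1,
      ← mul_assoc (Real.exp β), e2]; ring
  rw [l, r]; linarith

/-- Upper bound for the integrand on `(0, 1)` when `n = 2`, `d = 1`; equality at `w = 1` would need
`2/3 - 1/√3 ≈ 0.08932` in place of `0.0894`. -/
lemma one_sub_sqrt_le {w : ℝ} (h0 : 0 ≤ w) (h1 : w ≤ 1) :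
    1 - Real.sqrt (1 - 2 / 3 * w) ≤ w * (1 / 3 + 0.0894 * w) := by
  have : 1 - w * (1 / 3 + 0.0894 * w) ≤ Real.sqrt (1 - 2 / 3 * w) := by
    apply Real.le_sqrt_of_sq_le
    have : 0 ≤ w ^ 2 * (2 * 0.0894 - 1 / 9 - 2 / 3 * 0.0894 * w - 0.0894 ^ 2 * w ^ 2) := by
      apply mul_nonneg (by positivity)
      nlinarith
    nlinarith
  linarith

/-- Lower bound for the tail integrand on `(1, 3/2)` when `n = 2`, `d = 1`; here `0.577 < 1/√3`. -/
lemma sqrt_tail_ge {w : ℝ} (h0 : 1 ≤ w) (h1 : w ≤ 3 / 2) :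
    w * (0.577 * ((-2) * w + 3)) ≤ Real.sqrt (1 - 2 / 3 * w) := by
  apply Real.le_sqrt_of_sq_le
  have h2 : 0 ≤ 3 - 2 * w := by linarith
  have h3 : w ^ 2 * (3 - 2 * w) ≤ 1 := by
    nlinarith [mul_nonneg (sq_nonneg (w - 1)) (show 0 ≤ 2 * w + 1 by linarith)]
  have : (w * (0.577 * ((-2) * w + 3))) ^ 2 = 0.577 ^ 2 * (w ^ 2 * (3 - 2 * w)) * (3 - 2 * w) := by ring
  rw [this]
  have : 0.577 ^ 2 * (w ^ 2 * (3 - 2 * w)) * (3 - 2 * w) ≤ 0.577 ^ 2 * 1 * (3 - 2 * w) := by gcongr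
  nlinarith

lemma intervalIntegrable_div_id {f : ℝ → ℝ} (hf : Continuous f) {a b : ℝ} (ha : 0 < a) (hab : a ≤ b) :
    IntervalIntegrable (fun w => f w / w) volume a b := by
  apply ContinuousOn.intervalIntegrable
  apply hf.continuousOn.div continuousOn_id
  intro x hx
  rw [uIcc_of_le hab] at hx
  exact ne_of_gt (ha.trans_le hx.1)

/-- The case `n = 2`, `d = 1` of `kernel_integral`. The pointwise comparison fails here, and the tail
integral over `(1, 3/2)` has to compensate. -/
lemma kernel_integral_two_one {κ η : ℝ} (hκ : 0 ≤ κ) (h0 : 0 < η) (h1 : η ≤ 1) :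
    ∫ w in η..1, (kerF (2 : ℕ) ((1 : ℕ) / 2) κ w - kerG (2 : ℕ) ((1 : ℕ) / 2) κ w) / w
      ≤ (∫ w in (1 : ℝ)..(((2 : ℕ) : ℝ) + 1) / (2 : ℕ), kerG (2 : ℕ) ((1 : ℕ) / 2) κ w / w)
        + hFun 2 1 * Qint (2 : ℕ) ((1 : ℕ) / 2) κ := by
  set β : ℝ := 2 * κ with hβ
  have hβ0 : 0 ≤ β := by positivity
  have eF : kerF (2 : ℕ) ((1 : ℕ) / 2) κ = fun w => Real.exp (-(β * w)) := by
    funext w; simp [kerF, hβ]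
  have eG : kerG (2 : ℕ) ((1 : ℕ) / 2) κ = fun w => Real.sqrt (1 - 2 / 3 * w) * Real.exp (-(β * w)) := by
    funext w
    simp only [kerG, hβ, Real.sqrt_eq_rpow]; norm_num
  have eb : (((2 : ℕ) : ℝ) + 1) / (2 : ℕ) = 3 / 2 := by norm_num
  rw [eb]
  unfold Qint
  rw [eF, eG]
  have cE : Continuous fun w : ℝ => Real.exp (-(β * w)) := by fun_prop
  have cG : Continuous fun w : ℝ => Real.sqrt (1 - 2 / 3 * w) * Real.exp (-(β * w)) := by fun_prop
  have hmain := affine_exp_comparison hβ0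
  have b1 : ∫ w in η..1, (Real.exp (-(β * w)) - Real.sqrt (1 - 2 / 3 * w) * Real.exp (-(β * w))) / w
      ≤ ∫ w in (0 : ℝ)..1, (1 / 3 + 0.0894 * w) * Real.exp (-(β * w)) := by
    have cR : Continuous fun w : ℝ => (1 / 3 + 0.0894 * w) * Real.exp (-(β * w)) := by fun_prop
    calc _ ≤ ∫ w in η..1, (1 / 3 + 0.0894 * w) * Real.exp (-(β * w)) := by
          apply intervalIntegral.integral_mono_on h1 (intervalIntegrable_div_id (cE.sub cG) h0 h1)
            (cR.intervalIntegrable _ _)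
          intro w hw
          have hw0 : 0 < w := h0.trans_le hw.1
          rw [div_le_iff₀ hw0, Pi.sub_apply]
          have := mul_le_mul_of_nonneg_right (one_sub_sqrt_le hw0.le hw.2) (Real.exp_nonneg (-(β * w)))
          linarith
      _ ≤ _ := by
          rw [← intervalIntegral.integral_add_adjacent_intervals (cR.intervalIntegrable 0 η)
            (cR.intervalIntegrable η 1)]
          have : 0 ≤ ∫ w in (0 : ℝ)..η, (1 / 3 + 0.0894 * w) * Real.exp (-(β * w)) := by
            apply intervalIntegral.integral_nonneg h0.le
            intro w hw
            have := hw.1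
            positivity
          linarith
  have b2 : 0.577 * ∫ w in (1 : ℝ)..(3 / 2), ((-2) * w + 3) * Real.exp (-(β * w))
      ≤ ∫ w in (1 : ℝ)..(3 / 2), Real.sqrt (1 - 2 / 3 * w) * Real.exp (-(β * w)) / w := by
    rw [← intervalIntegral.integral_const_mul]
    apply intervalIntegral.integral_mono_on (by norm_num)
      (Continuous.intervalIntegrable (by fun_prop) _ _)
      (intervalIntegrable_div_id cG one_pos (by norm_num))
    intro w hw
    have hw0 : 0 < w := one_pos.trans_le hw.1
    rw [le_div_iff₀ hw0]
    have := mul_le_mul_of_nonneg_right (sqrt_tail_ge hw.1 hw.2) (Real.exp_nonneg (-(β * w)))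
    linarith
  have hh : 2 * (1 / 3 + 0.01713) ≤ hFun 2 1 := by
    rw [hFun_two_one]
    have := Real.log_two_lt_d9
    linarith
  have b3 : ∫ w in (0 : ℝ)..1, (1 / 3 + 0.0894 * w) * Real.exp (-(β * w))
      = (∫ w in (0 : ℝ)..1, (0.0894 * w + (-0.01713)) * Real.exp (-(β * w)))
        + (1 / 3 + 0.01713) * ∫ w in (0 : ℝ)..1, Real.exp (-(β * w)) := by
    rw [← intervalIntegral.integral_const_mul, ← intervalIntegral.integral_add (Continuous.intervalIntegrable (by fun_prop) _ _)
      (Continuous.intervalIntegrable (by fun_prop) _ _)]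
    apply intervalIntegral.integral_congr
    intro w _
    simp only
    ring
  have hI : 0 ≤ ∫ w in (0 : ℝ)..1, Real.exp (-(β * w)) :=
    intervalIntegral.integral_nonneg zero_le_one (fun w _ => Real.exp_nonneg _)
  have := mul_le_mul_of_nonneg_right hh hI
  have e : hFun 2 1 * ((((2 : ℕ) : ℝ) - 1) * (((1 : ℕ) : ℝ) / 2) * ∫ w in (0 : ℝ)..1, Real.exp (-(β * w)))
      = hFun 2 1 * (∫ w in (0 : ℝ)..1, Real.exp (-(β * w))) / 2 := by
    norm_num; ring
  rw [e]
  linarith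

/-- The comparison of kernels integrated against `dw / w`. The variable of the second kernel has been
rescaled, so that it lives on `(0, (n+1)/n)`; this produces the tail integral. -/
lemma kernel_integral {n d : ℕ} (hn : 2 ≤ n) (hd : 1 ≤ d) {κ η : ℝ} (hκ : 0 ≤ κ) (h0 : 0 < η)
    (h1 : η ≤ 1) :
    ∫ w in η..1, (kerF n (d / 2) κ w - kerG n (d / 2) κ w) / w
      ≤ (∫ w in (1 : ℝ)..((n : ℝ) + 1) / n, kerG n (d / 2) κ w / w) + hFun n d * Qint n (d / 2) κ := by
  by_cases h : n = 2 ∧ d = 1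
  · obtain ⟨rfl, rfl⟩ := h
    exact kernel_integral_two_one hκ h0 h1
  have hn' : (2 : ℝ) ≤ n := by exact_mod_cast hn
  have hd' : (1 : ℝ) ≤ d := by exact_mod_cast hd
  have hnc : 1 ≤ (n : ℝ) * (d / 2) := by nlinarith
  have hnc' : 1 ≤ ((n : ℝ) + 1) * (d / 2) := by nlinarith
  have cF := continuous_kerF κ hnc
  have cG := continuous_kerG κ hnc'
  have ht : 0 ≤ ∫ w in (1 : ℝ)..((n : ℝ) + 1) / n, kerG n (d / 2) κ w / w := by
    apply intervalIntegral.integral_nonneg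
    · rw [le_div_iff₀ (by positivity)]; linarith
    · intro w hw
      have := hw.1
      exact div_nonneg (kerG_nonneg _ _ (by positivity) hw.2) (by linarith)
  have hh : 0 ≤ hFun n d := le_trans (by positivity) (hFun_ge hd hn)
  have hK : 0 ≤ hFun n d * ((n - 1) * (d / 2)) :=
    mul_nonneg hh (mul_nonneg (by linarith) (by linarith))
  have : ∫ w in η..1, (kerF n (d / 2) κ w - kerG n (d / 2) κ w) / w
      ≤ hFun n d * Qint n (d / 2) κ := by
    calc _ ≤ ∫ w in η..1, hFun n d * ((n - 1) * (d / 2)) * kerF n (d / 2) κ w := by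
          apply intervalIntegral.integral_mono_on h1 (intervalIntegrable_div_id (cF.sub cG) h0 h1)
            ((cF.const_mul _).intervalIntegrable _ _)
          intro w hw
          have hw0 : 0 < w := h0.trans_le hw.1
          rw [div_le_iff₀ hw0, Pi.sub_apply]
          have := mul_le_mul_of_nonneg_right (kernel_comparison hn hd h hw0.le hw.2)
            (Real.exp_nonneg (-(n * κ * w)))
          unfold kerF kerG
          linarith
      _ ≤ _ := by
          rw [intervalIntegral.integral_const_mul]
          unfold Qint
          refine le_trans (mul_le_mul_of_nonneg_left ?_ hK) (mul_assoc _ _ _).le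
          rw [← intervalIntegral.integral_add_adjacent_intervals (cF.intervalIntegrable 0 η)
            (cF.intervalIntegrable η 1)]
          have : 0 ≤ ∫ w in (0 : ℝ)..η, kerF n (d / 2) κ w :=
            intervalIntegral.integral_nonneg h0.le
              (fun w hw => kerF_nonneg _ _ _ (hw.2.trans h1))
          linarith
  linarith

/-- The bound for `E log(T'/T)` with the singularity at `w = 0` cut off. -/
lemma kernel_cutoff {n d : ℕ} (hn : 2 ≤ n) (hd : 1 ≤ d) {κ ε : ℝ} (hκ : 0 ≤ κ) (h0 : 0 < ε)
    (h1 : ε ≤ (n : ℝ) / (n + 1)) :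
    ∫ w in ε..1, (kerF n (d / 2) κ w - kerF ((n : ℝ) + 1) (d / 2) κ w) / w
      ≤ Real.log (((n : ℝ) + 1) / n) + hFun n d * Qint n (d / 2) κ := by
  have hn' : (2 : ℝ) ≤ n := by exact_mod_cast hn
  have hd' : (1 : ℝ) ≤ d := by exact_mod_cast hd
  have hnc : 1 ≤ (n : ℝ) * (d / 2) := by nlinarith
  have hnc' : 1 ≤ ((n : ℝ) + 1) * (d / 2) := by nlinarith
  have cF := continuous_kerF κ hnc
  have cF' := continuous_kerF κ hnc'
  have cG := continuous_kerG κ hnc'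
  set θ : ℝ := (n : ℝ) / (n + 1) with hθ
  have hθ0 : 0 < θ := by positivity
  have hθ1 : θ < 1 := by rw [hθ, div_lt_one (by positivity)]; linarith
  have hε1 : ε ≤ 1 := h1.trans hθ1.le
  set η := ε / θ with hη
  have hη0 : 0 < η := by positivity
  have hη1 : η ≤ 1 := by rw [hη, div_le_one hθ0]; exact h1
  have hεη : ε ≤ η := by rw [hη, le_div_iff₀ hθ0]; nlinarith
  have hinv : ((n : ℝ) + 1) / n = 1 / θ := by rw [hθ, one_div_div]
  have hinv1 : 1 ≤ 1 / θ := by rw [le_div_iff₀ hθ0]; linarith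
  have s1 : ∫ w in ε..1, kerF ((n : ℝ) + 1) (d / 2) κ w / w
      = (∫ w in η..1, kerG n (d / 2) κ w / w) + ∫ w in (1 : ℝ)..1 / θ, kerG n (d / 2) κ w / w := by
    rw [intervalIntegral.integral_add_adjacent_intervals (intervalIntegrable_div_id cG hη0 hη1)
      (intervalIntegrable_div_id cG one_pos hinv1)]
    have := intervalIntegral.mul_integral_comp_mul_left (a := η) (b := 1 / θ) (c := θ)
      (f := fun w => kerF ((n : ℝ) + 1) (d / 2) κ w / w)
    rw [hη, mul_div_cancel₀ _ hθ0.ne', mul_one_div_cancel hθ0.ne'] at this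
    rw [← this, ← intervalIntegral.integral_const_mul]
    apply intervalIntegral.integral_congr
    intro w hw
    have hw0 : w ≠ 0 := by
      rw [← hη, uIcc_of_le (hη1.trans hinv1)] at hw
      exact (hη0.trans_le hw.1).ne'
    simp only
    have : kerF ((n : ℝ) + 1) (d / 2) κ (θ * w) = kerG n (d / 2) κ w := by
      unfold kerF kerG
      rw [← hθ]
      congr 3
      rw [hθ]; field_simp
    rw [this]; field_simp
  have s2 : ∫ w in ε..1, kerF n (d / 2) κ w / w
      = (∫ w in ε..η, kerF n (d / 2) κ w / w) + ∫ w in η..1, kerF n (d / 2) κ w / w :=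
    (intervalIntegral.integral_add_adjacent_intervals (intervalIntegrable_div_id cF h0 hεη)
      (intervalIntegrable_div_id cF hη0 hη1)).symm
  have s3 : ∫ w in ε..η, kerF n (d / 2) κ w / w ≤ Real.log (1 / θ) := by
    have : Real.log (1 / θ) = ∫ w in ε..η, 1 / w := by
      rw [integral_one_div_of_pos h0 hη0, hη]; congr 1; field_simp
    rw [this]
    apply intervalIntegral.integral_mono_on hεη (intervalIntegrable_div_id cF h0 hεη)
      (intervalIntegrable_div_id continuous_const h0 hεη)
    intro w hw
    have hw0 : 0 < w := h0.trans_le hw.1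
    have := kerF_le_one (c := (d : ℝ) / 2) (l := n) (by positivity) hκ hnc hw0.le (hw.2.trans hη1)
    gcongr
  have s4 := kernel_integral hn hd hκ hη0 hη1
  simp only [sub_div] at s4 ⊢
  rw [intervalIntegral.integral_sub (intervalIntegrable_div_id cF hη0 hη1)
    (intervalIntegrable_div_id cG hη0 hη1)] at s4
  rw [intervalIntegral.integral_sub (intervalIntegrable_div_id cF h0 hε1)
    (intervalIntegrable_div_id cF' h0 hε1), s1, s2]
  rw [hinv] at s4 ⊢
  linarith

lemma kerF_succ_le {n c κ w : ℝ} (hκ : 0 ≤ κ) (hc : 0 ≤ c) (h0 : 0 ≤ w) (h1 : w < 1) :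
    kerF (n + 1) c κ w ≤ kerF n c κ w := by
  unfold kerF
  have e : 0 ≤ κ * w := by positivity
  apply mul_le_mul _ _ (Real.exp_nonneg _) (Real.rpow_nonneg (by linarith) _)
  · apply Real.rpow_le_rpow_of_exponent_ge (by linarith) (by linarith); nlinarith
  · apply Real.exp_le_exp.2; nlinarith

/-- The bound for `E log(T'/T)`. -/
lemma kernel_lintegral {n d : ℕ} (hn : 2 ≤ n) (hd : 1 ≤ d) {κ : ℝ} (hκ : 0 ≤ κ) :
    ∫⁻ w in Ioo (0 : ℝ) 1,
        ENNReal.ofReal ((kerF n (d / 2) κ w - kerF ((n : ℝ) + 1) (d / 2) κ w) / w)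
      ≤ ENNReal.ofReal (Real.log (((n : ℝ) + 1) / n) + hFun n d * Qint n (d / 2) κ) := by
  have hn' : (2 : ℝ) ≤ n := by exact_mod_cast hn
  have hd' : (1 : ℝ) ≤ d := by exact_mod_cast hd
  have hnc : 1 ≤ (n : ℝ) * (d / 2) := by nlinarith
  have hnc' : 1 ≤ ((n : ℝ) + 1) * (d / 2) := by nlinarith
  have cF := continuous_kerF κ hnc
  have cF' := continuous_kerF κ hnc'
  have hU : Ioo (0 : ℝ) 1 ⊆ ⋃ k : ℕ, Ioc (1 / ((k : ℝ) + 2)) 1 := by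
    intro w hw
    obtain ⟨k, hk⟩ := exists_nat_one_div_lt hw.1
    refine mem_iUnion.2 ⟨k, lt_of_le_of_lt ?_ hk, hw.2.le⟩
    apply one_div_le_one_div_of_le (by positivity); linarith
  refine (lintegral_mono_set hU).trans ?_
  have hmono : Monotone fun k : ℕ => Ioc (1 / ((k : ℝ) + 2)) (1 : ℝ) := by
    intro i j hij
    apply Ioc_subset_Ioc_left
    have : (i : ℝ) ≤ j := by exact_mod_cast hij
    apply one_div_le_one_div_of_le (by positivity); linarith
  rw [setLIntegral_iUnion_of_directed _ (hmono.directed_le)]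
  apply iSup_le
  intro k
  have hk : 1 / ((k : ℝ) + 2) ≤ (n : ℝ) / (n + 1) := by
    rw [div_le_div_iff₀ (by positivity) (by positivity)]
    nlinarith [show (0 : ℝ) ≤ k from Nat.cast_nonneg k]
  have hk0 : 0 < 1 / ((k : ℝ) + 2) := by positivity
  have hk1 : 1 / ((k : ℝ) + 2) ≤ 1 := by
    rw [div_le_one (by positivity)]; linarith [show (0 : ℝ) ≤ k from Nat.cast_nonneg k]
  have hii := intervalIntegrable_div_id (cF.sub cF') hk0 hk1
  rw [← ofReal_integral_eq_lintegral_ofReal]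
  · apply ENNReal.ofReal_le_ofReal
    rw [← intervalIntegral.integral_of_le hk1]
    exact kernel_cutoff hn hd hκ hk0 hk
  · exact (intervalIntegrable_iff_integrableOn_Ioc_of_le hk1).1 hii
  · refine (ae_restrict_mem measurableSet_Ioc).mono fun w hw => ?_
    have hw0 : 0 < w := hk0.trans hw.1
    rcases eq_or_lt_of_le hw.2 with rfl | hw1
    · simp only [Pi.zero_apply, div_one]
      unfold kerF
      rw [sub_self, Real.zero_rpow (x := ((n : ℝ) + 1) * (d / 2) - 1) (by nlinarith)]
      simp only [zero_mul, sub_zero]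
      positivity
    · exact div_nonneg (sub_nonneg.2 (kerF_succ_le hκ (by positivity) hw0.le hw1)) hw0.le

/-! ### Gamma, beta and Gaussian integrals; marginal densities of mixtures -/

/-- Tonelli's criterion for nonnegative functions whose inner integrals are known. -/
lemma integrable_prod_of_nonneg {α β : Type*} [MeasurableSpace α] [MeasurableSpace β]
    {μ : Measure α} {ν : Measure β} [SFinite ν] {f : α × β → ℝ} (hf : Measurable f) {g : α → ℝ}
    (h : ∀ᵐ x ∂μ, (∀ᵐ y ∂ν, 0 ≤ f (x, y)) ∧ Integrable (fun y => f (x, y)) ν ∧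
      ∫ y, f (x, y) ∂ν = g x) (hg : Integrable g μ) : Integrable f (μ.prod ν) := by
  rw [integrable_prod_iff hf.aestronglyMeasurable]
  refine ⟨h.mono fun x hx => hx.2.1, hg.congr (h.mono fun x hx => ?_)⟩
  simp only
  rw [← hx.2.2]
  exact integral_congr_ae (hx.1.mono fun y hy => (Real.norm_of_nonneg hy).symm)

lemma gamma_integral {a r : ℝ} (ha : 0 < a) (hr : 0 < r) :
    IntegrableOn (fun t : ℝ => t ^ (a - 1) * Real.exp (-(r * t))) (Ioi 0) ∧
      ∫ t in Ioi (0 : ℝ), t ^ (a - 1) * Real.exp (-(r * t)) = r ^ (-a) * Real.Gamma a := by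
  have h := Real.integral_rpow_mul_exp_neg_mul_Ioi ha hr
  have e : (1 / r) ^ a = r ^ (-a) := by
    rw [one_div, Real.inv_rpow hr.le, Real.rpow_neg hr.le]
  rw [e] at h
  refine ⟨Integrable.of_integral_ne_zero ?_, h⟩
  rw [h]
  exact ne_of_gt (mul_pos (Real.rpow_pos_of_pos hr _) (Real.Gamma_pos_of_pos ha))

/-- Beta integral of the second kind. -/
lemma beta_integral {ν k A B : ℝ} (hν : 0 < ν) (hk : ν < k) (hA : 0 < A) (hB : 0 < B) :
    IntegrableOn (fun z : ℝ => z ^ (ν - 1) * (A + B * z) ^ (-k)) (Ioi 0) ∧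
      ∫ z in Ioi (0 : ℝ), z ^ (ν - 1) * (A + B * z) ^ (-k)
        = A ^ (-(k - ν)) * B ^ (-ν) * betaFun ν (k - ν) := by
  set f : ℝ × ℝ → ℝ := fun p =>
    p.1 ^ (k - 1) * Real.exp (-(A * p.1)) * (p.2 ^ (ν - 1) * Real.exp (-(B * p.1 * p.2))) with hf
  have hm : Measurable f := by fun_prop
  have hkν : 0 < k - ν := by linarith
  have hk0 : 0 < k := by linarith
  obtain ⟨g1, g2⟩ := gamma_integral hkν hA
  have inner : ∀ t ∈ Ioi (0 : ℝ), Integrable (fun z => f (t, z)) (volume.restrict (Ioi 0)) ∧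
      ∫ z in Ioi (0 : ℝ), f (t, z)
        = B ^ (-ν) * Real.Gamma ν * (t ^ (k - ν - 1) * Real.exp (-(A * t))) := by
    intro t ht
    have ht0 : 0 < t := ht
    obtain ⟨a1, a2⟩ := gamma_integral hν (mul_pos hB ht0)
    refine ⟨a1.const_mul (t ^ (k - 1) * Real.exp (-(A * t))), ?_⟩
    simp only [hf]
    rw [integral_const_mul, a2, Real.mul_rpow hB.le ht0.le]
    have : t ^ (k - ν - 1) = t ^ (k - 1) * t ^ (-ν) := by
      rw [← Real.rpow_add ht0]; congr 1; ring
    rw [this]; ring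
  have hInt : Integrable f ((volume.restrict (Ioi (0 : ℝ))).prod (volume.restrict (Ioi (0 : ℝ)))) := by
    refine integrable_prod_of_nonneg hm
      (g := fun t => B ^ (-ν) * Real.Gamma ν * (t ^ (k - ν - 1) * Real.exp (-(A * t)))) ?_
      (g1.const_mul _)
    refine (ae_restrict_mem measurableSet_Ioi).mono fun t ht => ⟨?_, inner t ht⟩
    refine (ae_restrict_mem measurableSet_Ioi).mono fun z hz => ?_
    have ht0 : 0 < t := ht
    have hz0 : 0 < z := hz
    simp only [hf]; positivity
  have outer : ∀ z ∈ Ioi (0 : ℝ), ∫ t in Ioi (0 : ℝ), f (t, z)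
      = Real.Gamma k * (z ^ (ν - 1) * (A + B * z) ^ (-k)) := by
    intro z hz
    have hz0 : 0 < z := hz
    obtain ⟨a1, a2⟩ := gamma_integral hk0 (show 0 < A + B * z by positivity)
    have : ∀ t : ℝ, f (t, z) = z ^ (ν - 1) * (t ^ (k - 1) * Real.exp (-((A + B * z) * t))) := by
      intro t
      have : Real.exp (-((A + B * z) * t)) = Real.exp (-(A * t)) * Real.exp (-(B * t * z)) := by
        rw [← Real.exp_add]; congr 1; ring
      simp only [hf]; rw [this]; ring
    simp only [this]
    rw [integral_const_mul, a2]; ring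
  have hΓ : Real.Gamma k ≠ 0 := (Real.Gamma_pos_of_pos hk0).ne'
  constructor
  · have h1 := hInt.integral_prod_right
    have h2 : IntegrableOn (fun z : ℝ => Real.Gamma k * (z ^ (ν - 1) * (A + B * z) ^ (-k))) (Ioi 0) :=
      h1.congr ((ae_restrict_mem measurableSet_Ioi).mono outer)
    refine (h2.const_mul (Real.Gamma k)⁻¹).congr (Filter.Eventually.of_forall fun z => ?_)
    simp only
    field_simp
  · have h1 := integral_integral_swap (f := fun t z => f (t, z)) hInt
    rw [setIntegral_congr_fun measurableSet_Ioi (fun t ht => (inner t ht).2),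
      setIntegral_congr_fun measurableSet_Ioi outer, integral_const_mul, integral_const_mul, g2] at h1
    unfold betaFun
    rw [show ν + (k - ν) = k by ring]
    field_simp
    linarith

lemma gauss_integral (d : ℕ) {b : ℝ} (hb : 0 < b) (m : Euc d) :
    Integrable (fun μ : Euc d => Real.exp (-(b * ‖μ - m‖ ^ 2))) ∧
      ∫ μ : Euc d, Real.exp (-(b * ‖μ - m‖ ^ 2)) = (Real.pi / b) ^ ((d : ℝ) / 2) := by
  have h : ∫ μ : Euc d, Real.exp (-(b * ‖μ - m‖ ^ 2)) = (Real.pi / b) ^ ((d : ℝ) / 2) := by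
    have h1 := GaussianFourier.integral_rexp_neg_mul_sq_norm (V := Euc d) hb
    rw [finrank_euclideanSpace, Fintype.card_fin] at h1
    rw [← h1, integral_sub_right_eq_self (fun μ : Euc d => Real.exp (-(b * ‖μ‖ ^ 2))) m]
    simp only [neg_mul]
  refine ⟨Integrable.of_integral_ne_zero ?_, h⟩
  rw [h]
  have := Real.pi_pos
  positivity

lemma complete_square {d : ℕ} {N z : ℝ} (h : 0 < N + z) (μ m : Euc d) :
    N * ‖μ - m‖ ^ 2 + z * ‖μ‖ ^ 2
      = (N + z) * ‖μ - (N / (N + z)) • m‖ ^ 2 + N * z / (N + z) * ‖m‖ ^ 2 := by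
  rw [norm_sub_sq_real, norm_sub_sq_real, norm_smul, inner_smul_right, mul_pow, Real.norm_eq_abs, sq_abs]
  field_simp
  ring

/-- Tonelli for the triple integral over `(η, μ, z)`: it may be computed in the order `μ`, `η`, `z`. -/
lemma iterated_integral_swap {d : ℕ} {H : ℝ → Euc d → ℝ → ℝ} {S : ℝ → ℝ → ℝ} {R : ℝ → ℝ}
    (hm : Measurable fun p : ℝ × ℝ × Euc d => H p.2.1 p.2.2 p.1)
    (h0 : ∀ z ∈ Ioi (0 : ℝ), ∀ η ∈ Ioi (0 : ℝ), ∀ μ, 0 ≤ H η μ z)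
    (h1 : ∀ z ∈ Ioi (0 : ℝ), ∀ η ∈ Ioi (0 : ℝ),
      Integrable (fun μ => H η μ z) ∧ ∫ μ, H η μ z = S z η)
    (h2 : ∀ z ∈ Ioi (0 : ℝ), IntegrableOn (S z) (Ioi 0) ∧ ∫ η in Ioi (0 : ℝ), S z η = R z)
    (hR : IntegrableOn R (Ioi 0)) :
    ∫ η in Ioi (0 : ℝ), ∫ μ, ∫ z in Ioi (0 : ℝ), H η μ z = ∫ z in Ioi (0 : ℝ), R z := by
  have i1 : ∀ z ∈ Ioi (0 : ℝ), Integrable (fun p : ℝ × Euc d => H p.1 p.2 z)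
      ((volume.restrict (Ioi (0 : ℝ))).prod volume) := by
    intro z hz
    refine integrable_prod_of_nonneg (g := S z) (hm.comp (by fun_prop : Measurable fun p : ℝ × Euc d => (z, p.1, p.2))) ?_
      (h2 z hz).1
    exact (ae_restrict_mem measurableSet_Ioi).mono fun η hη =>
      ⟨Filter.Eventually.of_forall fun μ => h0 z hz η hη μ, h1 z hz η hη⟩
  have v1 : ∀ z ∈ Ioi (0 : ℝ), ∫ p : ℝ × Euc d, H p.1 p.2 z
      ∂((volume.restrict (Ioi (0 : ℝ))).prod volume) = R z := by
    intro z hz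
    rw [integral_prod _ (i1 z hz), ← (h2 z hz).2]
    exact setIntegral_congr_fun measurableSet_Ioi fun η hη => (h1 z hz η hη).2
  have i2 : Integrable (fun p : ℝ × ℝ × Euc d => H p.2.1 p.2.2 p.1)
      ((volume.restrict (Ioi (0 : ℝ))).prod ((volume.restrict (Ioi (0 : ℝ))).prod volume)) := by
    refine integrable_prod_of_nonneg (g := R) hm ?_ hR
    refine (ae_restrict_mem measurableSet_Ioi).mono fun z hz => ⟨?_, i1 z hz, v1 z hz⟩
    have : ∀ᵐ p : ℝ × Euc d ∂((volume.restrict (Ioi (0 : ℝ))).prod volume), p.1 ∈ Ioi (0 : ℝ) :=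
      Measure.quasiMeasurePreserving_fst.ae (ae_restrict_mem measurableSet_Ioi)
    exact this.mono fun p hp => h0 z hz p.1 hp p.2
  have sw := integral_integral_swap (f := fun z (p : ℝ × Euc d) => H p.1 p.2 z) i2
  rw [setIntegral_congr_fun measurableSet_Ioi v1] at sw
  rw [sw, integral_prod _ i2.integral_prod_right]

/-- The unnormalised marginal density of a sample of size `N` with mean `m` and residual sum of
squares `v`, under the mixture prior with mixing weight `ω`. -/
def Mint (d : ℕ) (ν N : ℝ) (ω : ℝ → ℝ) (m : Euc d) (v : ℝ) : ℝ :=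
  ∫ η in Ioi (0 : ℝ), ∫ μ : Euc d, ∫ z in Ioi (0 : ℝ),
    η ^ (N * d / 2 + ν - 1) * Real.exp (-(η / 2 * (v + N * ‖μ - m‖ ^ 2 + z * ‖μ‖ ^ 2))) *
      (z ^ (ν - 1) * ω z)

/-- Integrating out `μ` (Gaussian) and then `η` (gamma) leaves an integral over the mixing variable. -/
lemma Mint_eq {d : ℕ} {ν N v : ℝ} {ω : ℝ → ℝ} {m : Euc d} (hν : 0 < ν) (hN : 1 ≤ N) (hv : 0 < v)
    (hω : Measurable ω) (hω0 : ∀ z, 0 < z → 0 ≤ ω z)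
    (hInt : IntegrableOn (fun z => z ^ (ν - 1) * (ω z * (1 + z / N) ^ ((N - 1) * d / 2 + ν - d / 2)) *
      (v + (v + N * ‖m‖ ^ 2) / N * z) ^ (-((N - 1) * d / 2 + ν))) (Ioi 0)) :
    Mint d ν N ω m v = (2 * Real.pi / N) ^ ((d : ℝ) / 2) * Real.Gamma ((N - 1) * d / 2 + ν) *
      2 ^ ((N - 1) * d / 2 + ν) *
      ∫ z in Ioi (0 : ℝ), z ^ (ν - 1) * (ω z * (1 + z / N) ^ ((N - 1) * d / 2 + ν - d / 2)) *
      (v + (v + N * ‖m‖ ^ 2) / N * z) ^ (-((N - 1) * d / 2 + ν)) := by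
  set k := (N - 1) * d / 2 + ν with hk
  have hk0 : 0 < k := by
    have : 0 ≤ (N - 1) * d / 2 := by
      have : 0 ≤ N - 1 := by linarith
      positivity
    linarith
  have hN0 : 0 < N := by linarith
  have hπ := Real.pi_pos
  set V : ℝ → ℝ := fun z => v + N * z / (N + z) * ‖m‖ ^ 2 with hV
  rw [← integral_const_mul]
  unfold Mint
  refine iterated_integral_swap
    (S := fun z η => z ^ (ν - 1) * ω z * (2 * Real.pi / (N + z)) ^ ((d : ℝ) / 2) *
      (η ^ (k - 1) * Real.exp (-(V z / 2 * η)))) ?_ ?_ ?_ ?_ (hInt.const_mul _)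
  · fun_prop
  · intro z hz η hη μ
    have hz0 : 0 < z := hz
    have hη0 : 0 < η := hη
    have := hω0 z hz0
    positivity
  · intro z hz η hη
    have hz0 : 0 < z := hz
    have hη0 : 0 < η := hη
    have hNz : 0 < N + z := by positivity
    obtain ⟨a1, a2⟩ := gauss_integral d (show 0 < η / 2 * (N + z) by positivity) ((N / (N + z)) • m)
    have e : ∀ μ : Euc d, η ^ (N * d / 2 + ν - 1) *
        Real.exp (-(η / 2 * (v + N * ‖μ - m‖ ^ 2 + z * ‖μ‖ ^ 2))) * (z ^ (ν - 1) * ω z)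
        = η ^ (N * d / 2 + ν - 1) * Real.exp (-(V z / 2 * η)) * (z ^ (ν - 1) * ω z) *
          Real.exp (-(η / 2 * (N + z) * ‖μ - (N / (N + z)) • m‖ ^ 2)) := by
      intro μ
      have : Real.exp (-(η / 2 * (v + N * ‖μ - m‖ ^ 2 + z * ‖μ‖ ^ 2)))
          = Real.exp (-(V z / 2 * η)) *
            Real.exp (-(η / 2 * (N + z) * ‖μ - (N / (N + z)) • m‖ ^ 2)) := by
        rw [← Real.exp_add, add_assoc, complete_square hNz]; congr 1; simp only [hV]; ring
      rw [this]; ring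
    simp only [e]
    refine ⟨a1.const_mul _, ?_⟩
    rw [integral_const_mul, a2]
    have e2 : Real.pi / (η / 2 * (N + z)) = 2 * Real.pi / (N + z) * η⁻¹ := by field_simp
    have e3 : η ^ (N * d / 2 + ν - 1) * (η⁻¹) ^ ((d : ℝ) / 2) = η ^ (k - 1) := by
      rw [Real.inv_rpow hη0.le, ← Real.rpow_neg hη0.le, ← Real.rpow_add hη0]
      congr 1; rw [hk]; ring
    rw [e2, Real.mul_rpow (by positivity) (by positivity), ← e3]
    ring
  · intro z hz
    have hz0 : 0 < z := hz
    have hVz : 0 < V z := by simp only [hV]; positivity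
    obtain ⟨a1, a2⟩ := gamma_integral hk0 (show 0 < V z / 2 by positivity)
    refine ⟨a1.const_mul _, ?_⟩
    rw [integral_const_mul, a2]
    have hNz : 0 < 1 + z / N := by positivity
    have hW : 0 < v + (v + N * ‖m‖ ^ 2) / N * z := by positivity
    have eV : V z / 2 = (v + (v + N * ‖m‖ ^ 2) / N * z) * (1 + z / N)⁻¹ * 2⁻¹ := by
      simp only [hV]; field_simp; ring
    have e1 : 2 * Real.pi / (N + z) = 2 * Real.pi / N * (1 + z / N)⁻¹ := by field_simp
    have e4 : (1 + z / N) ^ (k - d / 2) = (1 + z / N) ^ k * (1 + z / N) ^ (-((d : ℝ) / 2)) := by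
      rw [← Real.rpow_add hNz]; rfl
    rw [eV, e1, Real.mul_rpow (by positivity) (by positivity),
      Real.mul_rpow (by positivity) (by positivity), Real.mul_rpow (by positivity) (by positivity),
      Real.inv_rpow hNz.le, ← Real.rpow_neg hNz.le, Real.inv_rpow hNz.le, ← Real.rpow_neg hNz.le,
      Real.inv_rpow (by norm_num), ← Real.rpow_neg (by norm_num), neg_neg, e4]
    ring

/-! ### The mixture prior and its predictive density -/

/-- The mixing weight of the prior in the variable `z = λ/(1-λ)`. -/
def omegaW (d n : ℕ) (ν z : ℝ) : ℝ := (1 + z / n) ^ (-(((n : ℝ) - 2) * d / 2 + ν))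

lemma image_div_one_add : (fun z : ℝ => z / (1 + z)) '' Ioi 0 = Ioo 0 1 := by
  ext l
  simp only [mem_image, mem_Ioi, mem_Ioo]
  constructor
  · rintro ⟨z, hz, rfl⟩
    exact ⟨by positivity, by rw [div_lt_one (by positivity)]; linarith⟩
  · rintro ⟨h0, h1⟩
    have : 0 < 1 - l := by linarith
    refine ⟨l / (1 - l), by positivity, ?_⟩
    field_simp
    ring

lemma injOn_div_one_add : InjOn (fun z : ℝ => z / (1 + z)) (Ioi 0) := by
  intro x hx y hy h
  have hx0 : 0 < x := hx
  have hy0 : 0 < y := hy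
  simp only at h
  rw [div_eq_div_iff (by positivity) (by positivity)] at h
  linarith

lemma hasDerivAt_div_one_add {z : ℝ} (hz : 0 < z) :
    HasDerivAt (fun z : ℝ => z / (1 + z)) (1 / (1 + z) ^ 2) z := by
  have d1 : HasDerivAt (fun z : ℝ => 1 + z) 1 z := by simpa using (hasDerivAt_id z).const_add 1
  refine ((hasDerivAt_id z).fun_div d1 (by positivity)).congr_deriv ?_
  simp

/-- The substitution `λ = z / (1 + z)` in the mixture prior. -/
lemma gmPrior_eq {d n : ℕ} {ν η : ℝ} (hn : 2 ≤ n) (hη : 0 < η) (μ : Euc d) :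
    gmPrior d ν (qLow d n ν) μ η = (2 * Real.pi) ^ (-(d : ℝ) / 2) *
      ∫ z in Ioi (0 : ℝ), η ^ (ν - 1) * Real.exp (-(η / 2 * (z * ‖μ‖ ^ 2))) *
        (z ^ (ν - 1) * omegaW d n ν z) := by
  have hn' : (2 : ℝ) ≤ n := by exact_mod_cast hn
  have hπ := Real.pi_pos
  unfold gmPrior
  rw [← image_div_one_add, integral_image_eq_integral_abs_deriv_smul measurableSet_Ioi
    (fun z hz => (hasDerivAt_div_one_add hz).hasDerivWithinAt) injOn_div_one_add,
    ← integral_const_mul]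
  refine setIntegral_congr_fun measurableSet_Ioi fun z hz => ?_
  have hz0 : 0 < z := hz
  have h1z : 0 < 1 + z := by linarith
  have hnz : 0 < 1 + z / n := by positivity
  simp only [smul_eq_mul, qLow, gaussPdf, omegaW]
  have e1 : η⁻¹ * (z / (1 + z))⁻¹ * (1 - z / (1 + z)) = (η * z)⁻¹ := by field_simp; ring
  have e2 : 1 - z / (1 + z) = (1 + z)⁻¹ := by field_simp; ring
  have e3 : 1 - ((n : ℝ) - 1) * (z / (1 + z)) / n = (1 + z / n) * (1 + z)⁻¹ := by field_simp; ring
  rw [e1, e2, e3, sub_zero, abs_of_pos (by positivity)]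
  have e4 : (2 * Real.pi * (η * z)⁻¹) ^ (-(d : ℝ) / 2)
      = (2 * Real.pi) ^ (-(d : ℝ) / 2) * (η ^ ((d : ℝ) / 2) * z ^ ((d : ℝ) / 2)) := by
    rw [Real.mul_rpow (by positivity) (by positivity), Real.inv_rpow (by positivity),
      ← Real.rpow_neg (by positivity), Real.mul_rpow hη.le hz0.le]
    congr 3 <;> ring
  have e5 : Real.exp (-‖μ‖ ^ 2 / (2 * (η * z)⁻¹)) = Real.exp (-(η / 2 * (z * ‖μ‖ ^ 2))) := by
    congr 1; field_simp
  have e6 : (z / (1 + z)) ^ (ν - (d : ℝ) / 2 - 1)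
      = z ^ (ν - (d : ℝ) / 2 - 1) * (1 + z) ^ (-(ν - (d : ℝ) / 2 - 1)) := by
    rw [Real.div_rpow hz0.le h1z.le, Real.rpow_neg h1z.le]; rfl
  have e7 : ((1 + z)⁻¹) ^ (((n : ℝ) - 1) * d / 2 - 1) = (1 + z) ^ (-(((n : ℝ) - 1) * d / 2 - 1)) := by
    rw [Real.inv_rpow h1z.le, Real.rpow_neg h1z.le]
  have e8 : ((1 + z / n) * (1 + z)⁻¹) ^ (-(((n : ℝ) - 2) * d / 2) - ν)
      = (1 + z / n) ^ (-(((n : ℝ) - 2) * d / 2 + ν)) * (1 + z) ^ (((n : ℝ) - 2) * d / 2 + ν) := by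
    rw [Real.mul_rpow hnz.le (by positivity), Real.inv_rpow h1z.le, ← Real.rpow_neg h1z.le]
    congr 2 <;> ring
  have e9 : 1 / (1 + z) ^ 2 = (1 + z) ^ (-2 : ℝ) := by
    rw [Real.rpow_neg h1z.le, one_div]; norm_cast
  have e10 : (1 + z) ^ (-2 : ℝ) * (1 + z) ^ (-(ν - (d : ℝ) / 2 - 1)) *
      (1 + z) ^ (-(((n : ℝ) - 1) * d / 2 - 1)) * (1 + z) ^ (((n : ℝ) - 2) * d / 2 + ν) = 1 := by
    rw [← Real.rpow_add h1z, ← Real.rpow_add h1z, ← Real.rpow_add h1z]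
    convert Real.rpow_zero _ using 2
    ring
  have e11 : η ^ ((d : ℝ) / 2) * η ^ (ν - (d : ℝ) / 2 - 1) = η ^ (ν - 1) := by
    rw [← Real.rpow_add hη]; congr 1; ring
  have e12 : z ^ ((d : ℝ) / 2) * z ^ (ν - (d : ℝ) / 2 - 1) = z ^ (ν - 1) := by
    rw [← Real.rpow_add hz0]; congr 1; ring
  rw [e4, e5, e6, e7, e8, e9, ← e11, ← e12]
  set P := (2 * Real.pi) ^ (-(d : ℝ) / 2)
  set X := Real.exp (-(η / 2 * (z * ‖μ‖ ^ 2)))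
  set W := (1 + z / n) ^ (-(((n : ℝ) - 2) * d / 2 + ν))
  set a1 := η ^ ((d : ℝ) / 2)
  set a2 := η ^ (ν - (d : ℝ) / 2 - 1)
  set b1 := z ^ ((d : ℝ) / 2)
  set b2 := z ^ (ν - (d : ℝ) / 2 - 1)
  linear_combination (P * X * W * a1 * a2 * b1 * b2) * e10

/-- Common prefactor of numerator and denominator of the Bayesian predictive density. -/
def preC (d n : ℕ) (s : ℝ) : ℝ :=
  (2 * Real.pi) ^ (-(d : ℝ) / 2) * (2 * Real.pi / n) ^ (-(d : ℝ) / 2) *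
    (s ^ (((n : ℝ) - 1) * d / 2 - 1) / (2 ^ (((n : ℝ) - 1) * d / 2) *
      Real.Gamma (((n : ℝ) - 1) * d / 2)))

lemma chi_prefactor {d n : ℕ} {η s : ℝ} (hη : 0 < η) (hs : 0 < s) :
    η * chiSqPdf (((n : ℝ) - 1) * d) (η * s)
      = η ^ (((n : ℝ) - 1) * d / 2) * (s ^ (((n : ℝ) - 1) * d / 2 - 1) /
        (2 ^ (((n : ℝ) - 1) * d / 2) * Real.Gamma (((n : ℝ) - 1) * d / 2))) *
        Real.exp (-(η / 2 * s)) := by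
  unfold chiSqPdf
  have : η ^ (((n : ℝ) - 1) * d / 2) = η * η ^ (((n : ℝ) - 1) * d / 2 - 1) := by
    rw [Real.rpow_sub_one hη.ne']; field_simp
  rw [Real.mul_rpow hη.le hs.le, this]
  have : -(η * s) / 2 = -(η / 2 * s) := by ring
  rw [this]; ring

lemma gauss_prefactor {d : ℕ} {η N : ℝ} (hη : 0 < η) (hN : 0 < N) (x μ : Euc d) :
    gaussPdf d x μ ((N * η)⁻¹) = (2 * Real.pi / N) ^ (-(d : ℝ) / 2) * η ^ ((d : ℝ) / 2) *
      Real.exp (-(η / 2 * (N * ‖μ - x‖ ^ 2))) := by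
  have hπ := Real.pi_pos
  unfold gaussPdf
  have e1 : 2 * Real.pi * (N * η)⁻¹ = 2 * Real.pi / N * η⁻¹ := by field_simp
  rw [e1, Real.mul_rpow (by positivity) (by positivity), Real.inv_rpow hη.le, ← Real.rpow_neg hη.le,
    norm_sub_rev]
  congr 2
  · congr 1; ring
  · field_simp

lemma bayesPredDen_eq {d n : ℕ} {ν s : ℝ} (hn : 2 ≤ n) (hs : 0 < s) (x : Euc d) :
    bayesPredDen d n (gmPrior d ν (qLow d n ν)) x s
      = preC d n s * Mint d ν n (omegaW d n ν) x s := by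
  have hn0 : (0 : ℝ) < n := by exact_mod_cast (show 0 < n by omega)
  unfold bayesPredDen Mint
  rw [← integral_const_mul]
  refine setIntegral_congr_fun measurableSet_Ioi fun η hη => ?_
  have hη0 : 0 < η := hη
  rw [← integral_const_mul]
  congr 1
  funext μ
  rw [gmPrior_eq hn hη0, ← integral_const_mul, mul_assoc _ η, chi_prefactor hη0 hs,
    gauss_prefactor hη0 hn0, ← integral_const_mul, ← integral_const_mul]
  congr 1
  funext z
  unfold preC
  have e1 : η ^ ((n : ℝ) * d / 2 + ν - 1)
      = η ^ ((d : ℝ) / 2) * η ^ (((n : ℝ) - 1) * d / 2) * η ^ (ν - 1) := by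
    rw [← Real.rpow_add hη0, ← Real.rpow_add hη0]; congr 1; ring
  have e2 : Real.exp (-(η / 2 * (s + n * ‖μ - x‖ ^ 2 + z * ‖μ‖ ^ 2)))
      = Real.exp (-(η / 2 * (n * ‖μ - x‖ ^ 2))) * Real.exp (-(η / 2 * s)) *
        Real.exp (-(η / 2 * (z * ‖μ‖ ^ 2))) := by
    rw [← Real.exp_add, ← Real.exp_add]; congr 1; ring
  rw [e1, e2]; ring

/-- Sum-of-squares decomposition for the enlarged sample. -/
lemma newMean_square {d n : ℕ} (x y μ : Euc d) (s : ℝ) :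
    1 * ‖μ - y‖ ^ 2 + n * ‖μ - x‖ ^ 2 + s
      = newS n x y s + ((n : ℝ) + 1) * ‖μ - newMean n x y‖ ^ 2 := by
  have hn1 : (n : ℝ) + 1 ≠ 0 := by positivity
  unfold newS newMean
  simp only [← real_inner_self_eq_norm_sq, inner_sub_left, inner_sub_right, inner_add_left,
    inner_add_right, inner_smul_left, inner_smul_right, real_inner_comm μ x, real_inner_comm μ y,
    real_inner_comm y x, conj_trivial]
  field_simp
  ring

lemma newMean_total {d n : ℕ} (x y : Euc d) (s : ℝ) :
    newS n x y s + ((n : ℝ) + 1) * ‖newMean n x y‖ ^ 2 = s + n * ‖x‖ ^ 2 + ‖y‖ ^ 2 := by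
  have := newMean_square (n := n) x y 0 s
  simp only [zero_sub, norm_neg] at this
  linarith

/-- The numerator is a marginal density for the enlarged sample of size `n + 1`. -/
lemma bayesPredNum_eq {d n : ℕ} {ν s : ℝ} (hn : 2 ≤ n) (hs : 0 < s) (x y : Euc d) :
    bayesPredNum d n (gmPrior d ν (qLow d n ν)) y x s
      = (2 * Real.pi) ^ (-(d : ℝ) / 2) * preC d n s *
        Mint d ν ((n : ℝ) + 1) (omegaW d n ν) (newMean n x y) (newS n x y s) := by
  have hn0 : (0 : ℝ) < n := by exact_mod_cast (show 0 < n by omega)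
  unfold bayesPredNum Mint
  rw [← integral_const_mul]
  refine setIntegral_congr_fun measurableSet_Ioi fun η hη => ?_
  have hη0 : 0 < η := hη
  rw [← integral_const_mul]
  congr 1
  funext μ
  have g1 := gauss_prefactor hη0 one_pos y μ
  rw [one_mul, div_one] at g1
  rw [gmPrior_eq hn hη0, ← integral_const_mul, mul_assoc _ η, chi_prefactor hη0 hs,
    gauss_prefactor hη0 hn0, g1, ← integral_const_mul, ← integral_const_mul]
  congr 1
  funext z
  unfold preC
  have e1 : η ^ (((n : ℝ) + 1) * d / 2 + ν - 1)
      = η ^ ((d : ℝ) / 2) * η ^ ((d : ℝ) / 2) * η ^ (((n : ℝ) - 1) * d / 2) * η ^ (ν - 1) := by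
    rw [← Real.rpow_add hη0, ← Real.rpow_add hη0, ← Real.rpow_add hη0]; congr 1; ring
  have e2 : Real.exp (-(η / 2 * (newS n x y s + ((n : ℝ) + 1) * ‖μ - newMean n x y‖ ^ 2 + z * ‖μ‖ ^ 2)))
      = Real.exp (-(η / 2 * (1 * ‖μ - y‖ ^ 2))) * Real.exp (-(η / 2 * (n * ‖μ - x‖ ^ 2))) *
        Real.exp (-(η / 2 * s)) * Real.exp (-(η / 2 * (z * ‖μ‖ ^ 2))) := by
    rw [← newMean_square, ← Real.exp_add, ← Real.exp_add, ← Real.exp_add]; congr 1; ring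
  rw [e1, e2]; ring

/-! ### The lower bound through `g` -/

/-- The factor multiplying `z ^ (ν - 1) (A + B z) ^ (-(n d/2 + ν))` in the mixture integral for sample
size `n + 1`. -/
def PhiW (d n : ℕ) (ν z : ℝ) : ℝ :=
  omegaW d n ν z * (1 + z / ((n : ℝ) + 1)) ^ ((n : ℝ) * d / 2 + ν - d / 2)

lemma PhiW_le {d n : ℕ} {ν z : ℝ} (hn : 2 ≤ n) (hν : 0 < ν) (hz : 0 < z) :
    PhiW d n ν z ≤ (1 + z / ((n : ℝ) + 1)) ^ ((d : ℝ) / 2) := by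
  have hn' : (2 : ℝ) ≤ n := by exact_mod_cast hn
  have hα : 0 < 1 + z / ((n : ℝ) + 1) := by positivity
  have hγα : 1 + z / ((n : ℝ) + 1) ≤ 1 + z / n := by gcongr; linarith
  have he : 0 ≤ ((n : ℝ) - 2) * d / 2 + ν := by
    have : 0 ≤ (n : ℝ) - 2 := by linarith
    positivity
  unfold PhiW omegaW
  calc _ ≤ (1 + z / ((n : ℝ) + 1)) ^ (-(((n : ℝ) - 2) * d / 2 + ν)) *
        (1 + z / ((n : ℝ) + 1)) ^ ((n : ℝ) * d / 2 + ν - d / 2) := by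
        gcongr ?_ * _
        exact Real.rpow_le_rpow_of_nonpos hα hγα (by linarith)
    _ = _ := by rw [← Real.rpow_add hα]; congr 1; ring

/-- Weighted AM-GM bounds `PhiW` from below by a single power. -/
lemma le_PhiW {d n : ℕ} {ν z : ℝ} (hn : 2 ≤ n) (hν : 0 < ν) (hz : 0 < z) :
    (1 + z / ((n : ℝ) + 1)) ^ (((d : ℝ) - ν) / n) ≤ PhiW d n ν z := by
  have hn' : (2 : ℝ) ≤ n := by exact_mod_cast hn
  have hn0 : (0 : ℝ) < n := by linarith
  have hα : 0 < 1 + z / ((n : ℝ) + 1) := by positivity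
  have hγ : 0 < 1 + z / (n : ℝ) := by positivity
  have he : 0 ≤ ((n : ℝ) - 2) * d / 2 + ν := by
    have : 0 ≤ (n : ℝ) - 2 := by linarith
    positivity
  -- weighted AM-GM for `1 + z/n` and `1`
  have key : (1 + z / (n : ℝ)) ^ ((n : ℝ) / (n + 1)) ≤ 1 + z / ((n : ℝ) + 1) := by
    have := Real.geom_mean_le_arith_mean2_weighted (w₁ := (n : ℝ) / (n + 1)) (w₂ := 1 / ((n : ℝ) + 1))
      (p₁ := 1 + z / n) (p₂ := 1) (by positivity) (by positivity) hγ.le zero_le_one (by field_simp)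
    rw [Real.one_rpow, mul_one] at this
    refine this.trans_eq ?_
    field_simp
    ring
  have key2 : 1 + z / (n : ℝ) ≤ (1 + z / ((n : ℝ) + 1)) ^ (((n : ℝ) + 1) / n) := by
    have h := Real.rpow_le_rpow (by positivity) key (show 0 ≤ ((n : ℝ) + 1) / n by positivity)
    rwa [← Real.rpow_mul hγ.le, show (n : ℝ) / (n + 1) * (((n : ℝ) + 1) / n) = 1 by field_simp,
      Real.rpow_one] at h
  unfold PhiW omegaW
  calc (1 + z / ((n : ℝ) + 1)) ^ (((d : ℝ) - ν) / n)
      = ((1 + z / ((n : ℝ) + 1)) ^ (((n : ℝ) + 1) / n)) ^ (-(((n : ℝ) - 2) * d / 2 + ν)) *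
        (1 + z / ((n : ℝ) + 1)) ^ ((n : ℝ) * d / 2 + ν - d / 2) := by
        rw [← Real.rpow_mul hα.le, ← Real.rpow_add hα]; congr 1; field_simp; ring
    _ ≤ _ := by
        gcongr ?_ * _
        exact Real.rpow_le_rpow_of_nonpos hγ key2 (by linarith)

lemma measurable_omegaW (d n : ℕ) (ν : ℝ) : Measurable (omegaW d n ν) := by
  unfold omegaW; fun_prop

lemma omegaW_pos {d n : ℕ} {ν z : ℝ} (hz : 0 < z) : 0 < omegaW d n ν z := by
  unfold omegaW; positivity

lemma measurable_PhiW (d n : ℕ) (ν : ℝ) : Measurable (PhiW d n ν) := by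
  unfold PhiW omegaW; fun_prop

lemma PhiW_pos {d n : ℕ} {ν z : ℝ} (hz : 0 < z) : 0 < PhiW d n ν z := by
  unfold PhiW omegaW; positivity

/-- Beta integral with an additional power of `1 + B z / A`. -/
lemma beta_integral_tilt {ν k e A B : ℝ} (hν : 0 < ν) (hk : ν < k - e) (hA : 0 < A) (hB : 0 < B) :
    IntegrableOn (fun z : ℝ => z ^ (ν - 1) * (1 + B / A * z) ^ e * (A + B * z) ^ (-k)) (Ioi 0) ∧
      ∫ z in Ioi (0 : ℝ), z ^ (ν - 1) * (1 + B / A * z) ^ e * (A + B * z) ^ (-k)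
        = A ^ (-(k - ν)) * B ^ (-ν) * betaFun ν (k - e - ν) := by
  obtain ⟨h1, h2⟩ := beta_integral hν hk hA hB
  have e1 : ∀ z ∈ Ioi (0 : ℝ), z ^ (ν - 1) * (1 + B / A * z) ^ e * (A + B * z) ^ (-k)
      = A ^ (-e) * (z ^ (ν - 1) * (A + B * z) ^ (-(k - e))) := by
    intro z hz
    have hz0 : 0 < z := hz
    have hp : 0 < A + B * z := by positivity
    have : 1 + B / A * z = (A + B * z) * A⁻¹ := by field_simp
    rw [this, Real.mul_rpow hp.le (by positivity), Real.inv_rpow hA.le, ← Real.rpow_neg hA.le,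
      show -(k - e) = e + -k by ring, Real.rpow_add hp]
    ring
  constructor
  · exact (h1.const_mul (A ^ (-e))).congr
      ((ae_restrict_mem measurableSet_Ioi).mono fun z hz => (e1 z hz).symm)
  · rw [setIntegral_congr_fun measurableSet_Ioi e1, integral_const_mul, h2, ← mul_assoc, ← mul_assoc,
      ← Real.rpow_add hA]
    congr 3
    ring

lemma betaFun_pos {a b : ℝ} (ha : 0 < a) (hb : 0 < b) : 0 < betaFun a b := by
  unfold betaFun
  have := Real.Gamma_pos_of_pos ha
  have := Real.Gamma_pos_of_pos hb
  have := Real.Gamma_pos_of_pos (add_pos ha hb)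
  positivity

lemma PhiW_integrable {d n : ℕ} {ν A B : ℝ} (hd : 1 ≤ d) (hn : 2 ≤ n) (hν : 0 < ν) (hA : 0 < A)
    (hAB : A ≤ ((n : ℝ) + 1) * B) :
    IntegrableOn (fun z => z ^ (ν - 1) * PhiW d n ν z * (A + B * z) ^ (-((n : ℝ) * d / 2 + ν)))
      (Ioi 0) := by
  have hn' : (2 : ℝ) ≤ n := by exact_mod_cast hn
  have hd' : (1 : ℝ) ≤ d := by exact_mod_cast hd
  have hB : 0 < B := by
    have : 0 < ((n : ℝ) + 1) * B := by linarith
    exact pos_of_mul_pos_right this (by positivity)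
  have h := (beta_integral_tilt (ν := ν) (k := (n : ℝ) * d / 2 + ν) (e := (d : ℝ) / 2) hν
    (by nlinarith) hA hB).1
  have hm := measurable_PhiW d n ν
  refine h.mono' (by fun_prop) ((ae_restrict_mem measurableSet_Ioi).mono fun z hz => ?_)
  have hz0 : 0 < z := hz
  have := PhiW_pos (d := d) (n := n) (ν := ν) hz0
  rw [Real.norm_of_nonneg (by positivity)]
  gcongr
  refine (PhiW_le hn hν hz0).trans ?_
  gcongr
  rw [div_mul_eq_mul_div, div_le_div_iff₀ (by positivity) hA]
  nlinarith

/-- Lower bound for the mixture integral; `A / ((n+1) B)` plays the role of `1 - u_{n+1}`. If `d ≤ n`,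
the exponent `c = (d-ν)/n` is at most one: concavity of `r ↦ r ^ c` and AM-GM give the Beta-function
form of `g`. If `d ≥ n + 1`, then `c ≥ 1` and Jensen's inequality gives the logarithmic form. -/
lemma gFun_exp_le {d n : ℕ} {ν A B : ℝ} (hd : 1 ≤ d) (hn : 2 ≤ n) (hν : 0 < ν) (hν1 : ν < 1)
    (hA : 0 < A) (hAB : A ≤ ((n : ℝ) + 1) * B) :
    A ^ (-((n : ℝ) * d / 2)) * B ^ (-ν) * betaFun ν ((n : ℝ) * d / 2) *
      Real.exp (ν * gFun n d ν * (A / (((n : ℝ) + 1) * B))) ≤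
    ∫ z in Ioi (0 : ℝ), z ^ (ν - 1) * PhiW d n ν z * (A + B * z) ^ (-((n : ℝ) * d / 2 + ν)) := by
  have hn' : (2 : ℝ) ≤ n := by exact_mod_cast hn
  have hd' : (1 : ℝ) ≤ d := by exact_mod_cast hd
  have hB : 0 < B := by
    have : 0 < ((n : ℝ) + 1) * B := by linarith
    exact pos_of_mul_pos_right this (by positivity)
  set a := (n : ℝ) * d / 2 with ha
  have had : (d : ℝ) ≤ a := by rw [ha]; nlinarith
  set c := ((d : ℝ) - ν) / n with hc
  have hc0 : 0 < c := by rw [hc]; apply div_pos <;> linarith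
  have hcd : c < d := by
    rw [hc, div_lt_iff₀ (by linarith)]; nlinarith
  set p := A / (((n : ℝ) + 1) * B) with hp
  have hp0 : 0 < p := by positivity
  have hp1 : p ≤ 1 := by rw [hp, div_le_one (by positivity)]; exact hAB
  have hβ := betaFun_pos hν (show 0 < a by linarith)
  obtain ⟨j1, j2⟩ := beta_integral (ν := ν) (k := a + ν) hν (by linarith) hA hB
  rw [add_sub_cancel_right] at j2
  have hI := PhiW_integrable hd hn hν hA hAB
  have hα : ∀ z, 1 + z / ((n : ℝ) + 1) = 1 + p * (B / A * z) := by
    intro z; rw [hp]; field_simp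
  unfold gFun
  split_ifs with hdn
  · have hc1 : c ≤ 1 := by
      have : (d : ℝ) ≤ n := by exact_mod_cast hdn
      rw [hc, div_le_one (by linarith)]; linarith
    obtain ⟨t1, t2⟩ := beta_integral_tilt (ν := ν) (k := a + ν) (e := c) hν (by linarith) hA hB
    rw [add_sub_cancel_right, show a + ν - c - ν = a - c by ring] at t2
    have hβ2 := betaFun_pos hν (show 0 < a - c by linarith)
    set X := betaFun ν (a - c) / betaFun ν a with hX
    have hX0 : 0 < X := by positivity
    have e1 : Real.exp (ν * (1 / ν * Real.log X) * p) = X ^ p := by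
      rw [Real.rpow_def_of_pos hX0]; congr 1; field_simp
    rw [e1]
    have am : X ^ p ≤ (1 - p) + p * X := by
      have := Real.geom_mean_le_arith_mean2_weighted (w₁ := 1 - p) (w₂ := p)
        (p₁ := 1) (p₂ := X) (by linarith) hp0.le zero_le_one hX0.le (by ring)
      rwa [Real.one_rpow, one_mul, mul_one] at this
    calc _ ≤ A ^ (-a) * B ^ (-ν) * betaFun ν a * ((1 - p) + p * X) := by gcongr
      _ = ∫ z in Ioi (0 : ℝ), ((1 - p) * (z ^ (ν - 1) * (A + B * z) ^ (-(a + ν))) +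
          p * (z ^ (ν - 1) * (1 + B / A * z) ^ c * (A + B * z) ^ (-(a + ν)))) := by
          rw [integral_add (j1.const_mul _) (t1.const_mul _), integral_const_mul, integral_const_mul,
            j2, t2, hX]
          field_simp
      _ ≤ _ := by
          refine setIntegral_mono_on ((j1.const_mul _).add (t1.const_mul _)) hI measurableSet_Ioi
            fun z hz => ?_
          have hz0 : 0 < z := hz
          have hb := le_PhiW (d := d) hn hν hz0
          have cc := (Real.concaveOn_rpow hc0.le hc1).2 (show (1 : ℝ) ∈ Ici 0 by simp)
            (show 1 + B / A * z ∈ Ici 0 by rw [mem_Ici]; positivity)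
            (show 0 ≤ 1 - p by linarith) hp0.le (by ring)
          simp only [smul_eq_mul, Real.one_rpow] at cc
          rw [show (1 - p) * 1 + p * (1 + B / A * z) = 1 + z / ((n : ℝ) + 1) by rw [hα]; ring] at cc
          have := cc.trans hb
          have pos : 0 ≤ z ^ (ν - 1) * (A + B * z) ^ (-(a + ν)) := by positivity
          calc _ = z ^ (ν - 1) * (A + B * z) ^ (-(a + ν)) *
                ((1 - p) * 1 + p * (1 + B / A * z) ^ c) := by ring
            _ ≤ z ^ (ν - 1) * (A + B * z) ^ (-(a + ν)) * PhiW d n ν z := by gcongr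
            _ = _ := by ring
  · have hdn' : (n : ℝ) + 1 ≤ d := by exact_mod_cast (by omega : n + 1 ≤ d)
    have hc1 : 1 ≤ c := by rw [hc, le_div_iff₀ (by linarith)]; linarith
    have ha2 : 2 < a := by linarith
    obtain ⟨t1, t2⟩ := beta_integral (ν := ν + 1) (k := a + ν) (by linarith) (by linarith) hA hB
    rw [show a + ν - (ν + 1) = a - 1 by ring] at t2
    have hbeta : betaFun (ν + 1) (a - 1) = betaFun ν a * (ν / (a - 1)) := by
      unfold betaFun
      have g1 : Real.Gamma a = (a - 1) * Real.Gamma (a - 1) := by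
        have := Real.Gamma_add_one (show a - 1 ≠ 0 by linarith)
        rwa [sub_add_cancel] at this
      rw [Real.Gamma_add_one hν.ne', show ν + 1 + (a - 1) = ν + a by ring, g1]
      have : a - 1 ≠ 0 := by linarith
      field_simp
    set m := 1 + p * (ν / (a - 1)) with hm
    have ha1 : 0 < a - 1 := by linarith
    have hm0 : 0 < m := by positivity
    have lowm : Real.exp (ν * (1 / ((n : ℝ) * ν) * (((d : ℝ) - ν) / (a - 1)) * Real.log (1 + ν)) * p)
        ≤ m ^ c := by
      have b1 := rpow_one_add_le_one_add_mul_self (s := ν) (p := p / (a - 1)) (by linarith)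
        (by positivity) (by rw [div_le_one ha1]; linarith)
      have b2 := Real.rpow_le_rpow (by positivity) b1 hc0.le
      rw [← Real.rpow_mul (by linarith), Real.rpow_def_of_pos (by linarith)] at b2
      refine (le_of_eq ?_).trans (b2.trans_eq ?_)
      · congr 1; rw [hc]; field_simp
      · congr 1; rw [hm]; ring
    have ez : ∀ z ∈ Ioi (0 : ℝ), z ^ (ν + 1 - 1) = z ^ (ν - 1) * z := by
      intro z hz
      rw [show ν + 1 - 1 = (ν - 1) + 1 by ring, Real.rpow_add_one (ne_of_gt hz)]
    have hA1 : A ^ (-(a - 1)) = A ^ (-a) * A := by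
      rw [show -(a - 1) = -a + 1 by ring, Real.rpow_add_one hA.ne']
    have hB1 : B ^ (-(ν + 1)) = B ^ (-ν) * B⁻¹ := by
      rw [show -(ν + 1) = -ν - 1 by ring, Real.rpow_sub_one hB.ne']; rfl
    calc _ ≤ A ^ (-a) * B ^ (-ν) * betaFun ν a * m ^ c := by gcongr
      _ = ∫ z in Ioi (0 : ℝ), ((m ^ c * (1 + c * (1 / m - 1))) *
            (z ^ (ν - 1) * (A + B * z) ^ (-(a + ν))) +
          (m ^ c * c * p * (B / A) / m) * (z ^ (ν + 1 - 1) * (A + B * z) ^ (-(a + ν)))) := by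
          rw [integral_add (j1.const_mul _) (t1.const_mul _), integral_const_mul, integral_const_mul,
            j2, t2, hbeta, hA1, hB1]
          have e3 : p * (ν / (a - 1)) = m - 1 := by rw [hm]; ring
          have : m ^ c * c * p * (B / A) / m * (A ^ (-a) * A * (B ^ (-ν) * B⁻¹) *
              (betaFun ν a * (ν / (a - 1))))
              = m ^ c * c / m * (A ^ (-a) * B ^ (-ν) * betaFun ν a) * (p * (ν / (a - 1))) := by
            field_simp
          rw [this, e3]
          field_simp
          ring
      _ ≤ _ := by
          refine setIntegral_mono_on ((j1.const_mul _).add (t1.const_mul _)) hI measurableSet_Ioi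
            fun z hz => ?_
          have hz0 : 0 < z := hz
          have hb := le_PhiW (d := d) hn hν hz0
          -- Bernoulli's inequality: the tangent of `r ↦ r ^ c` at the mean `m`
          have b1 := one_add_mul_self_le_rpow_one_add (s := (1 + z / ((n : ℝ) + 1)) / m - 1) (p := c)
            (by have : 0 ≤ (1 + z / ((n : ℝ) + 1)) / m := by positivity
                linarith) hc1
          rw [show 1 + ((1 + z / ((n : ℝ) + 1)) / m - 1) = (1 + z / ((n : ℝ) + 1)) / m by ring,
            Real.div_rpow (by positivity) hm0.le, le_div_iff₀ (by positivity), hα] at b1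
          rw [hα] at hb
          have := b1.trans hb
          have pos : 0 ≤ z ^ (ν - 1) * (A + B * z) ^ (-(a + ν)) := by positivity
          rw [ez z hz]
          calc _ = z ^ (ν - 1) * (A + B * z) ^ (-(a + ν)) *
                ((1 + c * ((1 + p * (B / A * z)) / m - 1)) * m ^ c) := by field_simp; ring
            _ ≤ z ^ (ν - 1) * (A + B * z) ^ (-(a + ν)) * PhiW d n ν z := by gcongr
            _ = _ := by ring

lemma gFun_nonneg {d n : ℕ} {ν : ℝ} (hd : 1 ≤ d) (hn : 2 ≤ n) (hν : 0 < ν) (hν1 : ν < 1) :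
    0 ≤ gFun n d ν := by
  have hn' : (2 : ℝ) ≤ n := by exact_mod_cast hn
  have hd' : (1 : ℝ) ≤ d := by exact_mod_cast hd
  have had : (d : ℝ) ≤ (n : ℝ) * d / 2 := by nlinarith
  have hl : 0 ≤ Real.log (1 + ν) := Real.log_nonneg (by linarith)
  unfold gFun
  split_ifs with hdn
  · have hc0 : 0 < ((d : ℝ) - ν) / n := by apply div_pos <;> linarith
    have hcd : ((d : ℝ) - ν) / n < d := by
      rw [div_lt_iff₀ (by linarith)]; nlinarith
    set a := (n : ℝ) * d / 2
    set c := ((d : ℝ) - ν) / n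
    obtain ⟨t1, t2⟩ := beta_integral_tilt (ν := ν) (k := a + ν) (e := c) hν (by linarith)
      one_pos one_pos
    obtain ⟨j1, j2⟩ := beta_integral (ν := ν) (k := a + ν) hν (by linarith) one_pos one_pos
    simp only [Real.one_rpow, one_mul, add_sub_cancel_right, show a + ν - c - ν = a - c by ring]
      at t2 j2
    have hβ := betaFun_pos hν (show 0 < a by linarith)
    have : betaFun ν a ≤ betaFun ν (a - c) := by
      rw [← t2, ← j2]
      refine setIntegral_mono_on (by simpa using j1) (by simpa using t1) measurableSet_Ioi
        fun z hz => ?_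
      have hz0 : 0 < z := hz
      have : 1 ≤ (1 + 1 / 1 * z) ^ c := Real.one_le_rpow (by linarith) hc0.le
      have pos : 0 ≤ z ^ (ν - 1) * (1 + z) ^ (-(a + ν)) := by positivity
      nlinarith
    have : 0 ≤ Real.log (betaFun ν (a - c) / betaFun ν a) :=
      Real.log_nonneg (by rwa [one_le_div hβ])
    positivity
  · have hdn' : (n : ℝ) + 1 ≤ d := by exact_mod_cast (by omega : n + 1 ≤ d)
    have : 0 < (n : ℝ) * d / 2 - 1 := by linarith
    have : 0 < (d : ℝ) - ν := by linarith
    positivity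

/-! ### Log-ratio of the predictive densities -/

/-- For sample size `n` the weight `omegaW` cancels the power of `1 + z/n`, and the marginal is a Beta
integral. -/
lemma Mint_den {d n : ℕ} {ν s : ℝ} (hd : 1 ≤ d) (hn : 2 ≤ n) (hν : 0 < ν) (hs : 0 < s) (x : Euc d) :
    Mint d ν n (omegaW d n ν) x s = (2 * Real.pi / n) ^ ((d : ℝ) / 2) *
      Real.Gamma (((n : ℝ) - 1) * d / 2 + ν) * 2 ^ (((n : ℝ) - 1) * d / 2 + ν) *
      (s ^ (-(((n : ℝ) - 1) * d / 2)) * ((s + n * ‖x‖ ^ 2) / n) ^ (-ν) *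
        betaFun ν (((n : ℝ) - 1) * d / 2)) := by
  have hn' : (2 : ℝ) ≤ n := by exact_mod_cast hn
  have hd' : (1 : ℝ) ≤ d := by exact_mod_cast hd
  have hk : 0 < ((n : ℝ) - 1) * d / 2 := by
    have : 0 < (n : ℝ) - 1 := by linarith
    positivity
  obtain ⟨j1, j2⟩ := beta_integral (ν := ν) (k := ((n : ℝ) - 1) * d / 2 + ν) hν (by linarith) hs
    (show 0 < (s + n * ‖x‖ ^ 2) / n by positivity)
  rw [add_sub_cancel_right] at j2
  have e : ∀ z ∈ Ioi (0 : ℝ), z ^ (ν - 1) *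
      (omegaW d n ν z * (1 + z / n) ^ (((n : ℝ) - 1) * d / 2 + ν - d / 2)) *
      (s + (s + n * ‖x‖ ^ 2) / n * z) ^ (-(((n : ℝ) - 1) * d / 2 + ν))
      = z ^ (ν - 1) * (s + (s + n * ‖x‖ ^ 2) / n * z) ^ (-(((n : ℝ) - 1) * d / 2 + ν)) := by
    intro z hz
    have hz0 : 0 < z := hz
    have hγ : 0 < 1 + z / (n : ℝ) := by positivity
    have : omegaW d n ν z * (1 + z / n) ^ (((n : ℝ) - 1) * d / 2 + ν - d / 2) = 1 := by
      unfold omegaW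
      rw [← Real.rpow_add hγ]
      convert Real.rpow_zero _ using 2
      ring
    rw [this, mul_one]
  rw [Mint_eq hν (by linarith) hs (measurable_omegaW d n ν) (fun z hz => (omegaW_pos hz).le)
    (j1.congr ((ae_restrict_mem measurableSet_Ioi).mono fun z hz => (e z hz).symm)),
    setIntegral_congr_fun measurableSet_Ioi e, j2]

/-- The integral over the mixing variable that determines the predictive density. -/
def mixInt (d n : ℕ) (ν A B : ℝ) : ℝ :=
  ∫ z in Ioi (0 : ℝ), z ^ (ν - 1) * PhiW d n ν z * (A + B * z) ^ (-((n : ℝ) * d / 2 + ν))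

lemma Mint_num {d n : ℕ} {ν v : ℝ} (hd : 1 ≤ d) (hn : 2 ≤ n) (hν : 0 < ν) (hv : 0 < v) (m : Euc d) :
    Mint d ν ((n : ℝ) + 1) (omegaW d n ν) m v = (2 * Real.pi / ((n : ℝ) + 1)) ^ ((d : ℝ) / 2) *
      Real.Gamma ((n : ℝ) * d / 2 + ν) * 2 ^ ((n : ℝ) * d / 2 + ν) *
      mixInt d n ν v ((v + ((n : ℝ) + 1) * ‖m‖ ^ 2) / ((n : ℝ) + 1)) := by
  have hI := PhiW_integrable (A := v) (B := (v + ((n : ℝ) + 1) * ‖m‖ ^ 2) / ((n : ℝ) + 1)) hd hn hν hv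
    (by field_simp; nlinarith [sq_nonneg ‖m‖])
  have h := Mint_eq (d := d) (ν := ν) (N := (n : ℝ) + 1) (ω := omegaW d n ν) (m := m) hν
    (by simp) hv (measurable_omegaW d n ν) (fun z hz => (omegaW_pos hz).le)
  rw [add_sub_cancel_right] at h
  exact h hI

lemma newS_pos {d n : ℕ} {s : ℝ} (hs : 0 < s) (x y : Euc d) : 0 < newS n x y s := by
  unfold newS; positivity

lemma bestEquiv_pos {d n : ℕ} {s : ℝ} (hd : 1 ≤ d) (hn : 2 ≤ n) (hs : 0 < s) (x y : Euc d) :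
    0 < bestEquiv d n y x s := by
  have hn' : (2 : ℝ) ≤ n := by exact_mod_cast hn
  have hd' : (1 : ℝ) ≤ d := by exact_mod_cast hd
  have : 0 < (n : ℝ) - 1 := by linarith
  have h1 := Real.Gamma_pos_of_pos (show 0 < (n : ℝ) * d / 2 by positivity)
  have h2 := Real.Gamma_pos_of_pos (show 0 < ((n : ℝ) - 1) * d / 2 by positivity)
  have := Real.pi_pos
  unfold bestEquiv
  positivity

/-- The Bayesian predictive density as a multiple of the best equivariant one. -/
lemma bayesPred_eq {d n : ℕ} {ν s : ℝ} (hd : 1 ≤ d) (hn : 2 ≤ n) (hν : 0 < ν) (hs : 0 < s)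
    (x y : Euc d) :
    bayesPred d n (gmPrior d ν (qLow d n ν)) y x s = bestEquiv d n y x s *
      (mixInt d n ν (newS n x y s) ((s + n * ‖x‖ ^ 2 + ‖y‖ ^ 2) / ((n : ℝ) + 1)) *
        newS n x y s ^ ((n : ℝ) * d / 2) * ((s + n * ‖x‖ ^ 2) / n) ^ ν /
        betaFun ν ((n : ℝ) * d / 2)) := by
  have hn' : (2 : ℝ) ≤ n := by exact_mod_cast hn
  have hn0 : (0 : ℝ) < n := by linarith
  have hd' : (1 : ℝ) ≤ d := by exact_mod_cast hd
  have hn1 : 0 < (n : ℝ) - 1 := by linarith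
  have hπ := Real.pi_pos
  have hS := newS_pos (n := n) hs x y
  have hT : 0 < (s + n * ‖x‖ ^ 2) / n := by positivity
  have h1 := Real.Gamma_pos_of_pos (show 0 < (n : ℝ) * d / 2 by positivity)
  have h2 := Real.Gamma_pos_of_pos (show 0 < ((n : ℝ) - 1) * d / 2 by positivity)
  have h3 := Real.Gamma_pos_of_pos (show 0 < ((n : ℝ) - 1) * d / 2 + ν by positivity)
  have h4 := Real.Gamma_pos_of_pos (show 0 < (n : ℝ) * d / 2 + ν by positivity)
  have h5 := Real.Gamma_pos_of_pos hν
  have hpre : preC d n s ≠ 0 := by unfold preC; positivity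
  unfold bayesPred
  rw [bayesPredDen_eq hn hs, bayesPredNum_eq hn hs, Mint_den hd hn hν hs, Mint_num hd hn hν hS,
    newMean_total]
  unfold bestEquiv betaFun
  have e0 : 1 + (n : ℝ) / (((n : ℝ) + 1) * s) * ‖y - x‖ ^ 2 = newS n x y s * s⁻¹ := by
    unfold newS; field_simp
  have e1 : (newS n x y s * s⁻¹) ^ (-((n : ℝ) * d) / 2)
      = (newS n x y s ^ ((n : ℝ) * d / 2))⁻¹ * s ^ ((n : ℝ) * d / 2) := by
    rw [show -((n : ℝ) * d) / 2 = -((n : ℝ) * d / 2) by ring, Real.rpow_neg (by positivity),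
      Real.mul_rpow hS.le (by positivity), Real.inv_rpow hs.le, mul_inv, inv_inv]
  have e2 : (n / (((n : ℝ) + 1) * Real.pi * s)) ^ ((d : ℝ) / 2)
      = (n : ℝ) ^ ((d : ℝ) / 2) / (((n : ℝ) + 1) ^ ((d : ℝ) / 2) * Real.pi ^ ((d : ℝ) / 2) *
        s ^ ((d : ℝ) / 2)) := by
    rw [Real.div_rpow hn0.le (by positivity), Real.mul_rpow (by positivity) hs.le,
      Real.mul_rpow (by positivity) hπ.le]
  have e3 : (2 * Real.pi / ((n : ℝ) + 1)) ^ ((d : ℝ) / 2)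
      = 2 ^ ((d : ℝ) / 2) * Real.pi ^ ((d : ℝ) / 2) / ((n : ℝ) + 1) ^ ((d : ℝ) / 2) := by
    rw [Real.div_rpow (by positivity) (by positivity), Real.mul_rpow (by positivity) hπ.le]
  have e4 : (2 * Real.pi / (n : ℝ)) ^ ((d : ℝ) / 2)
      = 2 ^ ((d : ℝ) / 2) * Real.pi ^ ((d : ℝ) / 2) / (n : ℝ) ^ ((d : ℝ) / 2) := by
    rw [Real.div_rpow (by positivity) (by positivity), Real.mul_rpow (by positivity) hπ.le]
  have e5 : (2 * Real.pi) ^ (-(d : ℝ) / 2) = (2 ^ ((d : ℝ) / 2) * Real.pi ^ ((d : ℝ) / 2))⁻¹ := by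
    rw [neg_div, Real.rpow_neg (by positivity), Real.mul_rpow (by positivity) hπ.le]
  have e6 : (2 : ℝ) ^ ((n : ℝ) * d / 2 + ν) = 2 ^ (((n : ℝ) - 1) * d / 2 + ν) * 2 ^ ((d : ℝ) / 2) := by
    rw [← Real.rpow_add (by norm_num)]; congr 1; ring
  have e7 : s ^ ((n : ℝ) * d / 2) = s ^ (((n : ℝ) - 1) * d / 2) * s ^ ((d : ℝ) / 2) := by
    rw [← Real.rpow_add hs]; congr 1; ring
  rw [e0, e1, e2, e3, e4, e5, e6, e7, Real.rpow_neg hs.le, Real.rpow_neg hT.le,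
    add_comm ν, add_comm ν]
  have p1 : (0 : ℝ) < 2 ^ ((d : ℝ) / 2) := by positivity
  have p2 : (0 : ℝ) < Real.pi ^ ((d : ℝ) / 2) := by positivity
  have p3 : (0 : ℝ) < (n : ℝ) ^ ((d : ℝ) / 2) := by positivity
  have p4 : (0 : ℝ) < ((n : ℝ) + 1) ^ ((d : ℝ) / 2) := by positivity
  have p5 : (0 : ℝ) < s ^ ((d : ℝ) / 2) := by positivity
  have p6 : (0 : ℝ) < s ^ (((n : ℝ) - 1) * d / 2) := by positivity
  have p7 : (0 : ℝ) < newS n x y s ^ ((n : ℝ) * d / 2) := by positivity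
  have p8 : (0 : ℝ) < ((s + n * ‖x‖ ^ 2) / n) ^ ν := by positivity
  have p9 : (0 : ℝ) < 2 ^ (((n : ℝ) - 1) * d / 2 + ν) := by positivity
  generalize (2 : ℝ) ^ ((d : ℝ) / 2) = q1 at *
  generalize Real.pi ^ ((d : ℝ) / 2) = q2 at *
  generalize (n : ℝ) ^ ((d : ℝ) / 2) = q3 at *
  generalize ((n : ℝ) + 1) ^ ((d : ℝ) / 2) = q4 at *
  generalize s ^ ((d : ℝ) / 2) = q5 at *
  generalize s ^ (((n : ℝ) - 1) * d / 2) = q6 at *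
  generalize newS n x y s ^ ((n : ℝ) * d / 2) = q7 at *
  generalize ((s + n * ‖x‖ ^ 2) / n) ^ ν = q8 at *
  generalize (2 : ℝ) ^ (((n : ℝ) - 1) * d / 2 + ν) = q9 at *
  generalize Real.Gamma ((n : ℝ) * d / 2) = G1 at *
  generalize Real.Gamma (((n : ℝ) - 1) * d / 2) = G2 at *
  generalize Real.Gamma (((n : ℝ) - 1) * d / 2 + ν) = G3 at *
  generalize Real.Gamma ((n : ℝ) * d / 2 + ν) = G4 at *
  generalize Real.Gamma ν = G5 at *
  generalize preC d n s = C at *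
  field_simp

lemma total_pos {d n : ℕ} {s : ℝ} (hs : 0 < s) (x : Euc d) : 0 < s + n * ‖x‖ ^ 2 := by positivity

/-- Pointwise lower bound for the log-ratio of the two predictive densities. -/
lemma log_ratio_ge {d n : ℕ} {ν s : ℝ} (hd : 1 ≤ d) (hn : 2 ≤ n) (hν : 0 < ν) (hν1 : ν < 1)
    (hs : 0 < s) (x y : Euc d) :
    0 < bayesPred d n (gmPrior d ν (qLow d n ν)) y x s ∧
    ν * (Real.log (((n : ℝ) + 1) / n) -
        Real.log ((s + n * ‖x‖ ^ 2 + ‖y‖ ^ 2) / (s + n * ‖x‖ ^ 2)) +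
        gFun n d ν * (newS n x y s / (s + n * ‖x‖ ^ 2 + ‖y‖ ^ 2))) ≤
      Real.log (bayesPred d n (gmPrior d ν (qLow d n ν)) y x s) -
        Real.log (bestEquiv d n y x s) := by
  have hn' : (2 : ℝ) ≤ n := by exact_mod_cast hn
  have hn0 : (0 : ℝ) < n := by linarith
  have hn1 : (0 : ℝ) < (n : ℝ) + 1 := by linarith
  have hd' : (1 : ℝ) ≤ d := by exact_mod_cast hd
  have hS := newS_pos (n := n) hs x y
  have hT := total_pos (n := n) hs x
  have hR := bestEquiv_pos hd hn hs x y
  have htot := newMean_total (n := n) x y s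
  have hT' : 0 < s + n * ‖x‖ ^ 2 + ‖y‖ ^ 2 := by positivity
  have hST : newS n x y s ≤ s + n * ‖x‖ ^ 2 + ‖y‖ ^ 2 := by
    rw [← htot]; exact le_add_of_nonneg_right (by positivity)
  have hβ := betaFun_pos hν (show 0 < (n : ℝ) * d / 2 by positivity)
  have key := gFun_exp_le (A := newS n x y s) (B := (s + n * ‖x‖ ^ 2 + ‖y‖ ^ 2) / ((n : ℝ) + 1))
    hd hn hν hν1 hS (by rw [mul_div_cancel₀ _ (by positivity)]; exact hST)
  rw [mul_div_cancel₀ _ (by positivity)] at key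
  change _ ≤ mixInt d n ν _ _ at key
  rw [bayesPred_eq hd hn hν hs]
  set T := s + n * ‖x‖ ^ 2
  set T' := T + ‖y‖ ^ 2
  set S := newS n x y s
  set I := mixInt d n ν S (T' / ((n : ℝ) + 1))
  set E := Real.exp (ν * gFun n d ν * (S / T')) with hE
  have hE0 : 0 < E := Real.exp_pos _
  have low : (T' / ((n : ℝ) + 1)) ^ (-ν) * (T / n) ^ ν * E ≤
      I * S ^ ((n : ℝ) * d / 2) * (T / n) ^ ν / betaFun ν ((n : ℝ) * d / 2) := by
    rw [le_div_iff₀ hβ]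
    calc _ = (S ^ (-((n : ℝ) * d / 2)) * (T' / ((n : ℝ) + 1)) ^ (-ν) *
          betaFun ν ((n : ℝ) * d / 2) * E) * S ^ ((n : ℝ) * d / 2) * (T / n) ^ ν := by
          rw [Real.rpow_neg hS.le]; field_simp
      _ ≤ _ := by gcongr
  have pos : 0 < (T' / ((n : ℝ) + 1)) ^ (-ν) * (T / n) ^ ν * E := by positivity
  have pos2 := pos.trans_le low
  refine ⟨mul_pos hR pos2, ?_⟩
  rw [Real.log_mul hR.ne' pos2.ne', add_sub_cancel_left]
  refine le_trans (le_of_eq ?_) (Real.log_le_log pos low)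
  rw [Real.log_mul (by positivity) hE0.ne', Real.log_mul (by positivity) (by positivity),
    Real.log_rpow (by positivity), Real.log_rpow (by positivity), hE, Real.log_exp,
    Real.log_div hT'.ne' hT.ne', Real.log_div hT.ne' hn0.ne',
    Real.log_div hn1.ne' hn0.ne', Real.log_div hT'.ne' hn1.ne']
  ring

/-! ### Moments of Gaussian and chi-square densities -/

lemma gauss_sq_integral {d : ℕ} (hd : 1 ≤ d) {b : ℝ} (hb : 0 < b) :
    Integrable (fun z : Euc d => ‖z‖ ^ 2 * Real.exp (-(b * ‖z‖ ^ 2))) ∧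
      ∫ z : Euc d, ‖z‖ ^ 2 * Real.exp (-(b * ‖z‖ ^ 2))
        = d / (2 * b) * (Real.pi / b) ^ ((d : ℝ) / 2) := by
  have hd' : (1 : ℝ) ≤ d := by exact_mod_cast hd
  have : Nonempty (Fin d) := ⟨⟨0, hd⟩⟩
  have h0 := (gauss_integral d hb 0).2
  simp only [sub_zero] at h0
  have r1 := integral_fun_norm_addHaar (volume : Measure (Euc d)) (fun r => Real.exp (-(b * r ^ 2)))
  have r2 := integral_fun_norm_addHaar (volume : Measure (Euc d))
    (fun r => r ^ 2 * Real.exp (-(b * r ^ 2)))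
  simp only [finrank_euclideanSpace, Fintype.card_fin, nsmul_eq_mul, smul_eq_mul] at r1 r2
  have q1 : ∫ r in Ioi (0 : ℝ), r ^ (d - 1) * Real.exp (-(b * r ^ 2))
      = b ^ (-((d : ℝ) / 2)) * (1 / 2) * Real.Gamma ((d : ℝ) / 2) := by
    have := integral_rpow_mul_exp_neg_mul_rpow (p := 2) (q := (d : ℝ) - 1) (b := b) (by norm_num)
      (by linarith) hb
    rw [sub_add_cancel, neg_div] at this
    rw [← this]
    refine setIntegral_congr_fun measurableSet_Ioi fun r hr => ?_
    rw [show (d : ℝ) - 1 = ((d - 1 : ℕ) : ℝ) by push_cast [Nat.cast_sub hd]; ring,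
      Real.rpow_natCast, neg_mul]
    norm_cast
  have q2 : ∫ r in Ioi (0 : ℝ), r ^ (d - 1) * (r ^ 2 * Real.exp (-(b * r ^ 2)))
      = b ^ (-((d : ℝ) / 2) - 1) * (1 / 2) * Real.Gamma ((d : ℝ) / 2 + 1) := by
    have := integral_rpow_mul_exp_neg_mul_rpow (p := 2) (q := (d : ℝ) + 1) (b := b) (by norm_num)
      (by linarith) hb
    rw [show -((d : ℝ) + 1 + 1) / 2 = -((d : ℝ) / 2) - 1 by ring,
      show ((d : ℝ) + 1 + 1) / 2 = (d : ℝ) / 2 + 1 by ring] at this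
    rw [← this]
    refine setIntegral_congr_fun measurableSet_Ioi fun r hr => ?_
    rw [show (d : ℝ) + 1 = ((d - 1 + 2 : ℕ) : ℝ) by push_cast [Nat.cast_sub hd]; ring,
      Real.rpow_natCast, neg_mul, pow_add]
    norm_cast
    ring
  have hv : ∫ z : Euc d, ‖z‖ ^ 2 * Real.exp (-(b * ‖z‖ ^ 2))
        = d / (2 * b) * (Real.pi / b) ^ ((d : ℝ) / 2) := by
    rw [← h0, r1, r2, q1, q2, Real.Gamma_add_one (by positivity), Real.rpow_sub_one hb.ne']
    field_simp
  refine ⟨Integrable.of_integral_ne_zero ?_, hv⟩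
  rw [hv]
  have := Real.pi_pos
  positivity

lemma gaussPdf_eq {d : ℕ} {τ : ℝ} (y m : Euc d) :
    gaussPdf d y m τ
      = (2 * Real.pi * τ) ^ (-(d : ℝ) / 2) * Real.exp (-((2 * τ)⁻¹ * ‖y - m‖ ^ 2)) := by
  unfold gaussPdf; congr 2; ring

lemma gaussPdf_pos {d : ℕ} {τ : ℝ} (hτ : 0 < τ) (y m : Euc d) : 0 < gaussPdf d y m τ := by
  have := Real.pi_pos
  unfold gaussPdf; positivity

lemma measurable_gaussPdf {d : ℕ} {τ : ℝ} (m : Euc d) : Measurable fun y => gaussPdf d y m τ := by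
  unfold gaussPdf; fun_prop

lemma gauss_const {d : ℕ} {τ : ℝ} (hτ : 0 < τ) :
    (2 * Real.pi * τ) ^ (-(d : ℝ) / 2) * (Real.pi / (2 * τ)⁻¹) ^ ((d : ℝ) / 2) = 1 := by
  have := Real.pi_pos
  rw [div_inv_eq_mul, show Real.pi * (2 * τ) = 2 * Real.pi * τ by ring,
    ← Real.rpow_add (by positivity)]
  convert Real.rpow_zero _ using 2
  ring

lemma gaussPdf_integral {d : ℕ} {τ : ℝ} (hτ : 0 < τ) (m : Euc d) :
    Integrable (fun y => gaussPdf d y m τ) ∧ ∫ y, gaussPdf d y m τ = 1 := by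
  obtain ⟨h1, h2⟩ := gauss_integral d (show 0 < (2 * τ)⁻¹ by positivity) m
  simp only [gaussPdf_eq]
  exact ⟨h1.const_mul _, by rw [integral_const_mul, h2, gauss_const hτ]⟩

lemma gaussPdf_second {d : ℕ} (hd : 1 ≤ d) {τ : ℝ} (hτ : 0 < τ) (m x : Euc d) :
    Integrable (fun y => gaussPdf d y m τ * ‖y - x‖ ^ 2) ∧
      ∫ y, gaussPdf d y m τ * ‖y - x‖ ^ 2 = ‖x - m‖ ^ 2 + d * τ := by
  set b := (2 * τ)⁻¹ with hb
  have hb0 : 0 < b := by positivity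
  obtain ⟨h1, h2⟩ := gauss_integral d hb0 0
  obtain ⟨s1, s2⟩ := gauss_sq_integral hd hb0
  simp only [sub_zero] at h1 h2
  set v := m - x with hv
  set f : Euc d → ℝ := fun z => Real.exp (-(b * ‖z‖ ^ 2)) * ‖z + v‖ ^ 2 with hf
  have hs : Integrable (fun z : Euc d => 2 * (‖z‖ ^ 2 * Real.exp (-(b * ‖z‖ ^ 2))) +
      2 * ‖v‖ ^ 2 * Real.exp (-(b * ‖z‖ ^ 2))) := (s1.const_mul _).add (h1.const_mul _)
  have par : ∀ z, f z + f (-z) = 2 * (‖z‖ ^ 2 * Real.exp (-(b * ‖z‖ ^ 2))) +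
      2 * ‖v‖ ^ 2 * Real.exp (-(b * ‖z‖ ^ 2)) := by
    intro z
    simp only [hf, norm_neg]
    have e1 := norm_add_sq_real z v
    have e2 := norm_add_sq_real (-z) v
    rw [norm_neg, inner_neg_left] at e2
    rw [e1, e2]; ring
  have f0 : ∀ z, 0 ≤ f z := fun z => by simp only [hf]; positivity
  have fi : Integrable f := by
    refine hs.mono' (by fun_prop) (Filter.Eventually.of_forall fun z => ?_)
    rw [Real.norm_of_nonneg (f0 z), ← par]
    linarith [f0 (-z)]
  have fv : 2 * ∫ z, f z = 2 * (d / (2 * b) * (Real.pi / b) ^ ((d : ℝ) / 2)) +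
      2 * ‖v‖ ^ 2 * (Real.pi / b) ^ ((d : ℝ) / 2) := by
    rw [← s2, ← h2, ← integral_const_mul 2 (fun z : Euc d => ‖z‖ ^ 2 * _),
      ← integral_const_mul (2 * ‖v‖ ^ 2), ← integral_add (s1.const_mul _) (h1.const_mul _),
      ← integral_congr_ae (Filter.Eventually.of_forall par), integral_add fi fi.comp_neg,
      integral_neg_eq_self f]
    ring
  have e : ∀ y, gaussPdf d y m τ * ‖y - x‖ ^ 2 = (2 * Real.pi * τ) ^ (-(d : ℝ) / 2) * f (y - m) := by
    intro y
    rw [gaussPdf_eq]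
    simp only [hf, hv, sub_add_sub_cancel, hb]
    ring
  simp only [e]
  refine ⟨(fi.comp_sub_right m).const_mul _, ?_⟩
  rw [integral_const_mul, integral_sub_right_eq_self f m]
  have hc := gauss_const (d := d) hτ
  rw [← hb] at hc
  rw [show ‖x - m‖ = ‖v‖ by rw [hv, norm_sub_rev]]
  have e2 : (d : ℝ) / (2 * b) = d * τ := by rw [hb]; field_simp
  rw [e2] at fv
  linear_combination (1 / 2 * (2 * Real.pi * τ) ^ (-(d : ℝ) / 2)) * fv + (d * τ + ‖v‖ ^ 2) * hc

/-- Exponential tilting of a Gaussian density. -/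
lemma gaussPdf_tilt {d : ℕ} {τ t : ℝ} (hτ : 0 < τ) (ht : 0 < t) (y m : Euc d) :
    gaussPdf d y m τ * Real.exp (-(t * ‖y‖ ^ 2)) = (1 + 2 * τ * t) ^ (-((d : ℝ) / 2)) *
      Real.exp (-(t * ‖m‖ ^ 2 / (1 + 2 * τ * t))) *
      gaussPdf d y ((1 + 2 * τ * t)⁻¹ • m) (τ / (1 + 2 * τ * t)) := by
  have hπ := Real.pi_pos
  have hD : 0 < 1 + 2 * τ * t := by positivity
  have cs := complete_square (N := (2 * τ)⁻¹) (z := t) (by positivity) y m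
  have e1 : (2 * τ)⁻¹ / ((2 * τ)⁻¹ + t) = (1 + 2 * τ * t)⁻¹ := by field_simp
  have e2 : (2 * τ)⁻¹ + t = (2 * (τ / (1 + 2 * τ * t)))⁻¹ := by field_simp
  have e3 : (2 * τ)⁻¹ * t / ((2 * τ)⁻¹ + t) * ‖m‖ ^ 2 = t * ‖m‖ ^ 2 / (1 + 2 * τ * t) := by
    field_simp
  rw [e1, e3, e2] at cs
  rw [gaussPdf_eq, gaussPdf_eq, mul_assoc, ← Real.exp_add,
    show -((2 * τ)⁻¹ * ‖y - m‖ ^ 2) + -(t * ‖y‖ ^ 2) = -((2 * τ)⁻¹ * ‖y - m‖ ^ 2 + t * ‖y‖ ^ 2) by ring,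
    cs, neg_add, Real.exp_add,
    show 2 * Real.pi * (τ / (1 + 2 * τ * t)) = 2 * Real.pi * τ * (1 + 2 * τ * t)⁻¹ by ring,
    Real.mul_rpow (x := 2 * Real.pi * τ) (by positivity) (by positivity), Real.inv_rpow hD.le,
    ← Real.rpow_neg hD.le]
  have : (1 + 2 * τ * t) ^ (-((d : ℝ) / 2)) * (1 + 2 * τ * t) ^ (-(-(d : ℝ) / 2)) = 1 := by
    rw [← Real.rpow_add hD]
    convert Real.rpow_zero _ using 2
    ring
  linear_combination (-(2 * Real.pi * τ) ^ (-(d : ℝ) / 2) *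
    Real.exp (-((2 * (τ / (1 + 2 * τ * t)))⁻¹ * ‖y - (1 + 2 * τ * t)⁻¹ • m‖ ^ 2)) *
    Real.exp (-(t * ‖m‖ ^ 2 / (1 + 2 * τ * t)))) * this

/-- Exponentially tilted moments of a scaled chi-square variable. -/
lemma chi_moment {k σ t e : ℝ} (hk : 0 < k) (hσ : 0 < σ) (ht : 0 ≤ t) (he : 0 ≤ e) :
    IntegrableOn (fun s => chiSqPdf k (s / σ) / σ * (s ^ e * Real.exp (-(t * s)))) (Ioi 0) ∧
      ∫ s in Ioi (0 : ℝ), chiSqPdf k (s / σ) / σ * (s ^ e * Real.exp (-(t * s)))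
        = (2 * σ) ^ e * (1 + 2 * σ * t) ^ (-(k / 2 + e)) * (Real.Gamma (k / 2 + e) / Real.Gamma (k / 2)) := by
  have hr : 0 < (1 + 2 * σ * t) / (2 * σ) := by positivity
  obtain ⟨g1, g2⟩ := gamma_integral (show 0 < k / 2 + e by positivity) hr
  have hΓ := Real.Gamma_pos_of_pos (show 0 < k / 2 by positivity)
  have E : ∀ s ∈ Ioi (0 : ℝ), chiSqPdf k (s / σ) / σ * (s ^ e * Real.exp (-(t * s)))
      = ((2 * σ) ^ (k / 2) * Real.Gamma (k / 2))⁻¹ *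
        (s ^ (k / 2 + e - 1) * Real.exp (-((1 + 2 * σ * t) / (2 * σ) * s))) := by
    intro s hs
    have hs0 : 0 < s := hs
    unfold chiSqPdf
    have e1 : Real.exp (-((1 + 2 * σ * t) / (2 * σ) * s)) = Real.exp (-(s / σ) / 2) * Real.exp (-(t * s)) := by
      rw [← Real.exp_add]; congr 1; field_simp; ring
    have e2 : s ^ (k / 2 + e - 1) = s ^ (k / 2 - 1) * s ^ e := by
      rw [← Real.rpow_add hs0]; congr 1; ring
    have e3 : (2 * σ) ^ (k / 2) = 2 ^ (k / 2) * (σ ^ (k / 2 - 1) * σ) := by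
      rw [Real.mul_rpow (by norm_num) hσ.le, ← Real.rpow_add_one hσ.ne', sub_add_cancel]
    rw [e1, e2, e3, Real.div_rpow hs0.le hσ.le]
    field_simp
  constructor
  · exact (g1.const_mul _).congr ((ae_restrict_mem measurableSet_Ioi).mono fun s hs => (E s hs).symm)
  · rw [setIntegral_congr_fun measurableSet_Ioi E, integral_const_mul, g2,
      Real.div_rpow (by positivity) (by positivity), Real.rpow_neg (x := 2 * σ) (by positivity),
      Real.rpow_add (x := 2 * σ) (by positivity)]
    have : (0 : ℝ) < (2 * σ) ^ (k / 2) := by positivity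
    have : (0 : ℝ) < (2 * σ) ^ e := by positivity
    field_simp

lemma chiSqPdf_pos {k t : ℝ} (hk : 0 < k) (ht : 0 < t) : 0 < chiSqPdf k t := by
  have := Real.Gamma_pos_of_pos (show 0 < k / 2 by positivity)
  unfold chiSqPdf; positivity

lemma measurable_chiSqPdf (k : ℝ) : Measurable (chiSqPdf k) := by
  unfold chiSqPdf; fun_prop

/-! ### Laplace transforms -/

/-- Laplace transform of `∑ ‖X_i‖²` for `l` independent Gaussian vectors `X_i` in dimension `d` with
variance `σ` and squared mean `m2`. -/
def Lap (d : ℕ) (σ m2 l t : ℝ) : ℝ :=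
  (1 + 2 * σ * t) ^ (-(l * ((d : ℝ) / 2))) * Real.exp (-(l * (t * m2 / (1 + 2 * σ * t))))

/-- Tonelli: an integral representation `V p = ∫ H p t dt` passes to expectations. -/
lemma laplace_swap {α : Type*} [MeasurableSpace α] (μ : Measure α) [SFinite μ] {H : α → ℝ → ℝ}
    (hm : Measurable fun p : α × ℝ => H p.1 p.2) {V : α → ℝ} {W : ℝ → ℝ}
    (hV : ∀ᵐ p ∂μ, ∫⁻ t in Ioi (0 : ℝ), ENNReal.ofReal (H p t) = ENNReal.ofReal (V p))
    (hW : ∀ t ∈ Ioi (0 : ℝ), ∫⁻ p, ENNReal.ofReal (H p t) ∂μ = ENNReal.ofReal (W t)) :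
    ∫⁻ p, ENNReal.ofReal (V p) ∂μ = ∫⁻ t in Ioi (0 : ℝ), ENNReal.ofReal (W t) := by
  rw [← lintegral_congr_ae hV, lintegral_lintegral_swap (hm.ennreal_ofReal.aemeasurable)]
  exact setLIntegral_congr_fun measurableSet_Ioi hW

lemma lintegral_exp_neg {r : ℝ} (hr : 0 < r) :
    ∫⁻ t in Ioi (0 : ℝ), ENNReal.ofReal (Real.exp (-(t * r))) = ENNReal.ofReal (1 / r) := by
  obtain ⟨g1, g2⟩ := gamma_integral one_pos hr
  simp only [sub_self, Real.rpow_zero, one_mul, Real.Gamma_one, mul_one, Real.rpow_neg_one] at g1 g2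
  simp only [mul_comm _ r]
  rw [← ofReal_integral_eq_lintegral_ofReal g1
    (Filter.Eventually.of_forall fun t => (Real.exp_pos _).le), g2, one_div]

/-- Frullani's integral for the exponential. -/
lemma frullani_exp {T T' : ℝ} (hT : 0 < T) (hTT : T ≤ T') :
    ∫⁻ t in Ioi (0 : ℝ), ENNReal.ofReal ((Real.exp (-(t * T)) - Real.exp (-(t * T'))) / t)
      = ENNReal.ofReal (Real.log (T' / T)) := by
  have hT' : 0 < T' := hT.trans_le hTT
  rw [← laplace_swap (volume.restrict (Ioc T T')) (H := fun r t => Real.exp (-(t * r)))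
    (V := fun r => 1 / r) (by fun_prop)]
  · have hi : IntervalIntegrable (fun r : ℝ => 1 / r) volume T T' :=
      intervalIntegral.intervalIntegrable_one_div (fun x hx => by
        rw [uIcc_of_le hTT] at hx; linarith [hx.1]) continuousOn_id
    rw [← integral_one_div_of_pos hT hT', intervalIntegral.integral_of_le hTT,
      ofReal_integral_eq_lintegral_ofReal ((intervalIntegrable_iff_integrableOn_Ioc_of_le hTT).1 hi)]
    refine (ae_restrict_mem measurableSet_Ioc).mono fun r hr => ?_
    have : 0 < r := hT.trans hr.1
    simp only [Pi.zero_apply]; positivity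
  · exact (ae_restrict_mem measurableSet_Ioc).mono fun r hr => lintegral_exp_neg (hT.trans hr.1)
  · intro t ht
    have ht0 : 0 < t := ht
    have hc : Continuous fun r : ℝ => Real.exp (-(t * r)) := by fun_prop
    rw [← ofReal_integral_eq_lintegral_ofReal
      ((intervalIntegrable_iff_integrableOn_Ioc_of_le hTT).1 (hc.intervalIntegrable _ _))
      (Filter.Eventually.of_forall fun t => (Real.exp_pos _).le),
      ← intervalIntegral.integral_of_le hTT]
    congr 1
    rw [intervalIntegral.integral_eq_sub_of_hasDerivAt
      (f := fun r => -(Real.exp (-(t * r)) / t)) (fun r _ => ?_) (hc.intervalIntegrable _ _)]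
    · ring
    · have h1 : HasDerivAt (fun r : ℝ => -(t * r)) (-t) r := by
        simpa using ((hasDerivAt_id r).const_mul t).fun_neg
      refine (h1.exp.div_const t).fun_neg.congr_deriv ?_
      field_simp

lemma gauss_laplace {d : ℕ} {σ t N : ℝ} (hσ : 0 < σ) (ht : 0 < t) (hN : 0 < N) (x m : Euc d) :
    gaussPdf d x m (σ / N) * Real.exp (-(t * (N * ‖x‖ ^ 2))) =
      (1 + 2 * σ * t) ^ (-((d : ℝ) / 2)) * Real.exp (-(N * (t * ‖m‖ ^ 2 / (1 + 2 * σ * t)))) *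
      gaussPdf d x ((1 + 2 * σ * t)⁻¹ • m) (σ / (1 + 2 * σ * t) / N) := by
  have h := gaussPdf_tilt (τ := σ / N) (t := t * N) (by positivity) (by positivity) x m
  rw [show 1 + 2 * (σ / N) * (t * N) = 1 + 2 * σ * t by field_simp,
    show σ / N / (1 + 2 * σ * t) = σ / (1 + 2 * σ * t) / N by ring,
    show t * N * ‖m‖ ^ 2 / (1 + 2 * σ * t) = N * (t * ‖m‖ ^ 2 / (1 + 2 * σ * t)) by ring] at h
  rw [← h, mul_assoc t]

lemma gauss_laplace_one {d : ℕ} {σ t : ℝ} (hσ : 0 < σ) (ht : 0 < t) (x m : Euc d) :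
    gaussPdf d x m σ * Real.exp (-(t * ‖x‖ ^ 2)) =
      (1 + 2 * σ * t) ^ (-((d : ℝ) / 2)) * Real.exp (-(t * ‖m‖ ^ 2 / (1 + 2 * σ * t))) *
      gaussPdf d x ((1 + 2 * σ * t)⁻¹ • m) (σ / (1 + 2 * σ * t)) := by
  have h := gauss_laplace hσ ht one_pos x m
  simpa only [one_mul, div_one] using h

/-- Reference measure for `(s, x̄)`. -/
abbrev refTwo (d : ℕ) : Measure (ℝ × Euc d) := ((volume : Measure ℝ).restrict (Ioi 0)).prod volume

/-- Reference measure for `(s, x̄, y)`. -/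
abbrev refThree (d : ℕ) : Measure (ℝ × Euc d × Euc d) :=
  ((volume : Measure ℝ).restrict (Ioi 0)).prod ((volume : Measure (Euc d)).prod volume)

lemma prod_value {α β : Type*} [MeasurableSpace α] [MeasurableSpace β] {μ : Measure α}
    {ν : Measure β} [SFinite μ] [SFinite ν] {f : α → ℝ} {g : β → ℝ} {a b : ℝ}
    (hf : Integrable f μ ∧ ∫ x, f x ∂μ = a)
    (hg : Integrable g ν ∧ ∫ x, g x ∂ν = b) :
    Integrable (fun p : α × β => f p.1 * g p.2) (μ.prod ν) ∧
      ∫ p, f p.1 * g p.2 ∂(μ.prod ν) = a * b :=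
  ⟨hf.1.mul_prod hg.1, by rw [integral_prod_mul, hf.2, hg.2]⟩

lemma chi_laplace {d n : ℕ} {σ t : ℝ} (hd : 1 ≤ d) (hn : 2 ≤ n) (hσ : 0 < σ) (ht : 0 ≤ t) :
    IntegrableOn (fun s => chiSqPdf (((n : ℝ) - 1) * d) (s / σ) / σ * Real.exp (-(t * s))) (Ioi 0) ∧
      ∫ s in Ioi (0 : ℝ), chiSqPdf (((n : ℝ) - 1) * d) (s / σ) / σ * Real.exp (-(t * s))
        = (1 + 2 * σ * t) ^ (-(((n : ℝ) - 1) * ((d : ℝ) / 2))) := by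
  have hn' : (2 : ℝ) ≤ n := by exact_mod_cast hn
  have hd' : (1 : ℝ) ≤ d := by exact_mod_cast hd
  have hk : 0 < ((n : ℝ) - 1) * d := by apply mul_pos <;> linarith
  have h := chi_moment hk hσ ht le_rfl
  have hΓ := Real.Gamma_pos_of_pos (show 0 < ((n : ℝ) - 1) * d / 2 by positivity)
  simp only [Real.rpow_zero, one_mul, add_zero, div_self hΓ.ne', mul_one] at h
  simpa only [mul_div_assoc] using h

lemma chi_laplace_one {d n : ℕ} {σ t : ℝ} (hd : 1 ≤ d) (hn : 2 ≤ n) (hσ : 0 < σ) (ht : 0 ≤ t) :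
    IntegrableOn (fun s => chiSqPdf (((n : ℝ) - 1) * d) (s / σ) / σ * (s * Real.exp (-(t * s))))
      (Ioi 0) ∧
      ∫ s in Ioi (0 : ℝ), chiSqPdf (((n : ℝ) - 1) * d) (s / σ) / σ * (s * Real.exp (-(t * s)))
        = ((n : ℝ) - 1) * d * σ * (1 + 2 * σ * t)⁻¹ *
          (1 + 2 * σ * t) ^ (-(((n : ℝ) - 1) * ((d : ℝ) / 2))) := by
  have hn' : (2 : ℝ) ≤ n := by exact_mod_cast hn
  have hd' : (1 : ℝ) ≤ d := by exact_mod_cast hd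
  have hk : 0 < ((n : ℝ) - 1) * d := by apply mul_pos <;> linarith
  have hD : 0 < 1 + 2 * σ * t := by positivity
  obtain ⟨h1, h2⟩ := chi_moment hk hσ ht zero_le_one
  have hΓ := Real.Gamma_pos_of_pos (show 0 < ((n : ℝ) - 1) * d / 2 by positivity)
  simp only [Real.rpow_one] at h1 h2
  refine ⟨h1, h2.trans ?_⟩
  rw [Real.Gamma_add_one (by positivity), neg_add, Real.rpow_add hD, Real.rpow_neg_one,
    mul_div_assoc (((n : ℝ) - 1)) (d : ℝ) 2] at *
  field_simp

lemma Lap_split {d n : ℕ} {σ m2 t : ℝ} (hσ : 0 < σ) (ht : 0 < t) :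
    (1 + 2 * σ * t) ^ (-(((n : ℝ) - 1) * ((d : ℝ) / 2))) * ((1 + 2 * σ * t) ^ (-((d : ℝ) / 2)) *
      Real.exp (-(n * (t * m2 / (1 + 2 * σ * t))))) = Lap d σ m2 n t := by
  have hD : 0 < 1 + 2 * σ * t := by positivity
  unfold Lap
  rw [← mul_assoc, ← Real.rpow_add hD]
  congr 2; ring

lemma Lap_succ {d : ℕ} {σ m2 t l : ℝ} (hσ : 0 < σ) (ht : 0 < t) :
    Lap d σ m2 l t * ((1 + 2 * σ * t) ^ (-((d : ℝ) / 2)) *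
      Real.exp (-(t * m2 / (1 + 2 * σ * t)))) = Lap d σ m2 (l + 1) t := by
  have hD : 0 < 1 + 2 * σ * t := by positivity
  unfold Lap
  rw [show -((l + 1) * ((d : ℝ) / 2)) = -(l * ((d : ℝ) / 2)) + -((d : ℝ) / 2) by ring,
    Real.rpow_add hD,
    show -((l + 1) * (t * m2 / (1 + 2 * σ * t)))
      = -(l * (t * m2 / (1 + 2 * σ * t))) + -(t * m2 / (1 + 2 * σ * t)) by ring, Real.exp_add]
  ring

/-! ### Exponential moments of the data -/

lemma gauss_value_x {d : ℕ} {σ t N : ℝ} (hσ : 0 < σ) (ht : 0 < t) (hN : 0 < N) (m : Euc d) :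
    Integrable (fun x => gaussPdf d x m (σ / N) * Real.exp (-(t * (N * ‖x‖ ^ 2)))) ∧
    ∫ x, gaussPdf d x m (σ / N) * Real.exp (-(t * (N * ‖x‖ ^ 2))) =
      (1 + 2 * σ * t) ^ (-((d : ℝ) / 2)) * Real.exp (-(N * (t * ‖m‖ ^ 2 / (1 + 2 * σ * t)))) := by
  have hD : 0 < 1 + 2 * σ * t := by positivity
  obtain ⟨h1, h2⟩ := gaussPdf_integral (d := d) (show 0 < σ / (1 + 2 * σ * t) / N by positivity)
    ((1 + 2 * σ * t)⁻¹ • m)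
  simp only [gauss_laplace hσ ht hN]
  exact ⟨h1.const_mul _, by rw [integral_const_mul, h2, mul_one]⟩

lemma gauss_value_y {d : ℕ} {σ t : ℝ} (hσ : 0 < σ) (ht : 0 < t) (m : Euc d) :
    Integrable (fun x => gaussPdf d x m σ * Real.exp (-(t * ‖x‖ ^ 2))) ∧
    ∫ x, gaussPdf d x m σ * Real.exp (-(t * ‖x‖ ^ 2)) =
      (1 + 2 * σ * t) ^ (-((d : ℝ) / 2)) * Real.exp (-(t * ‖m‖ ^ 2 / (1 + 2 * σ * t))) := by
  simpa only [one_mul, div_one] using gauss_value_x hσ ht one_pos m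

/-- Joint density of `(x̄, s)`. -/
def densTwo (d n : ℕ) (μ : Euc d) (σ : ℝ) (p : ℝ × Euc d) : ℝ :=
  gaussPdf d p.2 μ (σ / n) * (chiSqPdf (((n : ℝ) - 1) * d) (p.1 / σ) / σ)

/-- Joint density of `(x̄, s, y)`. -/
def densThree (d n : ℕ) (μ : Euc d) (σ : ℝ) (p : ℝ × Euc d × Euc d) : ℝ :=
  gaussPdf d p.2.1 μ (σ / n) * (chiSqPdf (((n : ℝ) - 1) * d) (p.1 / σ) / σ) * gaussPdf d p.2.2 μ σ

lemma exp_two_s {d n : ℕ} {σ t : ℝ} (hd : 1 ≤ d) (hn : 2 ≤ n) (hσ : 0 < σ) (ht : 0 < t) (μ : Euc d) :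
    Integrable (fun p => densTwo d n μ σ p * (p.1 * Real.exp (-(t * (p.1 + n * ‖p.2‖ ^ 2)))))
      (refTwo d) ∧
    ∫ p, densTwo d n μ σ p * (p.1 * Real.exp (-(t * (p.1 + n * ‖p.2‖ ^ 2)))) ∂(refTwo d)
      = ((n : ℝ) - 1) * d * σ * (1 + 2 * σ * t)⁻¹ * Lap d σ (‖μ‖ ^ 2) n t := by
  have hn0 : (0 : ℝ) < n := by exact_mod_cast (show 0 < n by omega)
  have h := prod_value (chi_laplace_one hd hn hσ ht.le) (gauss_value_x hσ ht hn0 μ)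
  have e : ∀ p : ℝ × Euc d, densTwo d n μ σ p * (p.1 * Real.exp (-(t * (p.1 + n * ‖p.2‖ ^ 2))))
      = chiSqPdf (((n : ℝ) - 1) * d) (p.1 / σ) / σ * (p.1 * Real.exp (-(t * p.1))) *
        (gaussPdf d p.2 μ (σ / n) * Real.exp (-(t * (n * ‖p.2‖ ^ 2)))) := by
    intro p
    unfold densTwo
    rw [mul_add, neg_add, Real.exp_add]; ring
  simp only [e]
  refine ⟨h.1, h.2.trans ?_⟩
  rw [← Lap_split hσ ht]
  ring

/-- The joint density has total mass one. -/
lemma exp_three_one {d n : ℕ} {σ : ℝ} (hd : 1 ≤ d) (hn : 2 ≤ n) (hσ : 0 < σ) (μ : Euc d) :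
    Integrable (densThree d n μ σ) (refThree d) ∧ ∫ p, densThree d n μ σ p ∂(refThree d) = 1 := by
  have hn0 : (0 : ℝ) < n := by exact_mod_cast (show 0 < n by omega)
  have h := prod_value (chi_laplace hd hn hσ le_rfl)
    (prod_value (gaussPdf_integral (d := d) (show 0 < σ / n by positivity) μ)
      (gaussPdf_integral (d := d) hσ μ))
  have e : densThree d n μ σ = fun p => chiSqPdf (((n : ℝ) - 1) * d) (p.1 / σ) / σ *
      Real.exp (-(0 * p.1)) * (gaussPdf d p.2.1 μ (σ / n) * gaussPdf d p.2.2 μ σ) := by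
    funext p
    unfold densThree
    simp only [zero_mul, neg_zero, Real.exp_zero]; ring
  rw [e]
  refine ⟨h.1, h.2.trans ?_⟩
  simp

lemma exp_three_T {d n : ℕ} {σ t : ℝ} (hd : 1 ≤ d) (hn : 2 ≤ n) (hσ : 0 < σ) (ht : 0 < t)
    (μ : Euc d) :
    Integrable (fun p => densThree d n μ σ p * Real.exp (-(t * (p.1 + n * ‖p.2.1‖ ^ 2))))
      (refThree d) ∧
    ∫ p, densThree d n μ σ p * Real.exp (-(t * (p.1 + n * ‖p.2.1‖ ^ 2))) ∂(refThree d)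
      = Lap d σ (‖μ‖ ^ 2) n t := by
  have hn0 : (0 : ℝ) < n := by exact_mod_cast (show 0 < n by omega)
  have h := prod_value (chi_laplace hd hn hσ ht.le)
    (prod_value (gauss_value_x hσ ht hn0 μ) (gaussPdf_integral (d := d) hσ μ))
  have e : ∀ p : ℝ × Euc d × Euc d,
      densThree d n μ σ p * Real.exp (-(t * (p.1 + n * ‖p.2.1‖ ^ 2)))
      = chiSqPdf (((n : ℝ) - 1) * d) (p.1 / σ) / σ * Real.exp (-(t * p.1)) *
        (gaussPdf d p.2.1 μ (σ / n) * Real.exp (-(t * (n * ‖p.2.1‖ ^ 2))) *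
          gaussPdf d p.2.2 μ σ) := by
    intro p
    unfold densThree
    rw [mul_add, neg_add, Real.exp_add]; ring
  simp only [e]
  refine ⟨h.1, h.2.trans ?_⟩
  rw [mul_one, Lap_split hσ ht]

lemma exp_three_T' {d n : ℕ} {σ t : ℝ} (hd : 1 ≤ d) (hn : 2 ≤ n) (hσ : 0 < σ) (ht : 0 < t)
    (μ : Euc d) :
    Integrable (fun p => densThree d n μ σ p *
      Real.exp (-(t * (p.1 + n * ‖p.2.1‖ ^ 2 + ‖p.2.2‖ ^ 2)))) (refThree d) ∧
    ∫ p, densThree d n μ σ p * Real.exp (-(t * (p.1 + n * ‖p.2.1‖ ^ 2 + ‖p.2.2‖ ^ 2))) ∂(refThree d)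
      = Lap d σ (‖μ‖ ^ 2) ((n : ℝ) + 1) t := by
  have hn0 : (0 : ℝ) < n := by exact_mod_cast (show 0 < n by omega)
  have h := prod_value (chi_laplace hd hn hσ ht.le)
    (prod_value (gauss_value_x hσ ht hn0 μ) (gauss_value_y hσ ht μ))
  have e : ∀ p : ℝ × Euc d × Euc d,
      densThree d n μ σ p * Real.exp (-(t * (p.1 + n * ‖p.2.1‖ ^ 2 + ‖p.2.2‖ ^ 2)))
      = chiSqPdf (((n : ℝ) - 1) * d) (p.1 / σ) / σ * Real.exp (-(t * p.1)) *
        (gaussPdf d p.2.1 μ (σ / n) * Real.exp (-(t * (n * ‖p.2.1‖ ^ 2))) *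
          (gaussPdf d p.2.2 μ σ * Real.exp (-(t * ‖p.2.2‖ ^ 2)))) := by
    intro p
    unfold densThree
    rw [mul_add, mul_add, neg_add, neg_add, Real.exp_add, Real.exp_add]; ring
  simp only [e]
  refine ⟨h.1, h.2.trans ?_⟩
  rw [← mul_assoc, Lap_split hσ ht, Lap_succ hσ ht]

/-- Mean squared distance of two independent Gaussian vectors with a common mean. -/
lemma gauss_pair {d : ℕ} (hd : 1 ≤ d) {τ N : ℝ} (hτ : 0 < τ) (hN : 0 < N) (m : Euc d) :
    Integrable (fun q : Euc d × Euc d => gaussPdf d q.1 m (τ / N) *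
      (gaussPdf d q.2 m τ * ‖q.2 - q.1‖ ^ 2)) ∧
    ∫ q : Euc d × Euc d, gaussPdf d q.1 m (τ / N) * (gaussPdf d q.2 m τ * ‖q.2 - q.1‖ ^ 2)
      = d * τ * ((N + 1) / N) := by
  have hτN : 0 < τ / N := by positivity
  obtain ⟨a1, a2⟩ := gaussPdf_second hd hτN m m
  obtain ⟨b1, b2⟩ := gaussPdf_integral hτN m
  have m1 := measurable_gaussPdf (d := d) (τ := τ) m
  have m2 := measurable_gaussPdf (d := d) (τ := τ / N) m
  have inner : ∀ x : Euc d, Integrable (fun y => gaussPdf d x m (τ / N) *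
      (gaussPdf d y m τ * ‖y - x‖ ^ 2)) ∧
      ∫ y, gaussPdf d x m (τ / N) * (gaussPdf d y m τ * ‖y - x‖ ^ 2)
        = gaussPdf d x m (τ / N) * ‖x - m‖ ^ 2 + d * τ * gaussPdf d x m (τ / N) := by
    intro x
    obtain ⟨h1, h2⟩ := gaussPdf_second hd hτ m x
    refine ⟨h1.const_mul _, ?_⟩
    rw [integral_const_mul, h2]; ring
  have hi : Integrable (fun q : Euc d × Euc d => gaussPdf d q.1 m (τ / N) *
      (gaussPdf d q.2 m τ * ‖q.2 - q.1‖ ^ 2)) (volume.prod volume) := by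
    refine integrable_prod_of_nonneg (g := fun x => gaussPdf d x m (τ / N) * ‖x - m‖ ^ 2 +
      d * τ * gaussPdf d x m (τ / N)) (by fun_prop) (Filter.Eventually.of_forall fun x =>
        ⟨Filter.Eventually.of_forall fun y => ?_, inner x⟩) (a1.add (b1.const_mul _))
    have := gaussPdf_pos hτN x m
    have := gaussPdf_pos hτ y m
    positivity
  refine ⟨hi, ?_⟩
  rw [Measure.volume_eq_prod, integral_prod _ hi]
  simp only [fun x => (inner x).2]
  rw [integral_add a1 (b1.const_mul _), integral_const_mul, a2, b2]
  simp only [sub_self, norm_zero]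
  field_simp
  ring

/-- Laplace transform of `s_{n+1}` tilted by `T' = s + n‖x̄‖² + ‖y‖²`. -/
lemma exp_three_s' {d n : ℕ} {σ t : ℝ} (hd : 1 ≤ d) (hn : 2 ≤ n) (hσ : 0 < σ) (ht : 0 < t)
    (μ : Euc d) :
    Integrable (fun p => densThree d n μ σ p * (newS n p.2.1 p.2.2 p.1 *
      Real.exp (-(t * (p.1 + n * ‖p.2.1‖ ^ 2 + ‖p.2.2‖ ^ 2))))) (refThree d) ∧
    ∫ p, densThree d n μ σ p * (newS n p.2.1 p.2.2 p.1 *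
      Real.exp (-(t * (p.1 + n * ‖p.2.1‖ ^ 2 + ‖p.2.2‖ ^ 2)))) ∂(refThree d)
      = ((n : ℝ) + 1 - 1) * d * σ * (1 + 2 * σ * t)⁻¹ * Lap d σ (‖μ‖ ^ 2) ((n : ℝ) + 1) t := by
  have hn0 : (0 : ℝ) < n := by exact_mod_cast (show 0 < n by omega)
  have hD : 0 < 1 + 2 * σ * t := by positivity
  set X : ℝ := (1 + 2 * σ * t) ^ (-((d : ℝ) / 2)) *
    Real.exp (-(n * (t * ‖μ‖ ^ 2 / (1 + 2 * σ * t)))) with hX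
  set Y : ℝ := (1 + 2 * σ * t) ^ (-((d : ℝ) / 2)) *
    Real.exp (-(t * ‖μ‖ ^ 2 / (1 + 2 * σ * t))) with hY
  have h1 := prod_value (chi_laplace_one hd hn hσ ht.le)
    (prod_value (gauss_value_x hσ ht hn0 μ) (gauss_value_y hσ ht μ))
  have gp := gauss_pair hd (τ := σ / (1 + 2 * σ * t)) (N := n) (by positivity) hn0
    ((1 + 2 * σ * t)⁻¹ • μ)
  have gp2 := And.intro (gp.1.const_mul (n / ((n : ℝ) + 1) * (X * Y)))
    (integral_const_mul (n / ((n : ℝ) + 1) * (X * Y)) (fun q : Euc d × Euc d => _) |>.trans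
      (congrArg (fun r => n / ((n : ℝ) + 1) * (X * Y) * r) gp.2))
  have h2 := prod_value (chi_laplace hd hn hσ ht.le) gp2
  have e : ∀ p : ℝ × Euc d × Euc d, densThree d n μ σ p * (newS n p.2.1 p.2.2 p.1 *
      Real.exp (-(t * (p.1 + n * ‖p.2.1‖ ^ 2 + ‖p.2.2‖ ^ 2))))
      = chiSqPdf (((n : ℝ) - 1) * d) (p.1 / σ) / σ * (p.1 * Real.exp (-(t * p.1))) *
        (gaussPdf d p.2.1 μ (σ / n) * Real.exp (-(t * (n * ‖p.2.1‖ ^ 2))) *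
          (gaussPdf d p.2.2 μ σ * Real.exp (-(t * ‖p.2.2‖ ^ 2)))) +
        chiSqPdf (((n : ℝ) - 1) * d) (p.1 / σ) / σ * Real.exp (-(t * p.1)) *
        (n / ((n : ℝ) + 1) * (X * Y) *
          (gaussPdf d p.2.1 ((1 + 2 * σ * t)⁻¹ • μ) (σ / (1 + 2 * σ * t) / n) *
          (gaussPdf d p.2.2 ((1 + 2 * σ * t)⁻¹ • μ) (σ / (1 + 2 * σ * t)) *
            ‖p.2.2 - p.2.1‖ ^ 2))) := by
    intro p
    have l1 := gauss_laplace hσ ht hn0 p.2.1 μ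
    have l2 := gauss_laplace_one hσ ht p.2.2 μ
    rw [← hX] at l1
    rw [← hY] at l2
    have : n / ((n : ℝ) + 1) * (X * Y) *
          (gaussPdf d p.2.1 ((1 + 2 * σ * t)⁻¹ • μ) (σ / (1 + 2 * σ * t) / n) *
          (gaussPdf d p.2.2 ((1 + 2 * σ * t)⁻¹ • μ) (σ / (1 + 2 * σ * t)) *
            ‖p.2.2 - p.2.1‖ ^ 2))
        = (gaussPdf d p.2.1 μ (σ / n) * Real.exp (-(t * (n * ‖p.2.1‖ ^ 2))) *
          (gaussPdf d p.2.2 μ σ * Real.exp (-(t * ‖p.2.2‖ ^ 2)))) *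
          (n * ‖p.2.2 - p.2.1‖ ^ 2 / ((n : ℝ) + 1)) := by
      rw [l1, l2]; ring
    rw [this]
    unfold densThree newS
    rw [mul_add, mul_add, neg_add, neg_add, Real.exp_add, Real.exp_add]; ring
  simp only [e]
  refine ⟨h1.1.add h2.1, ?_⟩
  rw [integral_add h1.1 h2.1]
  refine (congrArg₂ (· + ·) h1.2 h2.2).trans ?_
  rw [← Lap_succ hσ ht, ← hY, ← Lap_split hσ ht, ← hX]
  have : (n : ℝ) + 1 ≠ 0 := by positivity
  field_simp
  ring

/-! ### Change of variables to the unit interval -/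

/-- Change of variables `w = 2σt / (1 + 2σt)`, which maps `(0, ∞)` onto `(0, 1)`. -/
lemma lintegral_subst {σ : ℝ} (hσ : 0 < σ) (F : ℝ → ENNReal) :
    ∫⁻ w in Ioo (0 : ℝ) 1, F w = ∫⁻ t in Ioi (0 : ℝ),
      ENNReal.ofReal (2 * σ / (1 + 2 * σ * t) ^ 2) * F (2 * σ * t / (1 + 2 * σ * t)) := by
  have hi : (fun t : ℝ => 2 * σ * t / (1 + 2 * σ * t)) '' Ioi 0 = Ioo 0 1 := by
    rw [← image_div_one_add]
    ext w
    simp only [mem_image, mem_Ioi]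
    constructor
    · rintro ⟨t, ht, rfl⟩
      exact ⟨2 * σ * t, by positivity, rfl⟩
    · rintro ⟨z, hz, rfl⟩
      refine ⟨z / (2 * σ), by positivity, ?_⟩
      rw [mul_div_cancel₀ z (by positivity : 2 * σ ≠ 0)]
  have hinj : InjOn (fun t : ℝ => 2 * σ * t / (1 + 2 * σ * t)) (Ioi 0) := by
    intro x hx y hy h
    have hx0 : 0 < x := hx
    have hy0 : 0 < y := hy
    have h' := injOn_div_one_add (show 2 * σ * x ∈ Ioi (0 : ℝ) from mem_Ioi.2 (by positivity))
      (show 2 * σ * y ∈ Ioi (0 : ℝ) from mem_Ioi.2 (by positivity)) h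
    exact mul_left_cancel₀ (by positivity : 2 * σ ≠ 0) h'
  have hder : ∀ t ∈ Ioi (0 : ℝ), HasDerivWithinAt (fun t : ℝ => 2 * σ * t / (1 + 2 * σ * t))
      (2 * σ / (1 + 2 * σ * t) ^ 2) (Ioi 0) t := by
    intro t ht
    have ht0 : 0 < t := ht
    have h1 : HasDerivAt (fun t : ℝ => 2 * σ * t) (2 * σ) t := by
      simpa using (hasDerivAt_id t).const_mul (2 * σ)
    have h2 := (hasDerivAt_div_one_add (z := 2 * σ * t) (by positivity)).comp t h1
    refine (h2.congr_deriv ?_).hasDerivWithinAt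
    ring
  rw [← hi, lintegral_image_eq_lintegral_abs_deriv_mul measurableSet_Ioi hder hinj]
  refine setLIntegral_congr_fun measurableSet_Ioi fun t ht => ?_
  have ht0 : 0 < t := ht
  have : 0 ≤ 2 * σ / (1 + 2 * σ * t) ^ 2 := by positivity
  simp only [abs_of_nonneg this]

lemma Lap_eq_kerF {d : ℕ} {σ m2 l t : ℝ} (hσ : 0 < σ) (ht : 0 < t) :
    Lap d σ m2 l t = (1 + 2 * σ * t)⁻¹ *
      kerF l ((d : ℝ) / 2) (m2 / (2 * σ)) (2 * σ * t / (1 + 2 * σ * t)) := by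
  have hD : 0 < 1 + 2 * σ * t := by positivity
  unfold Lap kerF
  have e1 : 1 - 2 * σ * t / (1 + 2 * σ * t) = (1 + 2 * σ * t)⁻¹ := by field_simp; ring
  have e2 : l * (m2 / (2 * σ)) * (2 * σ * t / (1 + 2 * σ * t))
      = l * (t * m2 / (1 + 2 * σ * t)) := by field_simp
  rw [e1, e2, ← mul_assoc, Real.inv_rpow hD.le, ← Real.rpow_neg hD.le, ← Real.rpow_neg_one,
    ← Real.rpow_add hD]
  congr 2; ring

/-- The Laplace integral that represents `E (1 - u_l)`. -/
lemma lintegral_Lap_Qint {d : ℕ} {σ m2 l : ℝ} (hσ : 0 < σ) (hl : 1 ≤ l) (h : 1 ≤ l * ((d : ℝ) / 2)) :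
    ∫⁻ t in Ioi (0 : ℝ), ENNReal.ofReal ((l - 1) * d * σ * (1 + 2 * σ * t)⁻¹ * Lap d σ m2 l t)
      = ENNReal.ofReal (Qint l ((d : ℝ) / 2) (m2 / (2 * σ))) := by
  have hl' : 0 ≤ (l - 1) * ((d : ℝ) / 2) := mul_nonneg (by linarith) (by positivity)
  have hc := continuous_kerF (m2 / (2 * σ)) h
  unfold Qint
  rw [← intervalIntegral.integral_const_mul, intervalIntegral.integral_of_le zero_le_one,
    integral_Ioc_eq_integral_Ioo, ofReal_integral_eq_lintegral_ofReal]
  · rw [lintegral_subst hσ]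
    refine setLIntegral_congr_fun measurableSet_Ioi fun t ht => ?_
    have ht0 : 0 < t := ht
    rw [← ENNReal.ofReal_mul (by positivity), Lap_eq_kerF hσ ht0]
    congr 1
    field_simp
  · exact ((hc.const_mul _).integrableOn_Icc (a := 0) (b := 1)).mono_set Ioo_subset_Icc_self
  · exact (ae_restrict_mem measurableSet_Ioo).mono fun w hw =>
      mul_nonneg hl' (kerF_nonneg _ _ _ hw.2.le)

lemma lintegral_Lap_diff {d : ℕ} {σ m2 l l' : ℝ} (hσ : 0 < σ) :
    ∫⁻ t in Ioi (0 : ℝ), ENNReal.ofReal ((Lap d σ m2 l t - Lap d σ m2 l' t) / t)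
      = ∫⁻ w in Ioo (0 : ℝ) 1, ENNReal.ofReal ((kerF l ((d : ℝ) / 2) (m2 / (2 * σ)) w
          - kerF l' ((d : ℝ) / 2) (m2 / (2 * σ)) w) / w) := by
  rw [lintegral_subst hσ]
  refine setLIntegral_congr_fun measurableSet_Ioi fun t ht => ?_
  have ht0 : 0 < t := ht
  rw [← ENNReal.ofReal_mul (by positivity), Lap_eq_kerF hσ ht0, Lap_eq_kerF hσ ht0]
  congr 1
  field_simp

/-! ### The three expectations -/

lemma integrable_of_lintegral_le {α : Type*} [MeasurableSpace α] {μ : Measure α} {f : α → ℝ} {C : ℝ}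
    (hm : AEStronglyMeasurable f μ) (h0 : 0 ≤ᵐ[μ] f) (hC : 0 ≤ C)
    (h : ∫⁻ p, ENNReal.ofReal (f p) ∂μ ≤ ENNReal.ofReal C) :
    Integrable f μ ∧ ∫ p, f p ∂μ ≤ C := by
  refine ⟨⟨hm, (hasFiniteIntegral_iff_ofReal h0).2 (h.trans_lt ENNReal.ofReal_lt_top)⟩, ?_⟩
  rw [integral_eq_lintegral_of_nonneg_ae h0 hm]
  exact ENNReal.toReal_le_of_le_ofReal hC h

lemma integral_of_lintegral_eq {α : Type*} [MeasurableSpace α] {μ : Measure α} {f : α → ℝ} {C : ℝ}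
    (hm : AEStronglyMeasurable f μ) (h0 : 0 ≤ᵐ[μ] f) (hC : 0 ≤ C)
    (h : ∫⁻ p, ENNReal.ofReal (f p) ∂μ = ENNReal.ofReal C) :
    Integrable f μ ∧ ∫ p, f p ∂μ = C := by
  refine ⟨(integrable_of_lintegral_le hm h0 hC h.le).1, ?_⟩
  rw [integral_eq_lintegral_of_nonneg_ae h0 hm, h, ENNReal.toReal_ofReal hC]

lemma Qint_nonneg {l c κ : ℝ} (hl : 1 ≤ l) (hc : 0 ≤ c) : 0 ≤ Qint l c κ :=
  mul_nonneg (mul_nonneg (by linarith) hc)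
    (intervalIntegral.integral_nonneg zero_le_one fun _ hw => kerF_nonneg _ _ _ hw.2)

lemma ae_pos_fst {β : Type*} [MeasurableSpace β] (ν : Measure β) [SFinite ν] :
    ∀ᵐ p ∂(((volume : Measure ℝ).restrict (Ioi 0)).prod ν), 0 < p.1 :=
  Measure.quasiMeasurePreserving_fst.ae (ae_restrict_mem measurableSet_Ioi)

lemma chi_factor_pos {d n : ℕ} {σ s : ℝ} (hd : 1 ≤ d) (hn : 2 ≤ n) (hσ : 0 < σ) (hs : 0 < s) :
    0 < chiSqPdf (((n : ℝ) - 1) * d) (s / σ) / σ := by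
  have hn' : (2 : ℝ) ≤ n := by exact_mod_cast hn
  have hd' : (1 : ℝ) ≤ d := by exact_mod_cast hd
  exact div_pos (chiSqPdf_pos (by apply mul_pos <;> linarith) (by positivity)) hσ

lemma densTwo_pos {d n : ℕ} {σ : ℝ} (hd : 1 ≤ d) (hn : 2 ≤ n) (hσ : 0 < σ) (μ : Euc d)
    {p : ℝ × Euc d} (hs : 0 < p.1) : 0 < densTwo d n μ σ p := by
  have hn0 : (0 : ℝ) < n := by exact_mod_cast (show 0 < n by omega)
  exact mul_pos (gaussPdf_pos (by positivity) _ _) (chi_factor_pos hd hn hσ hs)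

lemma densThree_pos {d n : ℕ} {σ : ℝ} (hd : 1 ≤ d) (hn : 2 ≤ n) (hσ : 0 < σ) (μ : Euc d)
    {p : ℝ × Euc d × Euc d} (hs : 0 < p.1) : 0 < densThree d n μ σ p := by
  have hn0 : (0 : ℝ) < n := by exact_mod_cast (show 0 < n by omega)
  exact mul_pos (mul_pos (gaussPdf_pos (by positivity) _ _) (chi_factor_pos hd hn hσ hs))
    (gaussPdf_pos hσ _ _)

lemma measurable_densTwo (d n : ℕ) (μ : Euc d) (σ : ℝ) : Measurable (densTwo d n μ σ) := by
  have m1 := measurable_gaussPdf (d := d) (τ := σ / n) μ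
  have m2 := measurable_chiSqPdf (((n : ℝ) - 1) * d)
  unfold densTwo
  fun_prop

lemma measurable_densThree (d n : ℕ) (μ : Euc d) (σ : ℝ) : Measurable (densThree d n μ σ) := by
  have m1 := measurable_gaussPdf (d := d) (τ := σ / n) μ
  have m2 := measurable_chiSqPdf (((n : ℝ) - 1) * d)
  have m3 := measurable_gaussPdf (d := d) (τ := σ) μ
  unfold densThree
  fun_prop

lemma measurable_newS (d n : ℕ) :
    Measurable fun p : ℝ × Euc d × Euc d => newS n p.2.1 p.2.2 p.1 := by
  unfold newS
  fun_prop

lemma lintegral_weighted_exp {c a r : ℝ} (hc : 0 ≤ c) (ha : 0 ≤ a) (hr : 0 < r) :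
    ∫⁻ t in Ioi (0 : ℝ), ENNReal.ofReal (c * (a * Real.exp (-(t * r))))
      = ENNReal.ofReal (c * (a / r)) := by
  simp only [← mul_assoc, ENNReal.ofReal_mul (mul_nonneg hc ha)]
  rw [lintegral_const_mul _ (by fun_prop), lintegral_exp_neg hr,
    ← ENNReal.ofReal_mul (mul_nonneg hc ha)]
  congr 1; ring

/-- The expectation of `1 - u_n = s / (s + n‖x̄‖²)` as a kernel integral. -/
lemma expect_ratio_two {d n : ℕ} {σ : ℝ} (hd : 1 ≤ d) (hn : 2 ≤ n) (hσ : 0 < σ) (μ : Euc d) :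
    Integrable (fun p => densTwo d n μ σ p * (p.1 / (p.1 + n * ‖p.2‖ ^ 2))) (refTwo d) ∧
    ∫ p, densTwo d n μ σ p * (p.1 / (p.1 + n * ‖p.2‖ ^ 2)) ∂(refTwo d)
      = Qint n ((d : ℝ) / 2) (‖μ‖ ^ 2 / (2 * σ)) := by
  have hn' : (2 : ℝ) ≤ n := by exact_mod_cast hn
  have hd' : (1 : ℝ) ≤ d := by exact_mod_cast hd
  have hm := measurable_densTwo d n μ σ
  have hpos := ae_pos_fst (volume : Measure (Euc d))
  refine integral_of_lintegral_eq (by fun_prop) ?_ (Qint_nonneg (by linarith) (by positivity)) ?_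
  · filter_upwards [hpos] with p hp
    have := densTwo_pos hd hn hσ μ hp
    simp only [Pi.zero_apply]
    positivity
  · rw [← lintegral_Lap_Qint hσ (by linarith) (by nlinarith)]
    refine laplace_swap (refTwo d)
      (H := fun p t => densTwo d n μ σ p * (p.1 * Real.exp (-(t * (p.1 + n * ‖p.2‖ ^ 2)))))
      (by fun_prop) ?_ ?_
    · filter_upwards [hpos] with p hp
      exact lintegral_weighted_exp (densTwo_pos hd hn hσ μ hp).le hp.le (by positivity)
    · intro t ht
      obtain ⟨h1, h2⟩ := exp_two_s hd hn hσ (mem_Ioi.1 ht) μ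
      rw [← h2, ofReal_integral_eq_lintegral_ofReal h1]
      filter_upwards [hpos] with p hp
      have := densTwo_pos hd hn hσ μ hp
      simp only [Pi.zero_apply]
      positivity

/-- The expectation of `1 - u_{n+1}` as a kernel integral. -/
lemma expect_ratio_three {d n : ℕ} {σ : ℝ} (hd : 1 ≤ d) (hn : 2 ≤ n) (hσ : 0 < σ) (μ : Euc d) :
    Integrable (fun p => densThree d n μ σ p *
      (newS n p.2.1 p.2.2 p.1 / (p.1 + n * ‖p.2.1‖ ^ 2 + ‖p.2.2‖ ^ 2))) (refThree d) ∧
    ∫ p, densThree d n μ σ p *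
      (newS n p.2.1 p.2.2 p.1 / (p.1 + n * ‖p.2.1‖ ^ 2 + ‖p.2.2‖ ^ 2)) ∂(refThree d)
      = Qint ((n : ℝ) + 1) ((d : ℝ) / 2) (‖μ‖ ^ 2 / (2 * σ)) := by
  have hn' : (2 : ℝ) ≤ n := by exact_mod_cast hn
  have hd' : (1 : ℝ) ≤ d := by exact_mod_cast hd
  have hm := measurable_densThree d n μ σ
  have hm' := measurable_newS d n
  have hpos := ae_pos_fst ((volume : Measure (Euc d)).prod (volume : Measure (Euc d)))
  refine integral_of_lintegral_eq (by fun_prop) ?_ (Qint_nonneg (by linarith) (by positivity)) ?_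
  · filter_upwards [hpos] with p hp
    have := densThree_pos hd hn hσ μ hp
    have := newS_pos (n := n) hp p.2.1 p.2.2
    simp only [Pi.zero_apply]
    positivity
  · rw [← lintegral_Lap_Qint hσ (by linarith) (by nlinarith)]
    refine laplace_swap (refThree d)
      (H := fun p t => densThree d n μ σ p * (newS n p.2.1 p.2.2 p.1 *
        Real.exp (-(t * (p.1 + n * ‖p.2.1‖ ^ 2 + ‖p.2.2‖ ^ 2)))))
      ((hm.comp measurable_fst).mul ((hm'.comp measurable_fst).mul (by fun_prop))) ?_ ?_
    · filter_upwards [hpos] with p hp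
      exact lintegral_weighted_exp (densThree_pos hd hn hσ μ hp).le
        (newS_pos (n := n) hp p.2.1 p.2.2).le (by positivity)
    · intro t ht
      obtain ⟨h1, h2⟩ := exp_three_s' hd hn hσ (mem_Ioi.1 ht) μ
      rw [← h2, ofReal_integral_eq_lintegral_ofReal h1]
      filter_upwards [hpos] with p hp
      have := densThree_pos hd hn hσ μ hp
      have := newS_pos (n := n) hp p.2.1 p.2.2
      simp only [Pi.zero_apply]
      positivity

/-- The logarithmic term: Frullani's formula turns its expectation into the kernel integral bounded
by `kernel_lintegral`. -/
lemma expect_log {d n : ℕ} {σ : ℝ} (hd : 1 ≤ d) (hn : 2 ≤ n) (hσ : 0 < σ) (μ : Euc d) :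
    Integrable (fun p => densThree d n μ σ p *
      Real.log ((p.1 + n * ‖p.2.1‖ ^ 2 + ‖p.2.2‖ ^ 2) / (p.1 + n * ‖p.2.1‖ ^ 2))) (refThree d) ∧
    ∫ p, densThree d n μ σ p *
      Real.log ((p.1 + n * ‖p.2.1‖ ^ 2 + ‖p.2.2‖ ^ 2) / (p.1 + n * ‖p.2.1‖ ^ 2)) ∂(refThree d)
      ≤ Real.log (((n : ℝ) + 1) / n) +
        hFun n d * Qint n ((d : ℝ) / 2) (‖μ‖ ^ 2 / (2 * σ)) := by
  have hn' : (2 : ℝ) ≤ n := by exact_mod_cast hn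
  have hd' : (1 : ℝ) ≤ d := by exact_mod_cast hd
  have hm := measurable_densThree d n μ σ
  have hpos := ae_pos_fst ((volume : Measure (Euc d)).prod (volume : Measure (Euc d)))
  have hκ : 0 ≤ ‖μ‖ ^ 2 / (2 * σ) := by positivity
  have hh : 0 ≤ hFun n d := le_trans (by positivity) (hFun_ge hd hn)
  have hQ : 0 ≤ Qint n ((d : ℝ) / 2) (‖μ‖ ^ 2 / (2 * σ)) :=
    Qint_nonneg (by linarith) (by positivity)
  have hlog : 0 ≤ Real.log (((n : ℝ) + 1) / n) :=
    Real.log_nonneg (by rw [le_div_iff₀ (by positivity)]; linarith)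
  refine integrable_of_lintegral_le (by fun_prop) ?_ (by positivity) ?_
  · filter_upwards [hpos] with p hp
    have h1 := densThree_pos hd hn hσ μ hp
    exact mul_nonneg h1.le (Real.log_nonneg (by
      rw [le_div_iff₀ (by positivity)]; nlinarith [sq_nonneg ‖p.2.2‖]))
  · refine le_of_eq_of_le ?_ (kernel_lintegral hn hd hκ)
    rw [← lintegral_Lap_diff hσ]
    refine laplace_swap (refThree d)
      (H := fun p t => densThree d n μ σ p * ((Real.exp (-(t * (p.1 + n * ‖p.2.1‖ ^ 2))) -
        Real.exp (-(t * (p.1 + n * ‖p.2.1‖ ^ 2 + ‖p.2.2‖ ^ 2)))) / t))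
      (by fun_prop) ?_ ?_
    · filter_upwards [hpos] with p hp
      have h1 := densThree_pos hd hn hσ μ hp
      simp only [ENNReal.ofReal_mul h1.le]
      rw [lintegral_const_mul _ (by fun_prop), frullani_exp (by positivity)
        (by nlinarith [sq_nonneg ‖p.2.2‖])]
    · intro t ht
      have ht0 : 0 < t := ht
      obtain ⟨h1, h2⟩ := exp_three_T hd hn hσ ht0 μ
      obtain ⟨h3, h4⟩ := exp_three_T' hd hn hσ ht0 μ
      have e : ∀ p : ℝ × Euc d × Euc d, densThree d n μ σ p *
          ((Real.exp (-(t * (p.1 + n * ‖p.2.1‖ ^ 2))) -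
          Real.exp (-(t * (p.1 + n * ‖p.2.1‖ ^ 2 + ‖p.2.2‖ ^ 2)))) / t)
          = (densThree d n μ σ p * Real.exp (-(t * (p.1 + n * ‖p.2.1‖ ^ 2))) -
            densThree d n μ σ p *
              Real.exp (-(t * (p.1 + n * ‖p.2.1‖ ^ 2 + ‖p.2.2‖ ^ 2)))) / t := fun p => by ring
      have h13 : Integrable (fun p : ℝ × Euc d × Euc d =>
          (densThree d n μ σ p * Real.exp (-(t * (p.1 + n * ‖p.2.1‖ ^ 2))) -
            densThree d n μ σ p *
              Real.exp (-(t * (p.1 + n * ‖p.2.1‖ ^ 2 + ‖p.2.2‖ ^ 2)))) / t) (refThree d) :=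
        (h1.sub h3).div_const t
      rw [← h2, ← h4, ← integral_sub h1 h3, ← integral_div,
        ofReal_integral_eq_lintegral_ofReal h13]
      · simp only [e]
      · filter_upwards [hpos] with p hp
        have h5 := densThree_pos hd hn hσ μ hp
        rw [← e, Pi.zero_apply]
        refine mul_nonneg h5.le (div_nonneg (sub_nonneg.2 (Real.exp_le_exp.2 ?_)) ht0.le)
        nlinarith [mul_nonneg ht0.le (sq_nonneg ‖p.2.2‖)]

/-! ### The risk difference -/

/-- Fubini: the iterated integral defining the risk is an integral over `(s, x̄, y)`. -/
lemma klRisk_eq {d n : ℕ} {μ : Euc d} {σ : ℝ} {P : Euc d → Euc d → ℝ → ℝ}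
    (h : Integrable (fun p : ℝ × Euc d × Euc d => densThree d n μ σ p *
      Real.log (gaussPdf d p.2.2 μ σ / P p.2.2 p.2.1 p.1)) (refThree d)) :
    klRisk d n μ σ P = ∫ p, densThree d n μ σ p *
      Real.log (gaussPdf d p.2.2 μ σ / P p.2.2 p.2.1 p.1) ∂(refThree d) := by
  unfold klRisk
  rw [integral_prod _ h]
  refine integral_congr_ae ?_
  filter_upwards [h.prod_right_ae] with s hs
  rw [integral_prod _ hs]
  refine integral_congr_ae (Filter.Eventually.of_forall fun x => ?_)
  simp only [densThree]
  rw [← integral_const_mul]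
  simp only [mul_assoc]

lemma one_sub_uStat {d n : ℕ} {s : ℝ} (hs : 0 < s) (x : Euc d) :
    1 - uStat (n : ℝ) x s = s / (s + n * ‖x‖ ^ 2) := by
  unfold uStat wStat
  have : 0 < s + n * ‖x‖ ^ 2 := by positivity
  field_simp
  ring

lemma expVal2_eq {d n : ℕ} {σ : ℝ} (hd : 1 ≤ d) (hn : 2 ≤ n) (hσ : 0 < σ) (μ : Euc d) :
    expVal2 d n μ σ (fun xbar s => 1 - uStat (n : ℝ) xbar s)
      = Qint n ((d : ℝ) / 2) (‖μ‖ ^ 2 / (2 * σ)) := by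
  obtain ⟨h1, h2⟩ := expect_ratio_two hd hn hσ μ
  rw [← h2, integral_prod _ h1]
  unfold expVal2
  refine setIntegral_congr_fun measurableSet_Ioi fun s hs => ?_
  simp only [densTwo, one_sub_uStat (mem_Ioi.1 hs)]

/-- lower bound on the difference in Kullback–Leibler risks,
`R_KL(p̂_R) - R_KL(p̂_{π_GM}) ≥ ν E(1-u_n) [g(n,d,ν) - h(n,d)]`,
for the Gaussian-mixture prior built from `q` of equation (5). -/
theorem stmt_8 (d n : ℕ) (hd : 1 ≤ d) (hn : 2 ≤ n)
    (ν : ℝ) (hν0 : 0 < ν) (hν1 : ν < 1)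
    (μ0 : Euc d) (σ2 : ℝ) (hσ : 0 < σ2)
    -- the expectations involved are assumed to exist:
    (hInt_R : Integrable (fun p : ℝ × Euc d × Euc d =>
        gaussPdf d p.2.1 μ0 (σ2 / n) * (chiSqPdf (((n : ℝ) - 1) * d) (p.1 / σ2) / σ2) *
          gaussPdf d p.2.2 μ0 σ2 *
          Real.log (gaussPdf d p.2.2 μ0 σ2 / bestEquiv d n p.2.2 p.2.1 p.1))
      (((volume : Measure ℝ).restrict (Ioi 0)).prod ((volume : Measure (Euc d)).prod volume)))
    (hInt_pi : Integrable (fun p : ℝ × Euc d × Euc d =>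
        gaussPdf d p.2.1 μ0 (σ2 / n) * (chiSqPdf (((n : ℝ) - 1) * d) (p.1 / σ2) / σ2) *
          gaussPdf d p.2.2 μ0 σ2 *
          Real.log (gaussPdf d p.2.2 μ0 σ2 /
            bayesPred d n (gmPrior d ν (qLow d n ν)) p.2.2 p.2.1 p.1))
      (((volume : Measure ℝ).restrict (Ioi 0)).prod ((volume : Measure (Euc d)).prod volume)))
    (hInt_u : Integrable (fun p : ℝ × Euc d =>
        gaussPdf d p.2 μ0 (σ2 / n) * (chiSqPdf (((n : ℝ) - 1) * d) (p.1 / σ2) / σ2) *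
          (1 - uStat (n : ℝ) p.2 p.1))
      (((volume : Measure ℝ).restrict (Ioi 0)).prod volume)) :
    klRisk d n μ0 σ2 (bestEquiv d n) -
        klRisk d n μ0 σ2 (bayesPred d n (gmPrior d ν (qLow d n ν))) ≥
      ν * expVal2 d n μ0 σ2 (fun xbar s => 1 - uStat (n : ℝ) xbar s) *
        (gFun n d ν - hFun n d) := by
  have hκ : 0 ≤ ‖μ0‖ ^ 2 / (2 * σ2) := by positivity
  have hR : Integrable (fun p : ℝ × Euc d × Euc d => densThree d n μ0 σ2 p *
      Real.log (gaussPdf d p.2.2 μ0 σ2 / bestEquiv d n p.2.2 p.2.1 p.1)) (refThree d) := hInt_R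
  have hB : Integrable (fun p : ℝ × Euc d × Euc d => densThree d n μ0 σ2 p *
      Real.log (gaussPdf d p.2.2 μ0 σ2 / bayesPred d n (gmPrior d ν (qLow d n ν)) p.2.2 p.2.1 p.1))
      (refThree d) := hInt_pi
  rw [klRisk_eq hR, klRisk_eq hB, ← integral_sub' hR hB, expVal2_eq hd hn hσ]
  obtain ⟨a1, a2⟩ := exp_three_one hd hn hσ μ0
  obtain ⟨b1, b2⟩ := expect_log hd hn hσ μ0
  obtain ⟨c1, c2⟩ := expect_ratio_three hd hn hσ μ0
  have hlow := ((a1.mul_const (Real.log (((n : ℝ) + 1) / n))).sub b1).add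
    (c1.const_mul (gFun n d ν)) |>.const_mul ν
  have key := integral_mono_ae hlow (hR.sub hB) (by
    filter_upwards [ae_pos_fst ((volume : Measure (Euc d)).prod (volume : Measure (Euc d)))]
      with p hp
    have hD := densThree_pos hd hn hσ μ0 hp
    obtain ⟨hP, hL⟩ := log_ratio_ge hd hn hν0 hν1 hp p.2.1 p.2.2
    have hE := bestEquiv_pos hd hn hp p.2.1 p.2.2
    have hG := gaussPdf_pos hσ p.2.2 μ0
    simp only [Pi.add_apply, Pi.sub_apply]
    rw [Real.log_div hG.ne' hE.ne', Real.log_div hG.ne' hP.ne', ← mul_sub]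
    have := mul_le_mul_of_nonneg_left hL hD.le
    refine le_trans (le_of_eq ?_) (this.trans (le_of_eq ?_))
    · ring
    · ring)
  rw [integral_const_mul, integral_add' ((a1.mul_const _).sub b1) (c1.const_mul _),
    integral_sub' (a1.mul_const _) b1, integral_mul_const, integral_const_mul, a2, c2] at key
  refine le_trans ?_ key
  have hQ := Qint_mono hn hd hκ
  have hg := gFun_nonneg hd hn hν0 hν1
  have h1 := mul_le_mul_of_nonneg_left hQ hg
  rw [mul_assoc]
  refine mul_le_mul_of_nonneg_left ?_ hν0.le
  linarith

end
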